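/- (Cartan) Let N be a closed normal subgroup of G, Q = G/N, and let A be a G-operation equipped with a G-invariant N-connection, i.e. a G-equivariant morphism of N-operations θ̃ : W_N → A. Let B = A_{N,bas} = {ω ∈ A : ω is N-invariant and I_X ω = 0 for all X ∈ n}, equipped with the residual Q-operation structure. Then the natural inclusion j : W_Q ⊗ B → W_G ⊗ A maps (W_Q ⊗ B)_{Q,bas} into (W_G ⊗ A)_{G,bas} and induces an isomorphism WH^*_Q(B) ≅ WH^*_G(A) in basic cohomology. -/

import Mathlib

/-!
Common algebraic framework (following H. Cartan, and Guillemin–Sternberg):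
*operations* of a Lie algebra on a ℤ-graded supercommutative algebra.

For a **compact connected** Lie group `G`, a smooth `G`-action on a graded algebra is
determined infinitesimally, invariance under `G` coincides with infinitesimal invariance
(kernel of the Lie derivative), and `G`-equivariance of maps coincides with infinitesimal
equivariance.  Accordingly the smooth `G`-action is encoded by its infinitesimal Lie
derivative `L` below; topological (Fréchet) requirements, which play no role in the
statements, are omitted.
-/

open scoped TensorProduct

set_option synthInstance.maxHeartbeats 1000000
set_option maxHeartbeats 1600000

noncomputable section

/-- The sign `(-1)^n` for an integer `n`. -/
def sgn (n : ℤ) : ℤ := if Even n then 1 else -1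

/-- An *operation* of a real Lie algebra `𝔤` on a `ℤ`-graded supercommutative real
algebra `A`: a degree `+1` odd derivation `d` with `d² = 0`, an (infinitesimal) action
`L` of `𝔤` by even degree-`0` derivations commuting with `d`, and an equivariant
contraction `I` by odd degree-`(-1)` derivations satisfying anticommutation,
`[L_X, I_Y] = I_[X,Y]` and Cartan's formula `I_X d + d I_X = L_X`. -/
structure Operation (𝔤 : Type) [LieRing 𝔤] [LieAlgebra ℝ 𝔤]
    (A : Type) [Ring A] [Algebra ℝ A] : Type where
  grading : ℤ → Submodule ℝ A
  decomposition : DirectSum.Decomposition grading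
  one_mem : (1 : A) ∈ grading 0
  mul_mem : ∀ {m n : ℤ} {a b : A}, a ∈ grading m → b ∈ grading n → a * b ∈ grading (m + n)
  supercomm : ∀ {m n : ℤ} {a b : A}, a ∈ grading m → b ∈ grading n →
      a * b = sgn (m * n) • (b * a)
  d : Module.End ℝ A
  d_mem : ∀ {n : ℤ} {a : A}, a ∈ grading n → d a ∈ grading (n + 1)
  d_mul : ∀ {n : ℤ} {a : A}, a ∈ grading n → ∀ b : A,
      d (a * b) = d a * b + sgn n • (a * d b)
  d_sq : d ∘ₗ d = 0
  L : 𝔤 →ₗ[ℝ] Module.End ℝ A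
  L_mem : ∀ (X : 𝔤) {n : ℤ} {a : A}, a ∈ grading n → L X a ∈ grading n
  L_mul : ∀ (X : 𝔤) (a b : A), L X (a * b) = L X a * b + a * L X b
  L_bracket : ∀ X Y : 𝔤, L ⁅X, Y⁆ = L X ∘ₗ L Y - L Y ∘ₗ L X
  L_d : ∀ X : 𝔤, L X ∘ₗ d = d ∘ₗ L X
  I : 𝔤 →ₗ[ℝ] Module.End ℝ A
  I_mem : ∀ (X : 𝔤) {n : ℤ} {a : A}, a ∈ grading n → I X a ∈ grading (n - 1)
  I_mul : ∀ (X : 𝔤) {n : ℤ} {a : A}, a ∈ grading n → ∀ b : A,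
      I X (a * b) = I X a * b + sgn n • (a * I X b)
  I_I : ∀ X Y : 𝔤, I X ∘ₗ I Y + I Y ∘ₗ I X = 0
  L_I : ∀ X Y : 𝔤, L X ∘ₗ I Y - I Y ∘ₗ L X = I ⁅X, Y⁆
  cartan : ∀ X : 𝔤, I X ∘ₗ d + d ∘ₗ I X = L X

namespace Operation

variable {𝔤 : Type} [LieRing 𝔤] [LieAlgebra ℝ 𝔤] {A : Type} [Ring A] [Algebra ℝ A]

/-- Invariant elements (`= G`-invariant elements, for `G` compact connected). -/
def inv (op : Operation 𝔤 A) : Submodule ℝ A := ⨅ X : 𝔤, LinearMap.ker (op.L X)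

/-- Horizontal elements. -/
def hor (op : Operation 𝔤 A) : Submodule ℝ A := ⨅ X : 𝔤, LinearMap.ker (op.I X)

/-- Basic elements. -/
def bas (op : Operation 𝔤 A) : Submodule ℝ A := op.inv ⊓ op.hor

end Operation

/-- `n`-cocycles of the complex obtained by restricting `d` to the graded pieces `P n`. -/
def cocycles {A : Type} [AddCommGroup A] [Module ℝ A] (d : Module.End ℝ A)
    (P : ℤ → Submodule ℝ A) (n : ℤ) : Submodule ℝ A :=
  P n ⊓ LinearMap.ker d

/-- Degree-`n` cohomology of the subcomplex `P` (with differential `d`):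
cocycles in `P n` modulo `d (P (n-1))`. -/
abbrev gradedCoh {A : Type} [AddCommGroup A] [Module ℝ A] (d : Module.End ℝ A)
    (P : ℤ → Submodule ℝ A) (n : ℤ) :=
  ↥(cocycles d P n) ⧸
    Submodule.comap (cocycles d P n).subtype (Submodule.map d (P (n - 1)))

/-- Structure constants `C^i_{jk}` of `𝔤`: `⁅e_j, e_k⁆ = C^i_{jk} e_i`. -/
def structConst {ι 𝔤 : Type} [Fintype ι] [LieRing 𝔤] [LieAlgebra ℝ 𝔤]
    (b : Module.Basis ι ℝ 𝔤) (i j k : ι) : ℝ :=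
  b.repr ⁅b j, b k⁆ i

/-- The Weil algebra `W_𝔤 = S𝔤* ⊗ Λ𝔤*` of `𝔤`, presented axiomatically: an operation `W`
together with generators `θ^i` (degree 1) and `Ω^i` (degree 2) on which `d_W`, `L`, `I`
take the classical values, and such that the monomials `Ω^m · θ^S` form a basis
(this pins `W` down as `S𝔤* ⊗ Λ𝔤*`). -/
structure WeilData (ι : Type) [Fintype ι] [DecidableEq ι] [LinearOrder ι]
    {𝔤 : Type} [LieRing 𝔤] [LieAlgebra ℝ 𝔤] (b : Module.Basis ι ℝ 𝔤)
    (W : Type) [Ring W] [Algebra ℝ W] extends Operation 𝔤 W where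
  θ : ι → W
  Ω : ι → W
  θ_mem : ∀ i, θ i ∈ grading 1
  Ω_mem : ∀ i, Ω i ∈ grading 2
  d_θ : ∀ i, d (θ i) =
      (-(1/2 : ℝ)) • ∑ j, ∑ k, structConst b i j k • (θ j * θ k) + Ω i
  d_Ω : ∀ i, d (Ω i) = -∑ j, ∑ k, structConst b i j k • (θ j * Ω k)
  L_θ : ∀ i j, L (b i) (θ j) = -∑ k, structConst b j i k • θ k
  L_Ω : ∀ i j, L (b i) (Ω j) = -∑ k, structConst b j i k • Ω k
  I_θ : ∀ i j, I (b i) (θ j) = if i = j then 1 else 0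
  I_Ω : ∀ i j, I (b i) (Ω j) = 0
  free : ∃ w : Module.Basis ((ι →₀ ℕ) × Finset ι) ℝ W, ∀ p : (ι →₀ ℕ) × Finset ι,
      w p = ((Finset.univ.sort (· ≤ ·)).map fun i => Ω i ^ p.1 i).prod *
        ((p.2.sort (· ≤ ·)).map θ).prod

/-- An algebraic connection on an operation, in the coordinates given by the basis `b`:
elements `θ̃^i` of degree 1 with `I_j θ̃^k = δ^k_j` and `L_k θ̃^i = -C^i_{kj} θ̃^j`
(the latter is `G`-equivariance, infinitesimally). -/
structure Connection {ι : Type} [Fintype ι] [DecidableEq ι]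
    {𝔤 : Type} [LieRing 𝔤] [LieAlgebra ℝ 𝔤] (b : Module.Basis ι ℝ 𝔤)
    {A : Type} [Ring A] [Algebra ℝ A] (op : Operation 𝔤 A) where
  θ : ι → A
  θ_mem : ∀ i, θ i ∈ op.grading 1
  I_θ : ∀ i j, op.I (b i) (θ j) = if i = j then 1 else 0
  L_θ : ∀ i j, op.L (b i) (θ j) = -∑ k, structConst b j i k • θ k

/-- The curvature `ω̃^i = dθ̃^i - ½ C^i_{jk} θ̃^j θ̃^k` of a connection. -/
def Connection.curv {ι : Type} [Fintype ι] [DecidableEq ι]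
    {𝔤 : Type} [LieRing 𝔤] [LieAlgebra ℝ 𝔤] {b : Module.Basis ι ℝ 𝔤}
    {A : Type} [Ring A] [Algebra ℝ A] {op : Operation 𝔤 A}
    (c : Connection b op) (i : ι) : A :=
  op.d (c.θ i) - (1/2 : ℝ) • ∑ j, ∑ k, structConst b i j k • (c.θ j * c.θ k)

end

noncomputable section
open scoped TensorProduct

variable {ι : Type} [Fintype ι] [DecidableEq ι] [LinearOrder ι]
variable {𝔤 : Type} [LieRing 𝔤] [LieAlgebra ℝ 𝔤]
variable {A : Type} [Ring A] [Algebra ℝ A]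
variable {W : Type} [Ring W] [Algebra ℝ W]

/-- Truncated exponential `exp(f) = Σ_{n<N} fⁿ/n!` of an endomorphism (all our
exponents are of nilpotent operators, so a suitable finite truncation is exact). -/
def expEnd {M : Type} [AddCommGroup M] [Module ℝ M] (N : ℕ) (f : Module.End ℝ M) :
    Module.End ℝ M :=
  ∑ n ∈ Finset.range N, ((n.factorial : ℝ)⁻¹) • f ^ n

/-- The operator `𝔸^j_i = θ^j ⊗ I_i` on `B = W_𝔤 ⊗ A`: left multiplication by `θ^j`
composed with the contraction `I_i` of `A` (extended to the tensor product with the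
usual Koszul sign operator `ε` of `W`). -/
def AOp (b : Module.Basis ι ℝ 𝔤) (wd : WeilData ι b W) (op : Operation 𝔤 A)
    (ε : Module.End ℝ W) (j i : ι) : Module.End ℝ (W ⊗[ℝ] A) :=
  TensorProduct.map (LinearMap.mulLeft ℝ (wd.θ j) ∘ₗ ε) (op.I (b i))

/-- `𝔸_T = t^i_j 𝔸^j_i` for `T = t^i_j θ^j ⊗ e_i ∈ 𝔤* ⊗ 𝔤`. -/
def AOpT (b : Module.Basis ι ℝ 𝔤) (wd : WeilData ι b W) (op : Operation 𝔤 A)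
    (ε : Module.End ℝ W) (T : ι → ι → ℝ) : Module.End ℝ (W ⊗[ℝ] A) :=
  ∑ i, ∑ j, T i j • AOp b wd op ε j i

/-- The operator `𝕃^j_i = θ^j ⊗ L_i - Ω^j ⊗ I_i` on `B = W_𝔤 ⊗ A`. -/
def LOp (b : Module.Basis ι ℝ 𝔤) (wd : WeilData ι b W) (op : Operation 𝔤 A)
    (ε : Module.End ℝ W) (j i : ι) : Module.End ℝ (W ⊗[ℝ] A) :=
  TensorProduct.map (LinearMap.mulLeft ℝ (wd.θ j)) (op.L (b i)) -
    TensorProduct.map (LinearMap.mulLeft ℝ (wd.Ω j) ∘ₗ ε) (op.I (b i))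

/-- `𝕃_T = t^i_j 𝕃^j_i` for `T = t^i_j θ^j ⊗ e_i ∈ 𝔤* ⊗ 𝔤`. -/
def LOpT (b : Module.Basis ι ℝ 𝔤) (wd : WeilData ι b W) (op : Operation 𝔤 A)
    (ε : Module.End ℝ W) (T : ι → ι → ℝ) : Module.End ℝ (W ⊗[ℝ] A) :=
  ∑ i, ∑ j, T i j • LOp b wd op ε j i

/-- The differential `D = d_W ⊗ 1 + ε ⊗ d` of the tensor product operation
`B = W_𝔤 ⊗ A` (`ε` the grading/sign operator of `W`). -/
def DTot {b : Module.Basis ι ℝ 𝔤} (wd : WeilData ι b W) (op : Operation 𝔤 A)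
    (ε : Module.End ℝ W) : Module.End ℝ (W ⊗[ℝ] A) :=
  LinearMap.rTensor A wd.d + TensorProduct.map ε op.d

/-- The total Lie derivative `L_X = L_X ⊗ 1 + 1 ⊗ L_X` of `B = W_𝔤 ⊗ A`. -/
def LTot {b : Module.Basis ι ℝ 𝔤} (wd : WeilData ι b W) (op : Operation 𝔤 A)
    (X : 𝔤) : Module.End ℝ (W ⊗[ℝ] A) :=
  LinearMap.rTensor A (wd.L X) + LinearMap.lTensor W (op.L X)

/-- The total contraction `I_X = ι_X ⊗ 1 + ε ⊗ I_X` of `B = W_𝔤 ⊗ A`. -/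
def ITot {b : Module.Basis ι ℝ 𝔤} (wd : WeilData ι b W) (op : Operation 𝔤 A)
    (ε : Module.End ℝ W) (X : 𝔤) : Module.End ℝ (W ⊗[ℝ] A) :=
  LinearMap.rTensor A (wd.I X) + TensorProduct.map ε (op.I X)

/-- The degree-`n` part of `W ⊗ A`. -/
def grTensor (b : Module.Basis ι ℝ 𝔤) (wd : WeilData ι b W) (op : Operation 𝔤 A) (n : ℤ) :
    Submodule ℝ (W ⊗[ℝ] A) :=
  ⨆ p : ℤ, LinearMap.range
    (TensorProduct.map ((wd.grading p).subtype) ((op.grading (n - p)).subtype))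



/-- For an ideal `𝔫 ⊆ 𝔤` (a submodule closed under bracketing by `𝔤`), the adjoint
action `ad_Y = ⁅Y, ·⁆` of `Y ∈ 𝔤` restricts to `𝔫`. -/
def adRes (𝔫 : Submodule ℝ 𝔤) (hn : ∀ (Y : 𝔤), ∀ x ∈ 𝔫, ⁅Y, x⁆ ∈ 𝔫) (Y : 𝔤) :
    ↥𝔫 →ₗ[ℝ] ↥𝔫 where
  toFun X := ⟨⁅Y, (X : 𝔤)⁆, hn Y X X.2⟩
  map_add' X₁ X₂ := by ext; simp
  map_smul' t X := by ext; simp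

/-- The moment map `μ(X) = -I_X θ̃ ∈ A⁰ ⊗ 𝔫` of a `G`-equivariant `N`-connection `θ̃`,
viewed (by pairing with `α ∈ 𝔫*`) as a linear map `𝔫* → A⁰` for each `X ∈ 𝔤`. -/
def moment {𝔫 : Submodule ℝ 𝔤} (op : Operation 𝔤 A)
    (θN : Module.Dual ℝ ↥𝔫 →ₗ[ℝ] A) (X : 𝔤) (α : Module.Dual ℝ ↥𝔫) : A :=
  -op.I X (θN α)

/-! ### Statement 18 -/

variable {κ : Type} [Fintype κ] [DecidableEq κ] [LinearOrder κ]
variable {𝔮 : Type} [LieRing 𝔮] [LieAlgebra ℝ 𝔮]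
variable {B : Type} [Ring B] [Algebra ℝ B]
variable {WQ : Type} [Ring WQ] [Algebra ℝ WQ]

/-!
Write `Ωⁱ` for the even generators of `W_𝔤` belonging to a basis `eⁱ` of `𝔤*`, `θN` for the given
connection, and let `R` be the subalgebra `W_𝔮 ⊗ A` of `W_𝔤 ⊗ A`. The difference of the
tautological connection of `W_𝔤`, restricted to `𝔫`, and `θN` is annihilated by contractions with
`𝔫`; its horizontal part `χ` is annihilated by all contractions and is equivariant. Hence Cartan's
homotopy `K = ∑ᵢ χ(eⁱ|𝔫) ∂/∂Ωⁱ` is a derivation of degree `-1` preserving basic elements. The even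
derivation `T = dK + Kd` vanishes on `R` and fixes each `χ(α)` and `dχ(α)`, and these elements
generate `W_𝔤 ⊗ A` over `R`, so `W_𝔤 ⊗ A` is the sum of `R` and the eigenspaces of `T` for nonzero
eigenvalues. As `T` is null-homotopic, the basic cohomology of `W_𝔤 ⊗ A` is computed by the basic
elements of `R`. Contractions and Lie derivatives along `𝔫` act on `R = W_𝔮 ⊗ A` through the second
factor only, so these elements are exactly the `𝔮`-basic elements of `W_𝔮 ⊗ B`.
-/

theorem sgn_eq_negOnePow (n : ℤ) : sgn n = (n.negOnePow : ℤ) := by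
  rcases Int.even_or_odd n with hn | hn
  · simp [sgn, hn, Int.negOnePow_even n hn]
  · simp [sgn, Int.not_even_iff_odd.2 hn, Int.negOnePow_odd n hn]

theorem sgn_add (m n : ℤ) : sgn (m + n) = sgn m * sgn n := by
  simp only [sgn_eq_negOnePow, Int.negOnePow_add, Units.val_mul]

theorem sgn_neg (n : ℤ) : sgn (-n) = sgn n := by
  simp only [sgn_eq_negOnePow, Int.negOnePow_neg]

theorem sgn_mul_self (n : ℤ) : sgn n * sgn n = 1 := by
  simp only [sgn_eq_negOnePow, ← Units.val_mul, Int.units_mul_self, Units.val_one]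

theorem sgn_eq_one_or_neg_one (n : ℤ) : sgn n = 1 ∨ sgn n = -1 := by
  rw [sgn]; split_ifs <;> simp

theorem sgn_zero : sgn 0 = 1 := by simp [sgn]

theorem sgn_one : sgn 1 = -1 := by simp [sgn]

theorem sgn_two : sgn 2 = 1 := by simp [sgn]

section SuperDerivation

variable {𝕜 E F : Type*} [CommRing 𝕜] [Ring E] [Algebra 𝕜 E] [Ring F] [Algebra 𝕜 F]

/-- A superderivation of degree `k` of an algebra graded by `𝒜`: a linear map raising degrees by `k`
and satisfying the Leibniz rule with the Koszul sign `(-1)^(k n)` on elements of degree `n`. -/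
structure IsSuperDerivation (𝒜 : ℤ → Submodule 𝕜 E) (k : ℤ) (δ : Module.End 𝕜 E) : Prop where
  map_mem : ∀ {n : ℤ} {a : E}, a ∈ 𝒜 n → δ a ∈ 𝒜 (n + k)
  map_mul : ∀ {n : ℤ} {a : E}, a ∈ 𝒜 n → ∀ b : E,
    δ (a * b) = δ a * b + sgn (k * n) • (a * δ b)

/-- The supercommutator `f g - (-1)^(k l) g f` of endomorphisms of degrees `k` and `l`. -/
def superBracket {M : Type*} [AddCommGroup M] [Module 𝕜 M] (k l : ℤ) (f g : Module.End 𝕜 M) :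
    Module.End 𝕜 M :=
  f * g - sgn (k * l) • (g * f)

theorem superBracket_apply {M : Type*} [AddCommGroup M] [Module 𝕜 M] (k l : ℤ)
    (f g : Module.End 𝕜 M) (x : M) :
    superBracket k l f g x = f (g x) - sgn (k * l) • g (f x) := rfl

namespace IsSuperDerivation

variable {𝒜 : ℤ → Submodule 𝕜 E} {ℬ : ℤ → Submodule 𝕜 F} {k l : ℤ} {δ δ' : Module.End 𝕜 E}
  {δF : Module.End 𝕜 F}

protected theorem zero : IsSuperDerivation 𝒜 k 0 where
  map_mem _ := Submodule.zero_mem _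
  map_mul _ _ := by simp

theorem map_one_eq_zero (hδ : IsSuperDerivation 𝒜 k δ) (h1 : (1 : E) ∈ 𝒜 0) : δ 1 = 0 := by
  simpa [sgn_zero] using hδ.map_mul h1 1

theorem superBracket (hδ : IsSuperDerivation 𝒜 k δ) (hδ' : IsSuperDerivation 𝒜 l δ') :
    IsSuperDerivation 𝒜 (k + l) (superBracket k l δ δ') where
  map_mem {n a} ha := by
    have h₁ : δ (δ' a) ∈ 𝒜 (n + (k + l)) := by
      simpa only [add_assoc, add_comm l k] using hδ.map_mem (hδ'.map_mem ha)
    have h₂ : δ' (δ a) ∈ 𝒜 (n + (k + l)) := by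
      simpa only [add_assoc] using hδ'.map_mem (hδ.map_mem ha)
    exact Submodule.sub_mem _ h₁ (zsmul_mem h₂ _)
  map_mul {n a} ha b := by
    simp only [superBracket_apply, hδ.map_mul ha, hδ'.map_mul ha, map_add, map_zsmul,
      hδ.map_mul (hδ'.map_mem ha), hδ'.map_mul (hδ.map_mem ha), mul_add, add_mul, sgn_add, sub_mul,
      mul_sub, smul_mul_assoc, mul_smul_comm, smul_add, smul_sub, smul_smul, mul_comm l k]
    rcases sgn_eq_one_or_neg_one (k * l) with hkl | hkl <;> simp only [hkl] <;> module

theorem comp_eqOn_adjoin (hδ : IsSuperDerivation 𝒜 k δ) (hδF : IsSuperDerivation ℬ k δF)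
    (h1 : (1 : E) ∈ 𝒜 0) (h1' : (1 : F) ∈ ℬ 0) (φ : E →ₐ[𝕜] F) {s : Set E}
    (hs : ∀ x ∈ s, ∃ n, x ∈ 𝒜 n ∧ φ x ∈ ℬ n) (hφ : ∀ x ∈ s, φ (δ x) = δF (φ x)) :
    ∀ x ∈ Algebra.adjoin 𝕜 s, φ (δ x) = δF (φ x) := by
  suffices h : Subalgebra.toSubmodule (Algebra.adjoin 𝕜 s) ≤
      LinearMap.eqLocus (φ.toLinearMap ∘ₗ δ) (δF ∘ₗ φ.toLinearMap) from fun x hx => h hx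
  rw [Algebra.adjoin_eq_span, Submodule.span_le]
  intro x hx
  change φ (δ x) = δF (φ x)
  induction hx using Submonoid.closure_induction_left with
  | one => rw [hδ.map_one_eq_zero h1, map_one, hδF.map_one_eq_zero h1', map_zero]
  | mul_left x hx y _ ih =>
    obtain ⟨n, hn, hn'⟩ := hs x hx
    rw [hδ.map_mul hn, map_add, map_zsmul, _root_.map_mul, _root_.map_mul, _root_.map_mul,
      hδF.map_mul hn', hφ x hx, ih]

theorem eq_zero_on_adjoin (hδ : IsSuperDerivation 𝒜 k δ) (h1 : (1 : E) ∈ 𝒜 0) {s : Set E}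
    (hs : ∀ x ∈ s, ∃ n, x ∈ 𝒜 n) (h0 : ∀ x ∈ s, δ x = 0) :
    ∀ x ∈ Algebra.adjoin 𝕜 s, δ x = 0 :=
  hδ.comp_eqOn_adjoin (ℬ := 𝒜) .zero h1 h1 (AlgHom.id 𝕜 E)
    (fun x hx => (hs x hx).imp fun _ h => ⟨h, h⟩) h0

theorem map_mem_adjoin (hδ : IsSuperDerivation 𝒜 k δ) (h1 : (1 : E) ∈ 𝒜 0) {s : Set E}
    (hs : ∀ x ∈ s, ∃ n, x ∈ 𝒜 n) (hδs : ∀ x ∈ s, δ x ∈ Algebra.adjoin 𝕜 s) :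
    ∀ x ∈ Algebra.adjoin 𝕜 s, δ x ∈ Algebra.adjoin 𝕜 s := by
  suffices h : Subalgebra.toSubmodule (Algebra.adjoin 𝕜 s) ≤
      (Subalgebra.toSubmodule (Algebra.adjoin 𝕜 s)).comap δ from fun x hx => h hx
  conv_lhs => rw [Algebra.adjoin_eq_span]
  refine Submodule.span_le.2 fun x hx => ?_
  change δ x ∈ Algebra.adjoin 𝕜 s
  induction hx using Submonoid.closure_induction_left with
  | one => exact hδ.map_one_eq_zero h1 ▸ zero_mem _
  | mul_left x hx y hy ih =>
    obtain ⟨n, hn⟩ := hs x hx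
    have hy' : y ∈ Algebra.adjoin 𝕜 s :=
      Submonoid.closure_le.2 (show s ⊆ (Algebra.adjoin 𝕜 s).toSubmonoid from
        Algebra.subset_adjoin) hy
    rw [hδ.map_mul hn]
    exact add_mem (mul_mem (hδs x hx) hy')
      (zsmul_mem (mul_mem (Algebra.subset_adjoin hx) ih) _)

theorem add (hδ : IsSuperDerivation 𝒜 k δ) (hδ' : IsSuperDerivation 𝒜 k δ') :
    IsSuperDerivation 𝒜 k (δ + δ') where
  map_mem ha := add_mem (hδ.map_mem ha) (hδ'.map_mem ha)
  map_mul ha b := by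
    simp only [LinearMap.add_apply, hδ.map_mul ha, hδ'.map_mul ha, add_mul, mul_add, smul_add]
    abel

protected theorem sum {τ : Type*} {s : Finset τ} {δ : τ → Module.End 𝕜 E}
    (h : ∀ i ∈ s, IsSuperDerivation 𝒜 k (δ i)) : IsSuperDerivation 𝒜 k (∑ i ∈ s, δ i) :=
  Finset.sum_induction _ _ (fun _ _ => add) .zero h

theorem mulLeft [SetLike.GradedMonoid 𝒜]
    (hcomm : ∀ {m n : ℤ} {a b : E}, a ∈ 𝒜 m → b ∈ 𝒜 n → a * b = sgn (m * n) • (b * a))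
    {c : E} (hc : c ∈ 𝒜 l) (hδ : IsSuperDerivation 𝒜 k δ) :
    IsSuperDerivation 𝒜 (l + k) (LinearMap.mulLeft 𝕜 c * δ) where
  map_mem {n a} ha := by
    have h := SetLike.mul_mem_graded hc (hδ.map_mem ha)
    rwa [add_left_comm] at h
  map_mul {n a} ha b := by
    simp only [Module.End.mul_apply, LinearMap.mulLeft_apply, hδ.map_mul ha, mul_add, ← mul_assoc,
      mul_smul_comm, hcomm hc ha, smul_mul_assoc, smul_smul, add_mul, sgn_add]
    rw [mul_comm (sgn (k * n))]

end IsSuperDerivation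

end SuperDerivation

namespace Operation

variable (op : Operation 𝔤 A)

instance : GradedAlgebra op.grading where
  one_mem := op.one_mem
  mul_mem _ _ _ _ ha hb := op.mul_mem ha hb
  toDecomposition := op.decomposition

theorem isSuperDerivation_d : IsSuperDerivation op.grading 1 op.d where
  map_mem := op.d_mem
  map_mul ha b := by rw [op.d_mul ha, one_mul]

theorem isSuperDerivation_I (X : 𝔤) : IsSuperDerivation op.grading (-1) (op.I X) where
  map_mem := op.I_mem X
  map_mul ha b := by rw [op.I_mul X ha, neg_one_mul, sgn_neg]

theorem isSuperDerivation_L (X : 𝔤) : IsSuperDerivation op.grading 0 (op.L X) where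
  map_mem ha := by simpa using op.L_mem X ha
  map_mul _ b := by rw [op.L_mul X, zero_mul, sgn_zero, one_smul]

theorem I_anticomm (X Y : 𝔤) (a : A) : op.I X (op.I Y a) = -op.I Y (op.I X a) :=
  eq_neg_of_add_eq_zero_left (LinearMap.congr_fun (op.I_I X Y) a)

theorem I_I_self (X : 𝔤) (a : A) : op.I X (op.I X a) = 0 :=
  have : IsAddTorsionFree A := .of_isTorsionFree ℝ A
  self_eq_neg.1 (op.I_anticomm X X a)

theorem L_I_apply (X Y : 𝔤) (a : A) : op.L X (op.I Y a) = op.I Y (op.L X a) + op.I ⁅X, Y⁆ a :=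
  eq_add_of_sub_eq' (LinearMap.congr_fun (op.L_I X Y) a)

theorem I_mul_of_mem_one (X : 𝔤) {a : A} (ha : a ∈ op.grading 1) (b : A) :
    op.I X (a * b) = op.I X a * b - a * op.I X b := by
  rw [op.I_mul X ha, sgn_one, neg_one_smul, sub_eq_add_neg]

theorem mul_anticomm_of_mem_one {a b : A} (ha : a ∈ op.grading 1) (hb : b ∈ op.grading 1) :
    a * b = -(b * a) := by
  rw [op.supercomm ha hb, one_mul, sgn_one, neg_one_smul]

theorem mul_self_of_mem_one {a : A} (ha : a ∈ op.grading 1) : a * a = 0 :=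
  have : IsAddTorsionFree A := .of_isTorsionFree ℝ A
  self_eq_neg.1 (op.mul_anticomm_of_mem_one ha ha)

theorem mem_hor {a : A} : a ∈ op.hor ↔ ∀ X, op.I X a = 0 := by
  simp [hor, Submodule.mem_iInf]

theorem L_mem_hor (X : 𝔤) {a : A} (ha : a ∈ op.hor) : op.L X a ∈ op.hor := by
  rw [mem_hor] at ha ⊢
  intro Y
  have h := op.L_I_apply X Y a
  rwa [ha, ha, map_zero, add_zero, eq_comm] at h

theorem mem_bas {a : A} :
    a ∈ op.bas ↔ (∀ X, op.L X a = 0) ∧ ∀ X, op.I X a = 0 := by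
  simp [bas, inv, hor, Submodule.mem_iInf]

theorem d_mem_bas {a : A} (ha : a ∈ op.bas) : op.d a ∈ op.bas := by
  rw [mem_bas] at ha ⊢
  refine ⟨fun X => ?_, fun X => ?_⟩
  · have h : op.L X (op.d a) = op.d (op.L X a) := LinearMap.congr_fun (op.L_d X) a
    rw [h, ha.1, map_zero]
  · have h : op.I X (op.d a) + op.d (op.I X a) = op.L X a := LinearMap.congr_fun (op.cartan X) a
    rwa [ha.1, ha.2, map_zero, add_zero] at h

end Operation

section TransverseCoframe

variable {τ : Type} {op : Operation 𝔤 A} {𝔫 : Submodule ℝ 𝔤} {y : τ → 𝔤} {ϑ : τ → A}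

/-- A family of degree-one elements `ϑ` of an operation of `𝔤`, annihilated by the contractions with
`𝔫` and dual to a family `y` that spans `𝔤` modulo `𝔫`: the components of a connection in the
directions transverse to `𝔫`. -/
structure IsTransverseCoframe [DecidableEq τ] (op : Operation 𝔤 A) (𝔫 : Submodule ℝ 𝔤) (y : τ → 𝔤)
    (ϑ : τ → A) : Prop where
  mem : ∀ k, ϑ k ∈ op.grading 1
  I_dual : ∀ k l, op.I (y k) (ϑ l) = if k = l then 1 else 0
  I_eq_zero : ∀ X ∈ 𝔫, ∀ k, op.I X (ϑ k) = 0
  sup_span_eq_top : 𝔫 ⊔ Submodule.span ℝ (Set.range y) = ⊤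

/-- The right ideal generated by the coframe `ϑ`. -/
def coframeIdeal (ϑ : τ → A) : Submodule ℝ A :=
  Submodule.span ℝ (Set.range ϑ) * ⊤

/-- The operator `1 - ϑ ∘ I_Y`, which makes elements horizontal in the direction `Y`
when `I_Y ϑ = 1`. -/
def horStep (op : Operation 𝔤 A) (Y : 𝔤) (t : A) : Module.End ℝ A :=
  1 - LinearMap.mulLeft ℝ t * op.I Y

/-- The projection `∏ₖ (1 - ϑₖ ∘ I_{yₖ})` onto the elements that are horizontal in the directions
spanned by `y`, along the ideal generated by `ϑ`. -/
def horProj [Fintype τ] (op : Operation 𝔤 A) (y : τ → 𝔤) (ϑ : τ → A) : Module.End ℝ A :=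
  (Finset.univ.toList.map fun k => horStep op (y k) (ϑ k)).prod

theorem horStep_apply (Y : 𝔤) (t a : A) : horStep op Y t a = a - t * op.I Y a := rfl

theorem mul_mem_coframeIdeal (k : τ) (a : A) : ϑ k * a ∈ coframeIdeal ϑ :=
  Submodule.mul_mem_mul (Submodule.subset_span ⟨k, rfl⟩) trivial

theorem coframeIdeal_le {S : Submodule ℝ A} (h : ∀ k a, ϑ k * a ∈ S) : coframeIdeal ϑ ≤ S := by
  refine Submodule.mul_le.2 fun t ht a _ => ?_
  exact Submodule.span_le (p := S.comap (LinearMap.mulRight ℝ a)).2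
    (Set.range_subset_iff.2 fun k => h k a) ht

theorem I_horStep_self {Y : 𝔤} {t : A} (ht : t ∈ op.grading 1) (hYt : op.I Y t = 1) (a : A) :
    op.I Y (horStep op Y t a) = 0 := by
  rw [horStep_apply, map_sub, op.I_mul_of_mem_one Y ht, hYt, op.I_I_self, one_mul, mul_zero,
    sub_zero, sub_self]

theorem I_horStep_of_I_eq_zero {X Y : 𝔤} {t a : A} (ht : t ∈ op.grading 1) (hXt : op.I X t = 0)
    (ha : op.I X a = 0) : op.I X (horStep op Y t a) = 0 := by
  rw [horStep_apply, map_sub, op.I_mul_of_mem_one X ht, op.I_anticomm, hXt, ha]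
  simp

theorem horStep_mul_self {Y : 𝔤} {t : A} (ht : t ∈ op.grading 1) (hYt : op.I Y t = 1) (a : A) :
    horStep op Y t (t * a) = 0 := by
  rw [horStep_apply, op.I_mul_of_mem_one Y ht, hYt, mul_sub, ← mul_assoc t t,
    op.mul_self_of_mem_one ht, one_mul, zero_mul, sub_zero, sub_self]

theorem horStep_mul_of_I_eq_zero {Y : 𝔤} {t s : A} (ht : t ∈ op.grading 1) (hs : s ∈ op.grading 1)
    (hYs : op.I Y s = 0) (a : A) : horStep op Y t (s * a) = s * horStep op Y t a := by
  rw [horStep_apply, horStep_apply, op.I_mul_of_mem_one Y hs, hYs, zero_mul, zero_sub, mul_neg,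
    ← mul_assoc, op.mul_anticomm_of_mem_one ht hs, mul_sub, neg_mul, neg_neg, mul_assoc]

theorem horProj_sub_self_mem [Fintype τ] {S : Submodule ℝ A} {a : A}
    (hS : ∀ k, ∀ z ∈ S, ϑ k * op.I (y k) z ∈ S) (ha : ∀ k, ϑ k * op.I (y k) a ∈ S) :
    horProj op y ϑ a - a ∈ S := by
  rw [horProj]
  induction (Finset.univ : Finset τ).toList with
  | nil => simp
  | cons k l ih =>
    rw [List.map_cons, List.prod_cons, Module.End.mul_apply, horStep_apply]
    set z := (l.map fun k => horStep op (y k) (ϑ k)).prod a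
    have hz : z - ϑ k * op.I (y k) z - a =
        z - a - ϑ k * op.I (y k) (z - a) - ϑ k * op.I (y k) a := by
      rw [map_sub, mul_sub]; abel
    exact hz ▸ S.sub_mem (S.sub_mem ih (hS k _ ih)) (ha k)

theorem horProj_sub_self_mem_coframeIdeal [Fintype τ] (a : A) :
    horProj op y ϑ a - a ∈ coframeIdeal ϑ :=
  horProj_sub_self_mem (fun k _ _ => mul_mem_coframeIdeal k _) fun k => mul_mem_coframeIdeal k _

theorem horProj_eq_self [Fintype τ] {a : A} (ha : a ∈ op.hor) : horProj op y ϑ a = a :=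
  sub_eq_zero.1 <| (Submodule.mem_bot ℝ).1 <| horProj_sub_self_mem (S := ⊥)
    (by rintro k z rfl; simp) fun k => by simp [op.mem_hor.1 ha]

namespace IsTransverseCoframe

variable [DecidableEq τ]

theorem I_dual_self (h : IsTransverseCoframe op 𝔫 y ϑ) (k : τ) : op.I (y k)
    (ϑ k) = 1 := by
  rw [h.I_dual, if_pos rfl]

theorem I_dual_of_ne (h : IsTransverseCoframe op 𝔫 y ϑ) {k l : τ} (hkl : k ≠ l) : op.I (y k)
    (ϑ l) = 0 := by
  rw [h.I_dual, if_neg hkl]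

theorem mem_hor_of_I_eq_zero (h : IsTransverseCoframe op 𝔫 y ϑ) {a : A}
    (hy : ∀ k, op.I (y k) a = 0) (hn : ∀ X ∈ 𝔫, op.I X a = 0) :
    a ∈ op.hor := by
  have hker : 𝔫 ⊔ Submodule.span ℝ (Set.range y) ≤ LinearMap.ker (op.I.flip a) :=
    sup_le hn (Submodule.span_le.2 (Set.range_subset_iff.2 hy))
  rw [h.sup_span_eq_top] at hker
  exact op.mem_hor.2 fun X => hker trivial

theorem I_prod_horStep_eq_zero (h : IsTransverseCoframe op 𝔫 y ϑ) (l : List τ) (a : A) {k : τ}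
    (hk : k ∈ l) :
    op.I (y k) ((l.map fun k => horStep op (y k) (ϑ k)).prod a) = 0 := by
  induction l with
  | nil => simp at hk
  | cons m l ih =>
    rw [List.map_cons, List.prod_cons, Module.End.mul_apply]
    rcases eq_or_ne k m with rfl | hkm
    · exact I_horStep_self (h.mem k) (h.I_dual_self k) _
    · exact I_horStep_of_I_eq_zero (h.mem m) (h.I_dual_of_ne hkm)
        (ih ((List.mem_cons.1 hk).resolve_left hkm))

theorem I_prod_horStep_of_mem (h : IsTransverseCoframe op 𝔫 y ϑ) (l : List τ) {a : A} {X : 𝔤}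
    (hX : X ∈ 𝔫) (ha : op.I X a = 0) :
    op.I X ((l.map fun k => horStep op (y k) (ϑ k)).prod a) = 0 := by
  induction l with
  | nil => simpa using ha
  | cons m l ih =>
    rw [List.map_cons, List.prod_cons, Module.End.mul_apply]
    exact I_horStep_of_I_eq_zero (h.mem m) (h.I_eq_zero X hX m) ih

theorem prod_horStep_mul_of_notMem (h : IsTransverseCoframe op 𝔫 y ϑ) {l : List τ} {k : τ}
    (hk : k ∉ l) (a : A) :
    (l.map fun k => horStep op (y k) (ϑ k)).prod (ϑ k * a) =
      ϑ k * (l.map fun k => horStep op (y k) (ϑ k)).prod a := by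
  induction l with
  | nil => rfl
  | cons m l ih =>
    obtain ⟨hkm, hkl⟩ := not_or.1 (List.mem_cons.not.1 hk)
    rw [List.map_cons, List.prod_cons, Module.End.mul_apply, Module.End.mul_apply, ih hkl,
      horStep_mul_of_I_eq_zero (h.mem m) (h.mem k) (h.I_dual_of_ne (Ne.symm hkm))]

theorem prod_horStep_mul_of_mem (h : IsTransverseCoframe op 𝔫 y ϑ) {l : List τ} {k : τ}
    (hk : k ∈ l) (a : A) :
    (l.map fun k => horStep op (y k) (ϑ k)).prod (ϑ k * a) = 0 := by
  induction l with
  | nil => simp at hk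
  | cons m l ih =>
    rw [List.map_cons, List.prod_cons, Module.End.mul_apply]
    by_cases hkl : k ∈ l
    · rw [ih hkl, map_zero]
    · obtain rfl := (List.mem_cons.1 hk).resolve_right hkl
      rw [h.prod_horStep_mul_of_notMem hkl, horStep_mul_self (h.mem k) (h.I_dual_self k)]

theorem horProj_mem_hor [Fintype τ] (h : IsTransverseCoframe op 𝔫 y ϑ) {a : A}
    (ha : ∀ X ∈ 𝔫, op.I X a = 0) : horProj op y ϑ a ∈ op.hor :=
  h.mem_hor_of_I_eq_zero
    (fun k => h.I_prod_horStep_eq_zero _ a (Finset.mem_toList.2 (Finset.mem_univ k)))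
    fun X hX => h.I_prod_horStep_of_mem _ hX (ha X hX)

theorem eq_zero_of_mem_coframeIdeal [Finite τ] (h : IsTransverseCoframe op 𝔫 y ϑ) {a : A}
    (haJ : a ∈ coframeIdeal ϑ) (ha : a ∈ op.hor) :
    a = 0 := by
  cases nonempty_fintype τ
  have hker : coframeIdeal ϑ ≤ LinearMap.ker (horProj op y ϑ) :=
    coframeIdeal_le fun k a => h.prod_horStep_mul_of_mem (Finset.mem_toList.2 (Finset.mem_univ k)) a
  exact (horProj_eq_self ha).symm.trans (hker haJ)

end IsTransverseCoframe

end TransverseCoframe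

section Graded

open DirectSum

variable {𝕜 E F : Type*} [CommRing 𝕜]

section Module

variable [AddCommGroup E] [Module 𝕜 E] [AddCommGroup F] [Module 𝕜 F] (𝒜 : ℤ → Submodule 𝕜 E)
  (ℬ : ℤ → Submodule 𝕜 F) [Decomposition 𝒜] [Decomposition ℬ] {k : ℤ} {f : E →ₗ[𝕜] F}

theorem map_decompose_of_span_eq_top {s : Set E} (hs : Submodule.span 𝕜 s = ⊤)
    (hf : ∀ x ∈ s, ∃ m, x ∈ 𝒜 m ∧ f x ∈ ℬ (m + k)) (n : ℤ) (x : E) :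
    f (decompose 𝒜 x n) = decompose ℬ (f x) (n + k) := by
  suffices h : f ∘ₗ (𝒜 n).subtype ∘ₗ component 𝕜 ℤ _ n ∘ₗ (decomposeLinearEquiv 𝒜).toLinearMap =
      (ℬ (n + k)).subtype ∘ₗ component 𝕜 ℤ _ (n + k) ∘ₗ
        (decomposeLinearEquiv ℬ).toLinearMap ∘ₗ f from LinearMap.congr_fun h x
  refine LinearMap.ext_on hs fun z hz => ?_
  obtain ⟨m, hm, hfm⟩ := hf z hz
  change f (decompose 𝒜 z n) = decompose ℬ (f z) (n + k)
  rcases eq_or_ne m n with rfl | hmn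
  · rw [decompose_of_mem_same 𝒜 hm, decompose_of_mem_same ℬ hfm]
  · rw [decompose_of_mem_ne 𝒜 hm hmn, decompose_of_mem_ne ℬ hfm (by simpa using hmn), map_zero]

theorem map_mem_of_span_eq_top {s : Set E} (hs : Submodule.span 𝕜 s = ⊤)
    (hf : ∀ x ∈ s, ∃ m, x ∈ 𝒜 m ∧ f x ∈ ℬ (m + k)) {n : ℤ} {x : E} (hx : x ∈ 𝒜 n) :
    f x ∈ ℬ (n + k) := by
  have h := map_decompose_of_span_eq_top 𝒜 ℬ hs hf n x
  rw [decompose_of_mem_same 𝒜 hx] at h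
  exact h ▸ SetLike.coe_mem _

theorem mem_of_map_mem_of_injective (hf : ∀ n, ∀ x ∈ 𝒜 n, f x ∈ ℬ n) (hinj : Function.Injective f)
    {n : ℤ} {x : E} (hx : f x ∈ ℬ n) : x ∈ 𝒜 n := by
  have hspan : Submodule.span 𝕜 (⋃ m, (𝒜 m : Set E)) = ⊤ := by
    rw [← Submodule.iSup_eq_span, (Decomposition.isInternal 𝒜).submodule_iSup_eq_top]
  have h := map_decompose_of_span_eq_top 𝒜 ℬ (k := 0) hspan (fun z hz => by
    obtain ⟨m, hm⟩ := Set.mem_iUnion.1 hz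
    exact ⟨m, hm, by simpa using hf m z hm⟩) n x
  rw [add_zero, decompose_of_mem_same ℬ hx] at h
  exact hinj h ▸ SetLike.coe_mem _

end Module

variable [Ring E] [Algebra 𝕜 E] [Ring F] [Algebra 𝕜 F]

theorem span_closure_eq_top {s : Set E} (hs : Algebra.adjoin 𝕜 s = ⊤) :
    Submodule.span 𝕜 (Submonoid.closure s : Set E) = ⊤ := by
  rw [← Algebra.adjoin_eq_span, hs, Algebra.top_toSubmodule]

theorem algHom_map_mem_of_adjoin_eq_top (𝒜 : ℤ → Submodule 𝕜 E) (ℬ : ℤ → Submodule 𝕜 F)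
    [GradedAlgebra 𝒜] [GradedAlgebra ℬ] (φ : E →ₐ[𝕜] F) {s : Set E} (hs : Algebra.adjoin 𝕜 s = ⊤)
    (hφ : ∀ x ∈ s, ∃ m, x ∈ 𝒜 m ∧ φ x ∈ ℬ m) {n : ℤ} {x : E} (hx : x ∈ 𝒜 n) : φ x ∈ ℬ n := by
  suffices h : φ.toLinearMap x ∈ ℬ (n + 0) by simpa using h
  refine map_mem_of_span_eq_top 𝒜 ℬ (span_closure_eq_top hs) (fun z hz => ?_) hx
  simp only [add_zero, AlgHom.toLinearMap_apply]
  induction hz using Submonoid.closure_induction with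
  | mem z hz => exact hφ z hz
  | one => exact ⟨0, SetLike.GradedOne.one_mem, by simpa using SetLike.GradedOne.one_mem⟩
  | mul z w _ _ hz hw =>
    obtain ⟨⟨m, hm, hm'⟩, p, hp, hp'⟩ := hz, hw
    exact ⟨m + p, SetLike.mul_mem_graded hm hp, map_mul φ z w ▸ SetLike.mul_mem_graded hm' hp'⟩

theorem IsSuperDerivation.of_adjoin_eq_top (𝒜 : ℤ → Submodule 𝕜 E) [GradedAlgebra 𝒜] {k : ℤ}
    {δ : Module.End 𝕜 E} {s : Set E} (hs : Algebra.adjoin 𝕜 s = ⊤)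
    (hδ : ∀ x ∈ s, ∃ m, x ∈ 𝒜 m ∧ δ x ∈ 𝒜 (m + k))
    (hmul : ∀ {n : ℤ} {a : E}, a ∈ 𝒜 n → ∀ b, δ (a * b) = δ a * b + sgn (k * n) • (a * δ b)) :
    IsSuperDerivation 𝒜 k δ where
  map_mem := by
    refine map_mem_of_span_eq_top 𝒜 𝒜 (span_closure_eq_top hs) fun z hz => ?_
    induction hz using Submonoid.closure_induction with
    | mem z hz => exact hδ z hz
    | one =>
      have h1 : δ 1 = 0 := by simpa [sgn_zero] using hmul (SetLike.GradedOne.one_mem (A := 𝒜)) 1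
      exact ⟨0, SetLike.GradedOne.one_mem, h1 ▸ Submodule.zero_mem _⟩
    | mul z w _ _ hz hw =>
      obtain ⟨⟨m, hm, hm'⟩, p, hp, hp'⟩ := hz, hw
      refine ⟨m + p, SetLike.mul_mem_graded hm hp, hmul hm w ▸ Submodule.add_mem _ ?_ ?_⟩
      · simpa only [add_right_comm] using SetLike.mul_mem_graded hm' hp
      · simpa only [add_assoc] using zsmul_mem (SetLike.mul_mem_graded hm hp') _
  map_mul := hmul

end Graded

section WeilMonomial

variable {τ C : Type} [Ring C] {t o : τ → C}

/-- The defining relations of `S V ⊗ Λ V` for families `t` (of odd elements) and `o` (of even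
elements) of a ring. -/
structure IsWeilFamily (t o : τ → C) : Prop where
  odd_mul_odd : ∀ i j, t i * t j = -(t j * t i)
  even_comm_even : ∀ i j, Commute (o i) (o j)
  even_comm_odd : ∀ i j, Commute (o i) (t j)

theorem IsWeilFamily.prod {C' : Type} [Ring C'] {t' o' : τ → C'} (h : IsWeilFamily t o)
    (h' : IsWeilFamily t' o') :
    IsWeilFamily (fun i => (t i, t' i)) (fun i => (o i, o' i)) where
  odd_mul_odd i j := Prod.ext (h.odd_mul_odd i j) (h'.odd_mul_odd i j)
  even_comm_even i j := Prod.ext (h.even_comm_even i j) (h'.even_comm_even i j)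
  even_comm_odd i j := Prod.ext (h.even_comm_odd i j) (h'.even_comm_odd i j)

theorem Operation.isWeilFamily (op : Operation 𝔤 A) {t o : τ → A} (ht : ∀ i, t i ∈ op.grading 1)
    (ho : ∀ i, o i ∈ op.grading 2) : IsWeilFamily t o where
  odd_mul_odd i j := op.mul_anticomm_of_mem_one (ht i) (ht j)
  even_comm_even i j := by
    rw [commute_iff_eq, op.supercomm (ho i) (ho j), two_mul, sgn_add, sgn_mul_self, one_smul]
  even_comm_odd i j := by
    rw [commute_iff_eq, op.supercomm (ho i) (ht j), mul_one, sgn_two, one_smul]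

theorem mul_prod_map_pow_of_mem (ho : ∀ i j, Commute (o i) (o j)) (m : τ →₀ ℕ)
    {l : List τ} (hl : l.Nodup) {i : τ} (hi : i ∈ l) :
    o i * (l.map fun j => o j ^ m j).prod =
      (l.map fun j => o j ^ (m + Finsupp.single i 1 : τ →₀ ℕ) j).prod := by
  classical
  induction l with
  | nil => simp at hi
  | cons a l ih =>
    obtain ⟨hal, hl⟩ := List.nodup_cons.1 hl
    simp only [List.map_cons, List.prod_cons]
    rcases eq_or_ne i a with rfl | hia
    · have htail : (l.map fun j => o j ^ (m + Finsupp.single i 1 : τ →₀ ℕ) j) =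
          l.map fun j => o j ^ m j :=
        List.map_congr_left fun j hj => by simp [(ne_of_mem_of_not_mem hj hal).symm]
      rw [htail, ← mul_assoc, ← pow_succ', Finsupp.add_apply, Finsupp.single_eq_same]
    · rw [← mul_assoc, ((ho i a).pow_right _).eq, mul_assoc,
        ih hl ((List.mem_cons.1 hi).resolve_left hia), Finsupp.add_apply,
        Finsupp.single_eq_of_ne (Ne.symm hia), add_zero]

theorem mul_prod_map_eq_zero_of_mem (ht : ∀ i j, t i * t j = -(t j * t i))
    (hsq : ∀ i, t i * t i = 0) {l : List τ} {i : τ} (hi : i ∈ l) : t i * (l.map t).prod = 0 := by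
  induction l with
  | nil => simp at hi
  | cons a l ih =>
    rw [List.map_cons, List.prod_cons, ← mul_assoc]
    rcases List.mem_cons.1 hi with rfl | hi
    · rw [hsq, zero_mul]
    · rw [ht, neg_mul, mul_assoc, ih hi, mul_zero, neg_zero]

theorem prod_map_eq_or_eq_neg_of_perm (ht : ∀ i j, t i * t j = -(t j * t i)) {l l' : List τ}
    (hl : l.Perm l') : (l.map t).prod = (l'.map t).prod ∨ (l.map t).prod = -(l'.map t).prod := by
  induction hl with
  | nil => exact .inl rfl
  | cons a _ ih => exact ih.imp (by simp [·]) (by simp [·])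
  | swap a c l => exact .inr (by simp [← mul_assoc, ht a c])
  | trans _ _ ih ih' =>
    rcases ih with h | h <;> rcases ih' with h' | h' <;> simp [h, h']

variable [Fintype τ] [LinearOrder τ]

/-- The monomial `o^m t^S` in two families of ring elements. -/
def weilMonomial (t o : τ → C) (p : (τ →₀ ℕ) × Finset τ) : C :=
  ((Finset.univ.sort (· ≤ ·)).map fun i => o i ^ p.1 i).prod * ((p.2.sort (· ≤ ·)).map t).prod

theorem map_weilMonomial {C' G : Type} [Ring C'] [FunLike G C C'] [MonoidHomClass G C C'] (f : G)
    (p : (τ →₀ ℕ) × Finset τ) :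
    f (weilMonomial t o p) = weilMonomial (fun i => f (t i)) (fun i => f (o i)) p := by
  simp only [weilMonomial, map_mul, map_list_prod, List.map_map, Function.comp_def, map_pow]

theorem weilMonomial_zero : weilMonomial t o (0, ∅) = 1 := by simp [weilMonomial]

theorem even_mul_weilMonomial (h : IsWeilFamily t o) (i : τ) (p : (τ →₀ ℕ) × Finset τ) :
    o i * weilMonomial t o p = weilMonomial t o (p.1 + Finsupp.single i 1, p.2) := by
  rw [weilMonomial, ← mul_assoc, mul_prod_map_pow_of_mem h.even_comm_even _ (Finset.sort_nodup _ _)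
    ((Finset.mem_sort _).2 (Finset.mem_univ i)), weilMonomial]

variable [Algebra ℝ C]

theorem odd_mul_weilMonomial_mem_span (h : IsWeilFamily t o) (i : τ) (p : (τ →₀ ℕ) × Finset τ) :
    t i * weilMonomial t o p ∈ Submodule.span ℝ (Set.range (weilMonomial t o)) := by
  have hcomm : Commute (t i) ((Finset.univ.sort (· ≤ ·)).map fun j => o j ^ p.1 j).prod :=
    Commute.list_prod_right _ _ fun x hx => by
      obtain ⟨j, -, rfl⟩ := List.mem_map.1 hx
      exact ((h.even_comm_odd j i).symm).pow_right _
  rw [weilMonomial, ← mul_assoc, hcomm.eq, mul_assoc]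
  by_cases hi : i ∈ p.2
  · have : IsAddTorsionFree C := .of_isTorsionFree ℝ C
    rw [mul_prod_map_eq_zero_of_mem h.odd_mul_odd (fun j => self_eq_neg.1 (h.odd_mul_odd j j))
      ((Finset.mem_sort _).2 hi), mul_zero]
    exact Submodule.zero_mem _
  · have hperm : (i :: p.2.sort (· ≤ ·)).Perm ((insert i p.2).sort (· ≤ ·)) :=
      (List.perm_ext_iff_of_nodup (List.nodup_cons.2 ⟨by simpa, Finset.sort_nodup _ _⟩)
        (Finset.sort_nodup _ _)).2 fun j => by simp
    have hmem : weilMonomial t o (p.1, insert i p.2) ∈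
        Submodule.span ℝ (Set.range (weilMonomial t o)) := Submodule.subset_span ⟨_, rfl⟩
    rw [weilMonomial] at hmem
    rw [← List.prod_cons, ← List.map_cons]
    rcases prod_map_eq_or_eq_neg_of_perm h.odd_mul_odd hperm with hp | hp
    · rwa [hp]
    · rw [hp, mul_neg]
      exact Submodule.neg_mem _ hmem

theorem adjoin_range_union_range_eq_span (h : IsWeilFamily t o) :
    Subalgebra.toSubmodule (Algebra.adjoin ℝ (Set.range t ∪ Set.range o)) =
      Submodule.span ℝ (Set.range (weilMonomial t o)) := by
  apply le_antisymm
  · have hmul : ∀ x ∈ Set.range t ∪ Set.range o,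
        Submodule.span ℝ (Set.range (weilMonomial t o)) ≤
          (Submodule.span ℝ (Set.range (weilMonomial t o))).comap (LinearMap.mulLeft ℝ x) := by
      rintro x (⟨i, rfl⟩ | ⟨i, rfl⟩) <;> refine Submodule.span_le.2 ?_ <;> rintro _ ⟨p, rfl⟩
      · exact odd_mul_weilMonomial_mem_span h i p
      · exact Submodule.subset_span ⟨_, (even_mul_weilMonomial h i p).symm⟩
    rw [Algebra.adjoin_eq_span, Submodule.span_le]
    intro x hx
    induction hx using Submonoid.closure_induction_left with
    | one => exact Submodule.subset_span ⟨_, weilMonomial_zero⟩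
    | mul_left x hx y _ ih => exact hmul x hx ih
  · rw [Submodule.span_le]
    rintro _ ⟨p, rfl⟩
    refine Subalgebra.mul_mem _ (list_prod_mem ?_) (list_prod_mem ?_) <;>
      simp only [List.mem_map] <;> rintro _ ⟨i, -, rfl⟩
    · exact pow_mem (Algebra.subset_adjoin (.inr ⟨i, rfl⟩)) _
    · exact Algebra.subset_adjoin (.inl ⟨i, rfl⟩)

end WeilMonomial

namespace WeilData

variable {b : Module.Basis ι ℝ 𝔤} (wd : WeilData ι b W)

theorem isWeilFamily : IsWeilFamily wd.θ wd.Ω := wd.toOperation.isWeilFamily wd.θ_mem wd.Ω_mem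

/-- The basis of a Weil algebra formed by the monomials in its generators. -/
def monomialBasis : Module.Basis ((ι →₀ ℕ) × Finset ι) ℝ W := wd.free.choose

theorem monomialBasis_apply (p : (ι →₀ ℕ) × Finset ι) :
    wd.monomialBasis p = weilMonomial wd.θ wd.Ω p := wd.free.choose_spec p

theorem adjoin_θ_Ω_eq_top : Algebra.adjoin ℝ (Set.range wd.θ ∪ Set.range wd.Ω) = ⊤ := by
  rw [← Algebra.toSubmodule_eq_top, adjoin_range_union_range_eq_span wd.isWeilFamily,
    ← wd.monomialBasis.span_eq, ← funext wd.monomialBasis_apply]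

section Lift

variable {C : Type} [Ring C] [Algebra ℝ C] {t o : ι → C}

/-- The linear map sending each monomial in `θ, Ω` to the corresponding monomial in `t, o`. -/
def liftLinear (t o : ι → C) : W →ₗ[ℝ] C := wd.monomialBasis.constr ℝ (weilMonomial t o)

theorem adjoin_prod_eq_graph_liftLinear (h : IsWeilFamily t o) :
    Subalgebra.toSubmodule (Algebra.adjoin ℝ (Set.range (fun i => (wd.θ i, t i)) ∪
      Set.range fun i => (wd.Ω i, o i))) = (wd.liftLinear t o).graph := by
  rw [adjoin_range_union_range_eq_span (wd.isWeilFamily.prod h), LinearMap.graph_eq_range_prod,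
    LinearMap.range_eq_map, ← wd.monomialBasis.span_eq, Submodule.map_span, ← Set.range_comp]
  congr 2 with p
  · simpa [monomialBasis_apply] using map_weilMonomial (RingHom.fst W C) p
  · simpa [liftLinear] using map_weilMonomial (RingHom.snd W C) p

theorem mk_mem_adjoin_iff (h : IsWeilFamily t o) {x : W} {c : C} :
    (x, c) ∈ Algebra.adjoin ℝ (Set.range (fun i => (wd.θ i, t i)) ∪
      Set.range fun i => (wd.Ω i, o i)) ↔ c = wd.liftLinear t o x := by
  rw [← Subalgebra.mem_toSubmodule, wd.adjoin_prod_eq_graph_liftLinear h, LinearMap.mem_graph_iff]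

/-- The universal property of the Weil algebra as the free algebra on odd generators `θ` and even
generators `Ω`. -/
def lift (h : IsWeilFamily t o) : W →ₐ[ℝ] C :=
  AlgHom.ofLinearMap (wd.liftLinear t o)
    ((wd.mk_mem_adjoin_iff h).1 (one_mem _)).symm
    fun _ _ => ((wd.mk_mem_adjoin_iff h).1 (mul_mem ((wd.mk_mem_adjoin_iff h).2 rfl)
      ((wd.mk_mem_adjoin_iff h).2 rfl))).symm

theorem lift_θ (h : IsWeilFamily t o) (i : ι) : wd.lift h (wd.θ i) = t i :=
  ((wd.mk_mem_adjoin_iff h).1 (Algebra.subset_adjoin (.inl ⟨i, rfl⟩))).symm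

theorem lift_Ω (h : IsWeilFamily t o) (i : ι) : wd.lift h (wd.Ω i) = o i :=
  ((wd.mk_mem_adjoin_iff h).1 (Algebra.subset_adjoin (.inr ⟨i, rfl⟩))).symm

end Lift

end WeilData

theorem sum_structConst_mul {τ : Type} [Fintype τ] (b : Module.Basis τ ℝ 𝔤)
    (η : Module.Dual ℝ 𝔤) (j k : τ) :
    ∑ i, structConst b i j k * η (b i) = η ⁅b j, b k⁆ := by
  conv_rhs => rw [← b.sum_repr ⁅b j, b k⁆, map_sum]
  simp only [structConst, map_smul, smul_eq_mul]

namespace WeilData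

variable {b : Module.Basis ι ℝ 𝔤} (wd : WeilData ι b W)

/-- The tautological connection `𝔤* → W` of the Weil algebra: the linear extension of `θ`. -/
def connForm : Module.Dual ℝ 𝔤 →ₗ[ℝ] W := b.dualBasis.constr ℝ wd.θ

/-- The linear extension of `Ω` to a map `𝔤* → W`. -/
def curvForm : Module.Dual ℝ 𝔤 →ₗ[ℝ] W := b.dualBasis.constr ℝ wd.Ω

theorem connForm_apply (η : Module.Dual ℝ 𝔤) : wd.connForm η = ∑ i, η (b i) • wd.θ i := by
  simp [connForm, Module.Basis.constr_apply_fintype]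

theorem curvForm_apply (η : Module.Dual ℝ 𝔤) : wd.curvForm η = ∑ i, η (b i) • wd.Ω i := by
  simp [curvForm, Module.Basis.constr_apply_fintype]

theorem connForm_dualBasis (i : ι) : wd.connForm (b.dualBasis i) = wd.θ i :=
  b.dualBasis.constr_basis ℝ wd.θ i

theorem curvForm_dualBasis (i : ι) : wd.curvForm (b.dualBasis i) = wd.Ω i :=
  b.dualBasis.constr_basis ℝ wd.Ω i

theorem connForm_mem (η : Module.Dual ℝ 𝔤) : wd.connForm η ∈ wd.grading 1 := by
  rw [connForm_apply]
  exact Submodule.sum_mem _ fun i _ => Submodule.smul_mem _ _ (wd.θ_mem i)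

theorem curvForm_mem (η : Module.Dual ℝ 𝔤) : wd.curvForm η ∈ wd.grading 2 := by
  rw [curvForm_apply]
  exact Submodule.sum_mem _ fun i _ => Submodule.smul_mem _ _ (wd.Ω_mem i)

theorem I_connForm (X : 𝔤) (η : Module.Dual ℝ 𝔤) : wd.I X (wd.connForm η) = η X • (1 : W) := by
  suffices h : wd.I.flip (wd.connForm η) = η.smulRight (1 : W) from LinearMap.congr_fun h X
  refine b.ext fun i => ?_
  simp [connForm_apply, wd.I_θ]

theorem L_basis_connForm (i : ι) (η : Module.Dual ℝ 𝔤) :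
    wd.L (b i) (wd.connForm η) = -wd.connForm (η ∘ₗ LieAlgebra.ad ℝ 𝔤 (b i)) := by
  simp only [connForm_apply, map_sum, map_smul, wd.L_θ, LinearMap.comp_apply, LieAlgebra.ad_apply,
    ← sum_structConst_mul, smul_neg, Finset.smul_sum, smul_smul, Finset.sum_smul,
    Finset.sum_neg_distrib, mul_comm]
  rw [Finset.sum_comm]

theorem L_connForm (X : 𝔤) (η : Module.Dual ℝ 𝔤) :
    wd.L X (wd.connForm η) = -wd.connForm (η ∘ₗ LieAlgebra.ad ℝ 𝔤 X) := by
  rw [← b.sum_repr X]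
  have hcomp : η ∘ₗ LieAlgebra.ad ℝ 𝔤 (∑ i, b.repr X i • b i) =
      ∑ i, b.repr X i • η ∘ₗ LieAlgebra.ad ℝ 𝔤 (b i) := by
    ext Y
    simp only [map_sum, map_smul, LinearMap.comp_apply, LinearMap.sum_apply, LinearMap.smul_apply]
  rw [hcomp]
  simp only [map_sum, map_smul, LinearMap.sum_apply, LinearMap.smul_apply, L_basis_connForm,
    smul_neg, Finset.sum_neg_distrib]

theorem d_connForm (η : Module.Dual ℝ 𝔤) : wd.d (wd.connForm η) =
    wd.curvForm η - (1 / 2 : ℝ) • ∑ j, ∑ k, η ⁅b j, b k⁆ • (wd.θ j * wd.θ k) := by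
  simp only [connForm_apply, curvForm_apply, map_sum, map_smul, wd.d_θ, smul_add, neg_smul,
    smul_neg, Finset.sum_add_distrib, Finset.sum_neg_distrib, smul_comm _ (1 / 2 : ℝ),
    ← Finset.smul_sum, ← sum_structConst_mul, Finset.sum_smul]
  rw [neg_add_eq_sub]
  congr 2
  simp only [Finset.smul_sum, smul_smul, mul_comm]
  rw [Finset.sum_comm]
  exact Finset.sum_congr rfl fun j _ => Finset.sum_comm

theorem adjoin_connForm_d_connForm_eq_top :
    Algebra.adjoin ℝ (Set.range wd.connForm ∪ Set.range fun η => wd.d (wd.connForm η)) = ⊤ := by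
  rw [eq_top_iff, ← wd.adjoin_θ_Ω_eq_top, Algebra.adjoin_le_iff]
  have hθ (i : ι) : wd.θ i ∈ Algebra.adjoin ℝ
      (Set.range wd.connForm ∪ Set.range fun η => wd.d (wd.connForm η)) :=
    Algebra.subset_adjoin (.inl ⟨_, wd.connForm_dualBasis i⟩)
  rintro _ (⟨i, rfl⟩ | ⟨i, rfl⟩)
  · exact hθ i
  · have hΩ := sub_eq_iff_eq_add.1 (wd.d_connForm (b.dualBasis i)).symm
    rw [SetLike.mem_coe, ← wd.curvForm_dualBasis, hΩ]
    exact add_mem (Algebra.subset_adjoin (.inr ⟨_, rfl⟩)) <| Subalgebra.smul_mem _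
      (sum_mem fun j _ => sum_mem fun k _ => Subalgebra.smul_mem _ (mul_mem (hθ j) (hθ k)) _) _

section EvenDeriv

variable (i : ι)

theorem isWeilFamily_dualNumber : IsWeilFamily (fun j => TrivSqZeroExt.inl (M := W) (wd.θ j))
    (fun j => TrivSqZeroExt.inl (wd.Ω j) + TrivSqZeroExt.inr (if i = j then (1 : W) else 0)) where
  odd_mul_odd j k := by
    simp only [← TrivSqZeroExt.inl_mul, wd.isWeilFamily.odd_mul_odd j k, TrivSqZeroExt.inl_neg]
  even_comm_even j k := by
    ext
    · split_ifs <;> simpa using (wd.isWeilFamily.even_comm_even j k).eq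
    · split_ifs <;> simp [add_comm]
  even_comm_odd j k := by
    ext
    · split_ifs <;> simpa using (wd.isWeilFamily.even_comm_odd j k).eq
    · split_ifs <;> simp

/-- The first-order deformation `Ω j ↦ Ω j + δ_ij ε`, `θ j ↦ θ j` of the Weil algebra. -/
def evenShift : W →ₐ[ℝ] TrivSqZeroExt W W := wd.lift (wd.isWeilFamily_dualNumber i)

/-- The derivation `∂/∂Ω i` of the Weil algebra. -/
def evenDeriv : Module.End ℝ W := TrivSqZeroExt.sndHom W W ∘ₗ (wd.evenShift i).toLinearMap

theorem fst_evenShift (w : W) : (wd.evenShift i w).fst = w := by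
  suffices h : (TrivSqZeroExt.fstHom ℝ W W).comp (wd.evenShift i) = AlgHom.id ℝ W from
    AlgHom.congr_fun h w
  refine AlgHom.ext_of_adjoin_eq_top wd.adjoin_θ_Ω_eq_top ?_
  rintro _ (⟨j, rfl⟩ | ⟨j, rfl⟩) <;> simp [evenShift, lift_θ, lift_Ω, apply_ite TrivSqZeroExt.fst]

theorem evenDeriv_mul (v w : W) :
    wd.evenDeriv i (v * w) = wd.evenDeriv i v * w + v * wd.evenDeriv i w := by
  simp [evenDeriv, fst_evenShift, add_comm]

theorem evenDeriv_θ (j : ι) : wd.evenDeriv i (wd.θ j) = 0 := by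
  simp [evenDeriv, evenShift, lift_θ]

theorem evenDeriv_Ω (j : ι) : wd.evenDeriv i (wd.Ω j) = if i = j then 1 else 0 := by
  simp only [evenDeriv, evenShift, LinearMap.comp_apply, AlgHom.toLinearMap_apply, lift_Ω]
  split_ifs <;> simp

theorem isSuperDerivation_evenDeriv :
    IsSuperDerivation wd.grading (-2) (wd.evenDeriv i) := by
  refine .of_adjoin_eq_top wd.grading wd.adjoin_θ_Ω_eq_top ?_ fun {n} _ _ b => ?_
  · rintro _ (⟨j, rfl⟩ | ⟨j, rfl⟩)
    · exact ⟨1, wd.θ_mem j, by simp [evenDeriv_θ]⟩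
    · refine ⟨2, wd.Ω_mem j, ?_⟩
      rw [evenDeriv_Ω]
      split_ifs
      exacts [wd.one_mem, Submodule.zero_mem _]
  · rw [evenDeriv_mul, neg_mul, sgn_neg, two_mul, sgn_add, sgn_mul_self, one_smul]

theorem evenDeriv_connForm (η : Module.Dual ℝ 𝔤) : wd.evenDeriv i (wd.connForm η) = 0 := by
  simp [connForm_apply, evenDeriv_θ]

theorem evenDeriv_d_connForm (η : Module.Dual ℝ 𝔤) :
    wd.evenDeriv i (wd.d (wd.connForm η)) = η (b i) • (1 : W) := by
  simp [d_connForm, curvForm_apply, evenDeriv_mul, evenDeriv_θ, evenDeriv_Ω]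

end EvenDeriv

end WeilData

theorem dual_comp_eq_sum {τ V V' : Type} [Fintype τ] [DecidableEq τ] [AddCommGroup V] [Module ℝ V]
    [AddCommGroup V'] [Module ℝ V'] (e : Module.Basis τ ℝ V') (γ : Module.Dual ℝ V')
    (f : V →ₗ[ℝ] V') : γ ∘ₗ f = ∑ l, γ (e l) • e.dualBasis l ∘ₗ f := by
  ext X
  conv_lhs => rw [LinearMap.comp_apply, ← e.sum_repr (f X), map_sum]
  simp [mul_comm]

namespace WeilData

variable {b : Module.Basis ι ℝ 𝔤} (wd : WeilData ι b W)
  {τ : Type} [Fintype τ] [DecidableEq τ] {e : Module.Basis τ ℝ 𝔮}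

theorem sum_smul_connForm_dualBasis_comp (f : 𝔤 →ₗ[ℝ] 𝔮) (γ : Module.Dual ℝ 𝔮) :
    ∑ l, γ (e l) • wd.connForm (e.dualBasis l ∘ₗ f) = wd.connForm (γ ∘ₗ f) := by
  simp only [dual_comp_eq_sum e γ f, map_sum, map_smul]

theorem sum_smul_curvForm_dualBasis_comp (f : 𝔤 →ₗ[ℝ] 𝔮) (γ : Module.Dual ℝ 𝔮) :
    ∑ l, γ (e l) • wd.curvForm (e.dualBasis l ∘ₗ f) = wd.curvForm (γ ∘ₗ f) := by
  simp only [dual_comp_eq_sum e γ f, map_sum, map_smul]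

theorem sum_sum_smul_connForm_mul_connForm (f : 𝔤 →ₗ[ℝ] 𝔮) (β : 𝔮 →ₗ[ℝ] 𝔮 →ₗ[ℝ] ℝ) :
    ∑ l, ∑ m, β (e l) (e m) •
        (wd.connForm (e.dualBasis l ∘ₗ f) * wd.connForm (e.dualBasis m ∘ₗ f)) =
      ∑ i, ∑ j, β (f (b i)) (f (b j)) • (wd.θ i * wd.θ j) := by
  calc
    _ = ∑ l, wd.connForm (e.dualBasis l ∘ₗ f) * wd.connForm (β (e l) ∘ₗ f) := by
      refine Finset.sum_congr rfl fun l _ => ?_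
      rw [← wd.sum_smul_connForm_dualBasis_comp (e := e) f (β (e l)), Finset.mul_sum]
      simp only [mul_smul_comm]
    _ = ∑ j, (∑ l, β.flip (f (b j)) (e l) • wd.connForm (e.dualBasis l ∘ₗ f)) * wd.θ j := by
      simp only [wd.connForm_apply (β _ ∘ₗ f), Finset.mul_sum, Finset.sum_mul, mul_smul_comm,
        smul_mul_assoc]
      exact Finset.sum_comm
    _ = ∑ j, ∑ i, β (f (b i)) (f (b j)) • (wd.θ i * wd.θ j) := by
      refine Finset.sum_congr rfl fun j _ => ?_
      rw [wd.sum_smul_connForm_dualBasis_comp f (β.flip (f (b j))), wd.connForm_apply,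
        Finset.sum_mul]
      simp only [smul_mul_assoc, LinearMap.comp_apply, LinearMap.flip_apply]
    _ = _ := Finset.sum_comm

end WeilData

/-- The morphism of Weil algebras `W_𝔮 → W_𝔤` induced by a morphism of Lie algebras `𝔤 → 𝔮`. -/
structure IsWeilMap {b : Module.Basis ι ℝ 𝔤} {bq : Module.Basis κ ℝ 𝔮} (wdG : WeilData ι b W)
    (wdQ : WeilData κ bq WQ) (π : 𝔤 →ₗ⁅ℝ⁆ 𝔮) (jW : WQ →ₐ[ℝ] W) : Prop where
  map_connForm : ∀ ζ, jW (wdQ.connForm ζ) = wdG.connForm (ζ ∘ₗ π)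
  map_curvForm : ∀ ζ, jW (wdQ.curvForm ζ) = wdG.curvForm (ζ ∘ₗ π)

namespace IsWeilMap

variable {b : Module.Basis ι ℝ 𝔤} {bq : Module.Basis κ ℝ 𝔮} {wdG : WeilData ι b W}
  {wdQ : WeilData κ bq WQ} {π : 𝔤 →ₗ⁅ℝ⁆ 𝔮} {jW : WQ →ₐ[ℝ] W}

theorem of_generators (hθ : ∀ k, jW (wdQ.θ k) = wdG.connForm (bq.dualBasis k ∘ₗ π))
    (hΩ : ∀ k, jW (wdQ.Ω k) = wdG.curvForm (bq.dualBasis k ∘ₗ π)) : IsWeilMap wdG wdQ π jW where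
  map_connForm ζ := by
    suffices h : jW.toLinearMap ∘ₗ wdQ.connForm =
        wdG.connForm ∘ₗ Module.Dual.transpose (π : 𝔤 →ₗ[ℝ] 𝔮) from LinearMap.congr_fun h ζ
    refine bq.dualBasis.ext fun k => ?_
    change jW (wdQ.connForm (bq.dualBasis k)) = wdG.connForm (bq.dualBasis k ∘ₗ π)
    rw [wdQ.connForm_dualBasis, hθ]
  map_curvForm ζ := by
    suffices h : jW.toLinearMap ∘ₗ wdQ.curvForm =
        wdG.curvForm ∘ₗ Module.Dual.transpose (π : 𝔤 →ₗ[ℝ] 𝔮) from LinearMap.congr_fun h ζ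
    refine bq.dualBasis.ext fun k => ?_
    change jW (wdQ.curvForm (bq.dualBasis k)) = wdG.curvForm (bq.dualBasis k ∘ₗ π)
    rw [wdQ.curvForm_dualBasis, hΩ]

theorem map_θ (h : IsWeilMap wdG wdQ π jW) (k : κ) :
    jW (wdQ.θ k) = wdG.connForm (bq.dualBasis k ∘ₗ π) := by
  rw [← wdQ.connForm_dualBasis, h.map_connForm]

theorem map_Ω (h : IsWeilMap wdG wdQ π jW) (k : κ) :
    jW (wdQ.Ω k) = wdG.curvForm (bq.dualBasis k ∘ₗ π) := by
  rw [← wdQ.curvForm_dualBasis, h.map_curvForm]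

theorem map_mem (h : IsWeilMap wdG wdQ π jW) {n : ℤ} {w : WQ} (hw : w ∈ wdQ.grading n) :
    jW w ∈ wdG.grading n := by
  refine algHom_map_mem_of_adjoin_eq_top wdQ.grading wdG.grading jW wdQ.adjoin_θ_Ω_eq_top ?_ hw
  rintro _ (⟨k, rfl⟩ | ⟨k, rfl⟩)
  · exact ⟨1, wdQ.θ_mem k, h.map_θ k ▸ wdG.connForm_mem _⟩
  · exact ⟨2, wdQ.Ω_mem k, h.map_Ω k ▸ wdG.curvForm_mem _⟩

theorem map_d_connForm (h : IsWeilMap wdG wdQ π jW) (ζ : Module.Dual ℝ 𝔮) :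
    jW (wdQ.d (wdQ.connForm ζ)) = wdG.d (wdG.connForm (ζ ∘ₗ π)) := by
  have hsum := wdG.sum_sum_smul_connForm_mul_connForm (e := bq) (π : 𝔤 →ₗ[ℝ] 𝔮)
    ((LieModule.toEnd ℝ 𝔮 𝔮 : 𝔮 →ₗ[ℝ] Module.End ℝ 𝔮).compr₂ ζ)
  simp only [LinearMap.compr₂_apply, LieHom.coe_toLinearMap, LieModule.toEnd_apply_apply] at hsum
  simp only [wdQ.d_connForm, wdG.d_connForm, map_sub, map_smul, map_sum, map_mul, h.map_curvForm,
    h.map_θ, hsum, LinearMap.comp_apply, LieHom.coe_toLinearMap, LieHom.map_lie]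

theorem intertwines_of_connForm (h : IsWeilMap wdG wdQ π jW) {k : ℤ} {δQ : Module.End ℝ WQ}
    {δG : Module.End ℝ W}
    (hδQ : IsSuperDerivation wdQ.grading k δQ) (hδG : IsSuperDerivation wdG.grading k δG)
    (hconn : ∀ ζ, jW (δQ (wdQ.connForm ζ)) = δG (wdG.connForm (ζ ∘ₗ π)))
    (hd : ∀ ζ, jW (δQ (wdQ.d (wdQ.connForm ζ))) = δG (wdG.d (wdG.connForm (ζ ∘ₗ π)))) (w : WQ) :
    jW (δQ w) = δG (jW w) := by
  refine hδQ.comp_eqOn_adjoin hδG wdQ.one_mem wdG.one_mem jW ?_ ?_ w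
    (wdQ.adjoin_connForm_d_connForm_eq_top ▸ Algebra.mem_top)
  · rintro _ (⟨ζ, rfl⟩ | ⟨ζ, rfl⟩)
    · exact ⟨1, wdQ.connForm_mem ζ, h.map_mem (wdQ.connForm_mem ζ)⟩
    · exact ⟨1 + 1, wdQ.d_mem (wdQ.connForm_mem ζ), h.map_mem (wdQ.d_mem (wdQ.connForm_mem ζ))⟩
  · rintro _ (⟨ζ, rfl⟩ | ⟨ζ, rfl⟩)
    · rw [hconn, h.map_connForm]
    · rw [hd, h.map_d_connForm]

theorem map_d (h : IsWeilMap wdG wdQ π jW) (w : WQ) : jW (wdQ.d w) = wdG.d (jW w) := by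
  have hQ := LinearMap.congr_fun wdQ.d_sq
  have hG := LinearMap.congr_fun wdG.d_sq
  simp only [LinearMap.comp_apply, LinearMap.zero_apply] at hQ hG
  exact h.intertwines_of_connForm wdQ.isSuperDerivation_d wdG.isSuperDerivation_d h.map_d_connForm
    (fun ζ => by rw [hQ, hG, map_zero]) w

theorem map_L_connForm (h : IsWeilMap wdG wdQ π jW) (X : 𝔤) (ζ : Module.Dual ℝ 𝔮) :
    jW (wdQ.L (π X) (wdQ.connForm ζ)) = wdG.L X (wdG.connForm (ζ ∘ₗ π)) := by
  have hcomp : (ζ ∘ₗ LieAlgebra.ad ℝ 𝔮 (π X)) ∘ₗ (π : 𝔤 →ₗ[ℝ] 𝔮) =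
      (ζ ∘ₗ (π : 𝔤 →ₗ[ℝ] 𝔮)) ∘ₗ LieAlgebra.ad ℝ 𝔤 X := by
    ext Y
    simp
  rw [wdQ.L_connForm, wdG.L_connForm, map_neg, h.map_connForm, hcomp]

theorem map_L (h : IsWeilMap wdG wdQ π jW) (X : 𝔤) (w : WQ) :
    jW (wdQ.L (π X) w) = wdG.L X (jW w) := by
  have hQ (v : WQ) : wdQ.L (π X) (wdQ.d v) = wdQ.d (wdQ.L (π X) v) :=
    LinearMap.congr_fun (wdQ.L_d (π X)) v
  have hG (v : W) : wdG.L X (wdG.d v) = wdG.d (wdG.L X v) := LinearMap.congr_fun (wdG.L_d X) v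
  exact h.intertwines_of_connForm (wdQ.isSuperDerivation_L _) (wdG.isSuperDerivation_L X)
    (h.map_L_connForm X) (fun ζ => by rw [hQ, hG, h.map_d, h.map_L_connForm]) w

theorem map_I_connForm (X : 𝔤) (ζ : Module.Dual ℝ 𝔮) :
    jW (wdQ.I (π X) (wdQ.connForm ζ)) = wdG.I X (wdG.connForm (ζ ∘ₗ π)) := by
  rw [wdQ.I_connForm, wdG.I_connForm, map_smul, map_one, LinearMap.comp_apply,
    LieHom.coe_toLinearMap]

theorem map_I (h : IsWeilMap wdG wdQ π jW) (X : 𝔤) (w : WQ) :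
    jW (wdQ.I (π X) w) = wdG.I X (jW w) := by
  have hQ (v : WQ) : wdQ.I (π X) (wdQ.d v) = wdQ.L (π X) v - wdQ.d (wdQ.I (π X) v) :=
    eq_sub_of_add_eq (LinearMap.congr_fun (wdQ.cartan (π X)) v)
  have hG (v : W) : wdG.I X (wdG.d v) = wdG.L X v - wdG.d (wdG.I X v) :=
    eq_sub_of_add_eq (LinearMap.congr_fun (wdG.cartan X) v)
  have hconn := map_I_connForm (wdG := wdG) (wdQ := wdQ) (π := π) (jW := jW) X
  exact h.intertwines_of_connForm (wdQ.isSuperDerivation_I _) (wdG.isSuperDerivation_I X) hconn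
    (fun ζ => by rw [hQ, hG, map_sub, h.map_L_connForm, h.map_d, hconn]) w

theorem injective (h : IsWeilMap wdG wdQ π jW) (hπ : Function.Surjective π) :
    Function.Injective jW := by
  obtain ⟨s, hs⟩ := (π : 𝔤 →ₗ[ℝ] 𝔮).exists_rightInverse_of_surjective (LinearMap.range_eq_top.2 hπ)
  have hfam : IsWeilFamily (fun i => wdQ.connForm (b.dualBasis i ∘ₗ s))
      (fun i => wdQ.curvForm (b.dualBasis i ∘ₗ s)) :=
    wdQ.toOperation.isWeilFamily (fun _ => wdQ.connForm_mem _) fun _ => wdQ.curvForm_mem _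
  have hconn (η : Module.Dual ℝ 𝔤) : wdG.lift hfam (wdG.connForm η) = wdQ.connForm (η ∘ₗ s) := by
    simp only [wdG.connForm_apply, map_sum, map_smul, wdG.lift_θ,
      wdQ.sum_smul_connForm_dualBasis_comp]
  have hcurv (η : Module.Dual ℝ 𝔤) : wdG.lift hfam (wdG.curvForm η) = wdQ.curvForm (η ∘ₗ s) := by
    simp only [wdG.curvForm_apply, map_sum, map_smul, wdG.lift_Ω,
      wdQ.sum_smul_curvForm_dualBasis_comp]
  suffices hleft : (wdG.lift hfam).comp jW = AlgHom.id ℝ WQ from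
    Function.LeftInverse.injective (g := wdG.lift hfam) (AlgHom.congr_fun hleft)
  refine AlgHom.ext_of_adjoin_eq_top wdQ.adjoin_θ_Ω_eq_top ?_
  rintro _ (⟨k, rfl⟩ | ⟨k, rfl⟩)
  · rw [AlgHom.comp_apply, h.map_θ, hconn, LinearMap.comp_assoc, hs, LinearMap.comp_id,
      wdQ.connForm_dualBasis, AlgHom.id_apply]
  · rw [AlgHom.comp_apply, h.map_Ω, hcurv, LinearMap.comp_assoc, hs, LinearMap.comp_id,
      wdQ.curvForm_dualBasis, AlgHom.id_apply]

end IsWeilMap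

section GradedTensor

open GradedTensorProduct

variable {A₁ A₂ : Type} [Ring A₁] [Algebra ℝ A₁] [Ring A₂] [Algebra ℝ A₂]
  (𝒜 : ℤ → Submodule ℝ A₁) (ℬ : ℤ → Submodule ℝ A₂) [GradedAlgebra 𝒜] [GradedAlgebra ℬ]

/-- The total grading of a graded tensor product. -/
def tensorGrading (n : ℤ) : Submodule ℝ (𝒜 ᵍ⊗[ℝ] ℬ) :=
  (⨆ p : ℤ, LinearMap.range (TensorProduct.map (𝒜 p).subtype (ℬ (n - p)).subtype)).map
    (of ℝ 𝒜 ℬ).toLinearMap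

variable {𝒜 ℬ}

theorem tmul_mem_tensorGrading {p q : ℤ} {a : A₁} {c : A₂} (ha : a ∈ 𝒜 p) (hc : c ∈ ℬ q) :
    (a ᵍ⊗ₜ[ℝ] c : 𝒜 ᵍ⊗[ℝ] ℬ) ∈ tensorGrading 𝒜 ℬ (p + q) :=
  ⟨a ⊗ₜ c, Submodule.mem_iSup_of_mem p
    ⟨(⟨a, ha⟩ : 𝒜 p) ⊗ₜ (⟨c, by simpa using hc⟩ : ℬ (p + q - p)), rfl⟩, rfl⟩

theorem tensorGrading_induction {n : ℤ} {motive : 𝒜 ᵍ⊗[ℝ] ℬ → Prop}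
    (tmul : ∀ p q a c, p + q = n → a ∈ 𝒜 p → c ∈ ℬ q → motive (a ᵍ⊗ₜ[ℝ] c))
    (add : ∀ x y, motive x → motive y → motive (x + y)) {x : 𝒜 ᵍ⊗[ℝ] ℬ}
    (hx : x ∈ tensorGrading 𝒜 ℬ n) : motive x := by
  have hzero : motive 0 := by
    simpa only [GradedTensorProduct.tmul, TensorProduct.zero_tmul, map_zero] using
      tmul n 0 0 0 (add_zero n) (Submodule.zero_mem _) (Submodule.zero_mem _)
  obtain ⟨x, hx, rfl⟩ := hx
  refine Submodule.iSup_induction _ (motive := fun x => motive (of ℝ 𝒜 ℬ x)) hx ?_ hzero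
    fun x y hx hy => map_add (of ℝ 𝒜 ℬ) x y ▸ add _ _ hx hy
  rintro p _ ⟨z, rfl⟩
  induction z using TensorProduct.induction_on with
  | zero => simpa using hzero
  | tmul a c => exact tmul p (n - p) a c (by ring) a.2 c.2
  | add z w hz hw => simpa only [map_add] using add _ _ hz hw

theorem homogeneous_tmul_induction {motive : 𝒜 ᵍ⊗[ℝ] ℬ → Prop}
    (tmul : ∀ p q a c, a ∈ 𝒜 p → c ∈ ℬ q → motive (a ᵍ⊗ₜ[ℝ] c))
    (add : ∀ x y, motive x → motive y → motive (x + y)) (x : 𝒜 ᵍ⊗[ℝ] ℬ) : motive x := by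
  have hzero : motive 0 := by
    simpa only [GradedTensorProduct.tmul, TensorProduct.zero_tmul, map_zero] using
      tmul 0 0 0 0 (Submodule.zero_mem _) (Submodule.zero_mem _)
  change motive (of ℝ 𝒜 ℬ x)
  induction x using TensorProduct.induction_on with
  | zero => simpa using hzero
  | tmul a c =>
    induction a using DirectSum.Decomposition.inductionOn 𝒜 with
    | zero => simpa using hzero
    | add a a' ha ha' => simpa only [TensorProduct.add_tmul, map_add] using add _ _ ha ha'
    | homogeneous a =>
      induction c using DirectSum.Decomposition.inductionOn ℬ with
      | zero => simpa using hzero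
      | add c c' hc hc' => simpa only [TensorProduct.tmul_add, map_add] using add _ _ hc hc'
      | homogeneous c => exact tmul _ _ _ _ a.2 c.2
  | add z w hz hw => simpa only [map_add] using add _ _ hz hw

theorem zsmul_tmul (z : ℤ) (a : A₁) (c : A₂) :
    ((z • a) ᵍ⊗ₜ[ℝ] c : 𝒜 ᵍ⊗[ℝ] ℬ) = z • (a ᵍ⊗ₜ[ℝ] c) := by
  rw [GradedTensorProduct.tmul, ← TensorProduct.smul_tmul', map_zsmul]

theorem tmul_zsmul (z : ℤ) (a : A₁) (c : A₂) :
    (a ᵍ⊗ₜ[ℝ] (z • c) : 𝒜 ᵍ⊗[ℝ] ℬ) = z • (a ᵍ⊗ₜ[ℝ] c) := by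
  rw [GradedTensorProduct.tmul, TensorProduct.tmul_smul, map_zsmul]

theorem add_tmul (a a' : A₁) (c : A₂) :
    ((a + a') ᵍ⊗ₜ[ℝ] c : 𝒜 ᵍ⊗[ℝ] ℬ) = a ᵍ⊗ₜ[ℝ] c + a' ᵍ⊗ₜ[ℝ] c := by
  rw [GradedTensorProduct.tmul, TensorProduct.add_tmul, map_add]

theorem tmul_add (a : A₁) (c c' : A₂) :
    (a ᵍ⊗ₜ[ℝ] (c + c') : 𝒜 ᵍ⊗[ℝ] ℬ) = a ᵍ⊗ₜ[ℝ] c + a ᵍ⊗ₜ[ℝ] c' := by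
  rw [GradedTensorProduct.tmul, TensorProduct.tmul_add, map_add]

theorem zero_tmul (c : A₂) : ((0 : A₁) ᵍ⊗ₜ[ℝ] c : 𝒜 ᵍ⊗[ℝ] ℬ) = 0 := by
  rw [GradedTensorProduct.tmul, TensorProduct.zero_tmul, map_zero]

theorem tmul_zero (a : A₁) : (a ᵍ⊗ₜ[ℝ] (0 : A₂) : 𝒜 ᵍ⊗[ℝ] ℬ) = 0 := by
  rw [GradedTensorProduct.tmul, TensorProduct.tmul_zero, map_zero]

theorem tmul_mul_tmul {i j : ℤ} (a : A₁) {c : A₂} (hc : c ∈ ℬ j) {a' : A₁} (ha' : a' ∈ 𝒜 i)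
    (c' : A₂) : (a ᵍ⊗ₜ[ℝ] c * a' ᵍ⊗ₜ[ℝ] c' : 𝒜 ᵍ⊗[ℝ] ℬ) =
      sgn (j * i) • ((a * a') ᵍ⊗ₜ[ℝ] (c * c')) := by
  rw [sgn_eq_negOnePow]
  exact tmul_coe_mul_coe_tmul 𝒜 ℬ a ⟨c, hc⟩ ⟨a', ha'⟩ c'

theorem tensorGrading_supercomm
    (h𝒜 : ∀ {m n : ℤ} {a b : A₁}, a ∈ 𝒜 m → b ∈ 𝒜 n → a * b = sgn (m * n) • (b * a))
    (hℬ : ∀ {m n : ℤ} {a b : A₂}, a ∈ ℬ m → b ∈ ℬ n → a * b = sgn (m * n) • (b * a)) {m n : ℤ}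
    {x y : 𝒜 ᵍ⊗[ℝ] ℬ} (hx : x ∈ tensorGrading 𝒜 ℬ m) (hy : y ∈ tensorGrading 𝒜 ℬ n) :
    x * y = sgn (m * n) • (y * x) := by
  refine tensorGrading_induction (motive := fun x => x * y = sgn (m * n) • (y * x)) ?_
    (fun x x' h h' => ?_) hx
  · rintro p q a c rfl ha hc
    refine tensorGrading_induction
      (motive := fun y => a ᵍ⊗ₜ[ℝ] c * y = sgn ((p + q) * n) • (y * a ᵍ⊗ₜ[ℝ] c)) ?_
      (fun y y' h h' => ?_) hy
    · rintro p' q' a' c' rfl ha' hc'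
      rw [tmul_mul_tmul a hc ha', tmul_mul_tmul a' hc' ha, h𝒜 ha ha', hℬ hc hc']
      simp only [zsmul_tmul, tmul_zsmul, smul_smul, add_mul, mul_add, sgn_add, mul_comm q' p]
      congr 1
      linear_combination -(sgn (q * p') * sgn (p * p') * sgn (q * q')) * sgn_mul_self (p * q')
    · rw [mul_add, add_mul y, smul_add, h, h']
  · rw [add_mul, mul_add, smul_add, h, h']

theorem one_mem_tensorGrading : (1 : 𝒜 ᵍ⊗[ℝ] ℬ) ∈ tensorGrading 𝒜 ℬ 0 := by
  have h : ((1 : A₁) ᵍ⊗ₜ[ℝ] (1 : A₂) : 𝒜 ᵍ⊗[ℝ] ℬ) ∈ tensorGrading 𝒜 ℬ (0 + 0) :=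
    tmul_mem_tensorGrading SetLike.GradedOne.one_mem SetLike.GradedOne.one_mem
  rwa [add_zero] at h

theorem mul_mem_tensorGrading {m n : ℤ} {x y : 𝒜 ᵍ⊗[ℝ] ℬ} (hx : x ∈ tensorGrading 𝒜 ℬ m)
    (hy : y ∈ tensorGrading 𝒜 ℬ n) : x * y ∈ tensorGrading 𝒜 ℬ (m + n) := by
  refine tensorGrading_induction (motive := fun x => x * y ∈ tensorGrading 𝒜 ℬ (m + n)) ?_
    (fun x x' h h' => add_mul x x' y ▸ add_mem h h') hx
  rintro p q a c rfl ha hc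
  refine tensorGrading_induction
    (motive := fun y => a ᵍ⊗ₜ[ℝ] c * y ∈ tensorGrading 𝒜 ℬ (p + q + n)) ?_
    (fun y y' h h' => mul_add (a ᵍ⊗ₜ[ℝ] c) y y' ▸ add_mem h h') hy
  rintro p' q' a' c' rfl ha' hc'
  rw [tmul_mul_tmul a hc ha', add_add_add_comm]
  exact zsmul_mem (tmul_mem_tensorGrading (SetLike.mul_mem_graded ha ha')
    (SetLike.mul_mem_graded hc hc')) _

variable (𝒜 ℬ)

/-- The operator `f ⊗ 1 + σ ⊗ g` on a graded tensor product: the superderivation extending `f` and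
`g` when `σ` is the Koszul sign operator of their degree. -/
def tensorDeriv (σ f : Module.End ℝ A₁) (g : Module.End ℝ A₂) : Module.End ℝ (𝒜 ᵍ⊗[ℝ] ℬ) :=
  (of ℝ 𝒜 ℬ).conj (LinearMap.rTensor A₂ f + TensorProduct.map σ g)

/-- The operator of multiplication by the degree. -/
def degreeOp : Module.End ℝ A₁ :=
  DirectSum.toModule ℝ ℤ A₁ (fun n => (n : ℝ) • (𝒜 n).subtype) ∘ₗ
    (DirectSum.decomposeLinearEquiv 𝒜).toLinearMap

/-- `σ` is the Koszul sign operator for commuting past an operator of degree `k`. -/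
def IsSignOp (k : ℤ) (σ : Module.End ℝ A₁) : Prop :=
  ∀ n, ∀ a ∈ 𝒜 n, σ a = sgn (k * n) • a

variable {𝒜 ℬ} {σ σ' f f' : Module.End ℝ A₁} {g g' : Module.End ℝ A₂} {k l : ℤ}

theorem tensorDeriv_tmul (a : A₁) (c : A₂) :
    tensorDeriv 𝒜 ℬ σ f g (a ᵍ⊗ₜ[ℝ] c) = f a ᵍ⊗ₜ[ℝ] c + σ a ᵍ⊗ₜ[ℝ] g c := rfl

theorem tensorDeriv_zero : tensorDeriv 𝒜 ℬ σ 0 0 = 0 := by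
  simp [tensorDeriv]

theorem tensorDeriv_add :
    tensorDeriv 𝒜 ℬ σ (f + f') (g + g') = tensorDeriv 𝒜 ℬ σ f g + tensorDeriv 𝒜 ℬ σ f' g' := by
  simp only [tensorDeriv, LinearMap.rTensor_add, TensorProduct.map_add_right, map_add]
  abel

theorem tensorDeriv_smul (r : ℝ) :
    tensorDeriv 𝒜 ℬ σ (r • f) (r • g) = r • tensorDeriv 𝒜 ℬ σ f g := by
  simp only [tensorDeriv, LinearMap.rTensor_smul, TensorProduct.map_smul_right, map_smul, map_add,
    smul_add]

theorem degreeOp_apply_of_mem {n : ℤ} {a : A₁} (ha : a ∈ 𝒜 n) : degreeOp 𝒜 a = (n : ℝ) • a := by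
  change DirectSum.toModule ℝ ℤ A₁ _ (DirectSum.decompose 𝒜 a) = _
  rw [DirectSum.decompose_of_mem 𝒜 ha, ← DirectSum.lof_eq_of ℝ, DirectSum.toModule_lof]
  rfl

theorem tensorDeriv_degreeOp_apply_of_mem {n : ℤ} {x : 𝒜 ᵍ⊗[ℝ] ℬ} (hx : x ∈ tensorGrading 𝒜 ℬ n) :
    tensorDeriv 𝒜 ℬ 1 (degreeOp 𝒜) (degreeOp ℬ) x = (n : ℝ) • x := by
  refine tensorGrading_induction
    (motive := fun x => tensorDeriv 𝒜 ℬ 1 (degreeOp 𝒜) (degreeOp ℬ) x = (n : ℝ) • x) ?_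
    (fun x y hx hy => by rw [map_add, smul_add, hx, hy]) hx
  rintro p q a c rfl ha hc
  rw [tensorDeriv_tmul, degreeOp_apply_of_mem ha, degreeOp_apply_of_mem hc, Module.End.one_apply,
    Int.cast_add, add_smul, GradedTensorProduct.tmul, ← TensorProduct.smul_tmul', map_smul,
    GradedTensorProduct.tmul, TensorProduct.tmul_smul, map_smul]

theorem isInternal_tensorGrading : DirectSum.IsInternal (tensorGrading 𝒜 ℬ) := by
  refine DirectSum.isInternal_submodule_of_iSupIndep_of_iSup_eq_top ?_ ?_
  · have hind := (Module.End.eigenspaces_iSupIndep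
      (tensorDeriv 𝒜 ℬ 1 (degreeOp 𝒜) (degreeOp ℬ))).comp Int.cast_injective
    exact hind.mono fun n x hx =>
      Module.End.mem_eigenspace_iff.2 (tensorDeriv_degreeOp_apply_of_mem hx)
  · refine eq_top_iff.2 fun x _ => homogeneous_tmul_induction (fun p q a c ha hc => ?_)
      (fun _ _ => add_mem) x
    exact Submodule.mem_iSup_of_mem _ (tmul_mem_tensorGrading ha hc)

instance : GradedAlgebra (tensorGrading 𝒜 ℬ) where
  one_mem := one_mem_tensorGrading
  mul_mem _ _ _ _ hx hy := mul_mem_tensorGrading hx hy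
  toDecomposition := isInternal_tensorGrading.chooseDecomposition

theorem tensorDeriv_tmul_mul_tmul (hσ : IsSignOp 𝒜 k σ) (hf : IsSuperDerivation 𝒜 k f)
    (hg : IsSuperDerivation ℬ k g) {p q p' : ℤ} {a a' : A₁} {c : A₂} (ha : a ∈ 𝒜 p) (hc : c ∈ ℬ q)
    (ha' : a' ∈ 𝒜 p') (c' : A₂) :
    tensorDeriv 𝒜 ℬ σ f g (a ᵍ⊗ₜ[ℝ] c * a' ᵍ⊗ₜ[ℝ] c') =
      tensorDeriv 𝒜 ℬ σ f g (a ᵍ⊗ₜ[ℝ] c) * a' ᵍ⊗ₜ[ℝ] c' +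
        sgn (k * (p + q)) • (a ᵍ⊗ₜ[ℝ] c * tensorDeriv 𝒜 ℬ σ f g (a' ᵍ⊗ₜ[ℝ] c')) := by
  have hmul (z : ℤ) (x y : 𝒜 ᵍ⊗[ℝ] ℬ) : x * z • y = z • (x * y) :=
    map_zsmul (AddMonoidHom.mulLeft x) z y
  simp only [tmul_mul_tmul _ hc ha', tmul_mul_tmul _ (hg.map_mem hc) ha',
    tmul_mul_tmul _ hc (hf.map_mem ha'), tensorDeriv_tmul, map_zsmul, hf.map_mul ha,
    hg.map_mul hc, hσ p a ha, hσ p' a' ha', hσ _ _ (SetLike.mul_mem_graded ha ha'), add_tmul,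
    tmul_add, zsmul_tmul, tmul_zsmul, add_mul, mul_add, smul_add, smul_smul, smul_mul_assoc,
    hmul, sgn_add, mul_comm q k]
  rcases sgn_eq_one_or_neg_one (k * q) with hkq | hkq <;> simp only [hkq] <;> module

theorem isSuperDerivation_tensorDeriv (hσ : IsSignOp 𝒜 k σ) (hf : IsSuperDerivation 𝒜 k f)
    (hg : IsSuperDerivation ℬ k g) :
    IsSuperDerivation (tensorGrading 𝒜 ℬ) k (tensorDeriv 𝒜 ℬ σ f g) where
  map_mem {n _} hx := by
    refine tensorGrading_induction
      (motive := fun x => tensorDeriv 𝒜 ℬ σ f g x ∈ tensorGrading 𝒜 ℬ (n + k)) ?_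
      (fun x y hx hy => map_add (tensorDeriv 𝒜 ℬ σ f g) x y ▸ add_mem hx hy) hx
    rintro p q a c rfl ha hc
    rw [tensorDeriv_tmul, hσ p a ha]
    refine add_mem ?_ ?_
    · rw [add_right_comm]
      exact tmul_mem_tensorGrading (hf.map_mem ha) hc
    · rw [add_assoc]
      exact tmul_mem_tensorGrading (zsmul_mem ha _) (hg.map_mem hc)
  map_mul {n _} hx y := by
    refine tensorGrading_induction (motive := fun x => tensorDeriv 𝒜 ℬ σ f g (x * y) =
      tensorDeriv 𝒜 ℬ σ f g x * y + sgn (k * n) • (x * tensorDeriv 𝒜 ℬ σ f g y)) ?_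
      (fun x x' hx hx' => ?_) hx
    · rintro p q a c rfl ha hc
      induction y using homogeneous_tmul_induction with
      | tmul p' _ a' c' ha' _ => exact tensorDeriv_tmul_mul_tmul hσ hf hg ha hc ha' c'
      | add y y' hy hy' =>
        simp only [mul_add, map_add, hy, hy', smul_add]
        abel
    · simp only [add_mul, map_add, hx, hx', smul_add]
      abel

theorem superBracket_tensorDeriv (hσ : IsSignOp 𝒜 k σ) (hσ' : IsSignOp 𝒜 l σ')
    (hf : IsSuperDerivation 𝒜 k f) (hf' : IsSuperDerivation 𝒜 l f') :
    superBracket k l (tensorDeriv 𝒜 ℬ σ f g) (tensorDeriv 𝒜 ℬ σ' f' g') =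
      tensorDeriv 𝒜 ℬ (σ * σ') (superBracket k l f f') (superBracket k l g g') := by
  refine LinearMap.ext fun x => ?_
  induction x using homogeneous_tmul_induction with
  | tmul p _ a c ha _ =>
    simp only [superBracket_apply, tensorDeriv_tmul, Module.End.mul_apply]
    simp only [hσ p a ha, hσ' p a ha, map_add, map_zsmul, zsmul_tmul, tensorDeriv_tmul,
      hσ' _ _ (hf.map_mem ha), hσ _ _ (hf'.map_mem ha), sub_eq_add_neg, ← neg_smul, add_tmul,
      tmul_add, tmul_zsmul, smul_add, smul_smul, mul_add, sgn_add, mul_comm l k]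
    rcases sgn_eq_one_or_neg_one (k * l) with hkl | hkl <;> simp only [hkl] <;> module
  | add x y hx hy => simp only [map_add, hx, hy]

end GradedTensor

section OperationTensor

open GradedTensorProduct

variable {A₁ A₂ : Type} [Ring A₁] [Algebra ℝ A₁] [Ring A₂] [Algebra ℝ A₂]

namespace Operation

theorem superBracket_d_d (op : Operation 𝔤 A) : superBracket 1 1 op.d op.d = 0 := by
  refine LinearMap.ext fun x => ?_
  have hd : op.d (op.d x) = 0 := LinearMap.congr_fun op.d_sq x
  simp [superBracket_apply, hd]

theorem superBracket_L_L (op : Operation 𝔤 A) (X Y : 𝔤) :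
    superBracket 0 0 (op.L X) (op.L Y) = op.L ⁅X, Y⁆ := by
  rw [superBracket, mul_zero, sgn_zero, one_smul, op.L_bracket]
  rfl

theorem superBracket_L_d (op : Operation 𝔤 A) (X : 𝔤) : superBracket 0 1 (op.L X) op.d = 0 := by
  rw [superBracket, zero_mul, sgn_zero, one_smul]
  exact sub_eq_zero.2 (op.L_d X)

theorem superBracket_L_I (op : Operation 𝔤 A) (X Y : 𝔤) :
    superBracket 0 (-1) (op.L X) (op.I Y) = op.I ⁅X, Y⁆ := by
  rw [superBracket, zero_mul, sgn_zero, one_smul, ← op.L_I]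
  rfl

theorem superBracket_I_I (op : Operation 𝔤 A) (X Y : 𝔤) :
    superBracket (-1) (-1) (op.I X) (op.I Y) = 0 := by
  rw [superBracket, neg_mul_neg, mul_one, sgn_one, neg_one_smul, sub_neg_eq_add]
  exact op.I_I X Y

theorem superBracket_I_d (op : Operation 𝔤 A) (X : 𝔤) :
    superBracket (-1) 1 (op.I X) op.d = op.L X := by
  rw [superBracket, mul_one, sgn_neg, sgn_one, neg_one_smul, sub_neg_eq_add]
  exact op.cartan X

/-- An operation assembled from superderivations whose supercommutators satisfy Cartan's
relations. -/
def ofSuperBracket {𝒜 : ℤ → Submodule ℝ A} [GradedAlgebra 𝒜] {d : Module.End ℝ A}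
    {L I : 𝔤 →ₗ[ℝ] Module.End ℝ A}
    (comm : ∀ {m n : ℤ} {a b : A}, a ∈ 𝒜 m → b ∈ 𝒜 n → a * b = sgn (m * n) • (b * a))
    (hd : IsSuperDerivation 𝒜 1 d) (hL : ∀ X, IsSuperDerivation 𝒜 0 (L X))
    (hI : ∀ X, IsSuperDerivation 𝒜 (-1) (I X)) (d_d : superBracket 1 1 d d = 0)
    (L_L : ∀ X Y, superBracket 0 0 (L X) (L Y) = L ⁅X, Y⁆)
    (L_d : ∀ X, superBracket 0 1 (L X) d = 0)
    (I_I : ∀ X Y, superBracket (-1) (-1) (I X) (I Y) = 0)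
    (L_I : ∀ X Y, superBracket 0 (-1) (L X) (I Y) = I ⁅X, Y⁆)
    (I_d : ∀ X, superBracket (-1) 1 (I X) d = L X) : Operation 𝔤 A where
  grading := 𝒜
  decomposition := inferInstance
  one_mem := SetLike.GradedOne.one_mem
  mul_mem ha hb := SetLike.mul_mem_graded ha hb
  supercomm := comm
  d := d
  d_mem := hd.map_mem
  d_mul ha b := by rw [hd.map_mul ha, one_mul]
  d_sq := by
    have : IsAddTorsionFree (Module.End ℝ A) := .of_isTorsionFree ℝ _
    rw [superBracket, mul_one, sgn_one, neg_one_smul, sub_neg_eq_add] at d_d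
    exact self_eq_neg.1 (eq_neg_of_add_eq_zero_left d_d)
  L := L
  L_mem X _ _ ha := by simpa only [add_zero] using (hL X).map_mem ha
  L_mul X a b := by
    induction a using DirectSum.Decomposition.inductionOn 𝒜 with
    | zero => simp
    | homogeneous a => rw [(hL X).map_mul a.2, zero_mul, sgn_zero, one_smul]
    | add a a' ha ha' => rw [add_mul, map_add, ha, ha', map_add, add_mul, add_mul]; abel
  L_bracket X Y := by
    rw [← L_L, superBracket, mul_zero, sgn_zero, one_smul]
    rfl
  L_d X := by
    have h := L_d X
    rwa [superBracket, zero_mul, sgn_zero, one_smul, sub_eq_zero] at h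
  I := I
  I_mem X _ _ ha := (hI X).map_mem ha
  I_mul X _ _ ha b := by rw [(hI X).map_mul ha, neg_one_mul, sgn_neg]
  I_I X Y := by
    have h := I_I X Y
    rwa [superBracket, neg_mul_neg, mul_one, sgn_one, neg_one_smul, sub_neg_eq_add] at h
  L_I X Y := by
    rw [← L_I, superBracket, zero_mul, sgn_zero, one_smul]
    rfl
  cartan X := by
    rw [← I_d, superBracket, mul_one, sgn_neg, sgn_one, neg_one_smul, sub_neg_eq_add]
    rfl

end Operation

namespace IsSignOp

variable {𝒜 : ℤ → Submodule ℝ A} {k : ℤ} {σ : Module.End ℝ A}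

protected theorem one (hk : Even k) : IsSignOp 𝒜 k 1 := fun n a _ => by
  rw [sgn, if_pos (hk.mul_right n), one_smul, Module.End.one_apply]

protected theorem neg (hσ : IsSignOp 𝒜 k σ) : IsSignOp 𝒜 (-k) σ := fun n a ha => by
  rw [hσ n a ha, neg_mul, sgn_neg]

theorem map_one (hσ : IsSignOp 𝒜 k σ) (h : (1 : A) ∈ 𝒜 0) : σ 1 = 1 := by
  rw [hσ 0 1 h, mul_zero, sgn_zero, one_smul]

theorem mul_self [DirectSum.Decomposition 𝒜] (hσ : IsSignOp 𝒜 k σ) : σ * σ = 1 := by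
  refine LinearMap.ext fun a => ?_
  induction a using DirectSum.Decomposition.inductionOn 𝒜 with
  | zero => simp
  | homogeneous a =>
    rw [Module.End.mul_apply, hσ _ _ a.2, map_zsmul, hσ _ _ a.2, smul_smul, sgn_mul_self, one_smul,
      Module.End.one_apply]
  | add a b ha hb => rw [map_add, map_add, ha, hb]

end IsSignOp

namespace Operation

variable (op₁ : Operation 𝔤 A₁) (op₂ : Operation 𝔤 A₂) {ε : Module.End ℝ A₁}

/-- The linear map `X ↦ f X ⊗ 1 + σ ⊗ g X`. -/
def tensorAction (σ : Module.End ℝ A₁) (f : 𝔤 →ₗ[ℝ] Module.End ℝ A₁)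
    (g : 𝔤 →ₗ[ℝ] Module.End ℝ A₂) :
    𝔤 →ₗ[ℝ] Module.End ℝ (op₁.grading ᵍ⊗[ℝ] op₂.grading) where
  toFun X := tensorDeriv op₁.grading op₂.grading σ (f X) (g X)
  map_add' X Y := by rw [map_add, map_add, tensorDeriv_add]
  map_smul' r X := by rw [map_smul, map_smul, tensorDeriv_smul, RingHom.id_apply]

/-- The tensor product of two operations, on the graded tensor product of the underlying algebras;
`ε` is the sign operator of the first factor. -/
def tensor (hε : IsSignOp op₁.grading 1 ε) : Operation 𝔤 (op₁.grading ᵍ⊗[ℝ] op₂.grading) :=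
  ofSuperBracket (𝒜 := tensorGrading op₁.grading op₂.grading)
    (d := tensorDeriv op₁.grading op₂.grading ε op₁.d op₂.d)
    (L := tensorAction op₁ op₂ 1 op₁.L op₂.L) (I := tensorAction op₁ op₂ ε op₁.I op₂.I)
    (tensorGrading_supercomm op₁.supercomm op₂.supercomm)
    (isSuperDerivation_tensorDeriv hε op₁.isSuperDerivation_d op₂.isSuperDerivation_d)
    (fun X => isSuperDerivation_tensorDeriv (.one .zero) (op₁.isSuperDerivation_L X)
      (op₂.isSuperDerivation_L X))
    (fun X => isSuperDerivation_tensorDeriv hε.neg (op₁.isSuperDerivation_I X)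
      (op₂.isSuperDerivation_I X))
    (by rw [superBracket_tensorDeriv hε hε op₁.isSuperDerivation_d op₁.isSuperDerivation_d,
      superBracket_d_d, superBracket_d_d, tensorDeriv_zero])
    (fun X Y => (superBracket_tensorDeriv (.one .zero) (.one .zero) (op₁.isSuperDerivation_L X)
      (op₁.isSuperDerivation_L Y)).trans (by rw [superBracket_L_L, superBracket_L_L]; rfl))
    (fun X => (superBracket_tensorDeriv (.one .zero) hε (op₁.isSuperDerivation_L X)
      op₁.isSuperDerivation_d).trans
      (by rw [superBracket_L_d, superBracket_L_d, tensorDeriv_zero]))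
    (fun X Y => (superBracket_tensorDeriv hε.neg hε.neg (op₁.isSuperDerivation_I X)
      (op₁.isSuperDerivation_I Y)).trans
      (by rw [superBracket_I_I, superBracket_I_I, tensorDeriv_zero]))
    (fun X Y => (superBracket_tensorDeriv (.one .zero) hε.neg (op₁.isSuperDerivation_L X)
      (op₁.isSuperDerivation_I Y)).trans (by rw [superBracket_L_I, superBracket_L_I]; rfl))
    (fun X => (superBracket_tensorDeriv hε.neg hε (op₁.isSuperDerivation_I X)
      op₁.isSuperDerivation_d).trans
      (by rw [superBracket_I_d, superBracket_I_d, hε.mul_self]; rfl))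

variable {op₁ op₂} (hε : IsSignOp op₁.grading 1 ε)

theorem tensor_d_tmul (a : A₁) (c : A₂) : (tensor op₁ op₂ hε).d (a ᵍ⊗ₜ[ℝ] c) =
    op₁.d a ᵍ⊗ₜ[ℝ] c + ε a ᵍ⊗ₜ[ℝ] op₂.d c := rfl

theorem tensor_I_tmul (X : 𝔤) (a : A₁) (c : A₂) : (tensor op₁ op₂ hε).I X (a ᵍ⊗ₜ[ℝ] c) =
    op₁.I X a ᵍ⊗ₜ[ℝ] c + ε a ᵍ⊗ₜ[ℝ] op₂.I X c := rfl

theorem tensor_L_tmul (X : 𝔤) (a : A₁) (c : A₂) : (tensor op₁ op₂ hε).L X (a ᵍ⊗ₜ[ℝ] c) =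
    op₁.L X a ᵍ⊗ₜ[ℝ] c + a ᵍ⊗ₜ[ℝ] op₂.L X c := rfl

variable {b : Module.Basis ι ℝ 𝔤} {wd : WeilData ι b W} {op : Operation 𝔤 A}
  {ε : Module.End ℝ W} (hε : IsSignOp wd.grading 1 ε)

theorem of_mem_tensor_grading {n : ℤ} {x : W ⊗[ℝ] A} :
    of ℝ _ _ x ∈ (tensor wd.toOperation op hε).grading n ↔ x ∈ grTensor b wd op n :=
  Submodule.mem_map_equiv (e := of ℝ wd.grading op.grading) _

end Operation

end OperationTensor

section Homotopy

open Polynomial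

variable {𝕜 V : Type*} [Field 𝕜] [AddCommGroup V] [Module 𝕜 V] {T : Module.End 𝕜 V}
  {R : Submodule 𝕜 V}

theorem aeval_one_add_X_mul_apply_of_apply_eq_zero (g : 𝕜[X]) {v : V} (hv : T v = 0) :
    aeval T (1 + X * g) v = v := by
  rw [mul_comm, map_add, map_one, map_mul, aeval_X, LinearMap.add_apply, Module.End.mul_apply, hv,
    map_zero, add_zero, Module.End.one_apply]

/-- A product of factors `1 - X / μ`, one for each nonzero eigenvalue occurring in `v`, works. -/
theorem exists_aeval_one_add_X_mul_mem (hR : R ≤ LinearMap.ker T)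
    (hT : R ⊔ ⨆ μ : {μ : 𝕜 // μ ≠ 0}, T.eigenspace μ = ⊤) (v : V) :
    ∃ g : 𝕜[X], aeval T (1 + X * g) v ∈ R := by
  have hadd : ∀ v w, (∃ g : 𝕜[X], aeval T (1 + X * g) v ∈ R) →
      (∃ g : 𝕜[X], aeval T (1 + X * g) w ∈ R) → ∃ g : 𝕜[X], aeval T (1 + X * g) (v + w) ∈ R := by
    rintro v w ⟨g, hg⟩ ⟨h, hh⟩
    refine ⟨g + h + X * g * h, ?_⟩
    have hv : aeval T (1 + X * (g + h + X * g * h)) v = aeval T (1 + X * g) v := by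
      rw [show (1 + X * (g + h + X * g * h) : 𝕜[X]) = (1 + X * h) * (1 + X * g) by ring, map_mul,
        Module.End.mul_apply, aeval_one_add_X_mul_apply_of_apply_eq_zero h (hR hg)]
    have hw : aeval T (1 + X * (g + h + X * g * h)) w = aeval T (1 + X * h) w := by
      rw [show (1 + X * (g + h + X * g * h) : 𝕜[X]) = (1 + X * g) * (1 + X * h) by ring, map_mul,
        Module.End.mul_apply, aeval_one_add_X_mul_apply_of_apply_eq_zero g (hR hh)]
    rw [map_add, hv, hw]
    exact add_mem hg hh
  obtain ⟨r, hr, w, hw, rfl⟩ := Submodule.mem_sup.1 (hT ▸ Submodule.mem_top : v ∈ _)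
  refine hadd r w ⟨0, by simpa using hr⟩ (Submodule.iSup_induction _
    (motive := fun w => ∃ g : 𝕜[X], aeval T (1 + X * g) w ∈ R) hw ?_ ⟨0, by simp⟩ hadd)
  intro μ w hw
  refine ⟨-C (μ : 𝕜)⁻¹, ?_⟩
  rw [Module.End.mem_eigenspace_iff] at hw
  have hzero : aeval T (1 + X * -C (μ : 𝕜)⁻¹) w = 0 := by
    simp [mul_comm X, aeval_C, hw, Module.algebraMap_end_apply, smul_smul, mul_inv_cancel₀ μ.2]
  exact hzero ▸ zero_mem R

theorem aeval_apply_mem {S : Submodule 𝕜 V} (hS : ∀ v ∈ S, T v ∈ S) (g : 𝕜[X]) {v : V}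
    (hv : v ∈ S) : aeval T g v ∈ S :=
  aeval_apply_smul_mem_of_le_comap hv g T hS

theorem commute_aeval {S : Module.End 𝕜 V} (h : Commute S T) (g : 𝕜[X]) :
    Commute S (aeval T g) := by
  induction g using Polynomial.induction_on with
  | C c => simpa using Algebra.commute_algebraMap_right c S
  | add p q hp hq => simpa using hp.add_right hq
  | monomial n c _ => simpa using (Algebra.commute_algebraMap_right c S).mul_right (h.pow_right _)

variable {d K : Module.End 𝕜 V} {P : ℤ → Submodule 𝕜 V}

theorem commute_comp_add_comp (hd : d * d = 0) : Commute d (d * K + K * d) := by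
  rw [Commute, SemiconjBy, mul_add, add_mul, ← mul_assoc, hd, mul_assoc K, hd, zero_mul, mul_zero,
    zero_add, add_zero, mul_assoc]

theorem aeval_comp_add_comp_apply_mem (hdP : ∀ n, ∀ v ∈ P n, d v ∈ P (n + 1))
    (hKP : ∀ n, ∀ v ∈ P n, K v ∈ P (n - 1)) (g : 𝕜[X]) {n : ℤ} {v : V} (hv : v ∈ P n) :
    aeval (d * K + K * d) g v ∈ P n := by
  refine aeval_apply_mem (fun w hw => add_mem ?_ ?_) g hv
  · simpa only [Module.End.mul_apply, sub_add_cancel] using hdP _ _ (hKP _ _ hw)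
  · simpa only [Module.End.mul_apply, add_sub_cancel_right] using hKP _ _ (hdP _ _ hw)

theorem exists_sub_mem_map_of_homotopy (hd : d * d = 0)
    (hdP : ∀ n, ∀ v ∈ P n, d v ∈ P (n + 1)) (hKP : ∀ n, ∀ v ∈ P n, K v ∈ P (n - 1))
    (hR : R ≤ LinearMap.ker (d * K + K * d))
    (hT : R ⊔ ⨆ μ : {μ : 𝕜 // μ ≠ 0}, (d * K + K * d).eigenspace μ = ⊤) {n : ℤ} {v : V}
    (hv : v ∈ P n) (hdv : d v = 0) : ∃ r ∈ P n ⊓ R, d r = 0 ∧ r - v ∈ (P (n - 1)).map d := by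
  obtain ⟨g, hg⟩ := exists_aeval_one_add_X_mul_mem hR hT v
  have hcomm (f : 𝕜[X]) : d (aeval (d * K + K * d) f v) = 0 := by
    have h := LinearMap.congr_fun (commute_aeval (commute_comp_add_comp (K := K) hd) f) v
    rwa [Module.End.mul_apply, Module.End.mul_apply, hdv, map_zero] at h
  refine ⟨_, ⟨aeval_comp_add_comp_apply_mem hdP hKP _ hv, hg⟩, hcomm _,
    K (aeval (d * K + K * d) g v), hKP _ _ (aeval_comp_add_comp_apply_mem hdP hKP g hv), ?_⟩
  rw [map_add, map_one, map_mul, aeval_X, LinearMap.add_apply, Module.End.one_apply,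
    add_sub_cancel_left, Module.End.mul_apply, LinearMap.add_apply, Module.End.mul_apply,
    Module.End.mul_apply, hcomm, map_zero, add_zero]

theorem mem_map_inf_of_homotopy (hd : d * d = 0)
    (hdP : ∀ n, ∀ v ∈ P n, d v ∈ P (n + 1)) (hKP : ∀ n, ∀ v ∈ P n, K v ∈ P (n - 1))
    (hR : R ≤ LinearMap.ker (d * K + K * d))
    (hT : R ⊔ ⨆ μ : {μ : 𝕜 // μ ≠ 0}, (d * K + K * d).eigenspace μ = ⊤) {n : ℤ} {r : V}
    (hr : r ∈ R) (hrd : r ∈ (P n).map d) : r ∈ (P n ⊓ R).map d := by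
  obtain ⟨u, hu, rfl⟩ := hrd
  obtain ⟨g, hg⟩ := exists_aeval_one_add_X_mul_mem hR hT u
  refine ⟨_, ⟨aeval_comp_add_comp_apply_mem hdP hKP _ hu, hg⟩, ?_⟩
  have h := LinearMap.congr_fun
    (commute_aeval (commute_comp_add_comp (K := K) hd) (1 + X * g)) u
  exact h.trans (aeval_one_add_X_mul_apply_of_apply_eq_zero g (hR hr))

end Homotopy

section GradedCohomology

variable {C E : Type} [AddCommGroup C] [Module ℝ C] [AddCommGroup E] [Module ℝ E]
  {dC : Module.End ℝ C} {dE K : Module.End ℝ E} {PC : ℤ → Submodule ℝ C} {PE : ℤ → Submodule ℝ E}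
  {j : C →ₗ[ℝ] E} {R : Submodule ℝ E}

theorem bijective_gradedCoh_of_homotopy (hj : Function.Injective j)
    (hjd : ∀ x, j (dC x) = dE (j x)) (hjR : ∀ x, j x ∈ R)
    (hdesc : ∀ n, ∀ r ∈ PE n ⊓ R, ∃ x ∈ PC n, j x = r) (hd : dE * dE = 0)
    (hdP : ∀ n, ∀ v ∈ PE n, dE v ∈ PE (n + 1)) (hKP : ∀ n, ∀ v ∈ PE n, K v ∈ PE (n - 1))
    (hR : R ≤ LinearMap.ker (dE * K + K * dE))
    (hT : R ⊔ ⨆ μ : {μ : ℝ // μ ≠ 0}, (dE * K + K * dE).eigenspace μ = ⊤) {n : ℤ}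
    (hjc : ∀ x ∈ cocycles dC PC n, j x ∈ cocycles dE PE n)
    {F : gradedCoh dC PC n →ₗ[ℝ] gradedCoh dE PE n}
    (hF : ∀ x hx, F (Submodule.Quotient.mk ⟨x, hx⟩) = Submodule.Quotient.mk ⟨j x, hjc x hx⟩) :
    Function.Bijective F := by
  refine ⟨(injective_iff_map_eq_zero F).2 fun q hq => ?_, fun q => ?_⟩
  · obtain ⟨⟨x, hx⟩, rfl⟩ := Submodule.Quotient.mk_surjective _ q
    rw [hF x hx, Submodule.Quotient.mk_eq_zero] at hq
    obtain ⟨r, hr, hrx⟩ := mem_map_inf_of_homotopy hd hdP hKP hR hT (hjR x) hq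
    obtain ⟨y, hy, rfl⟩ := hdesc _ r hr
    exact (Submodule.Quotient.mk_eq_zero _).2 ⟨y, hy, hj ((hjd y).trans hrx)⟩
  · obtain ⟨⟨v, hv⟩, rfl⟩ := Submodule.Quotient.mk_surjective _ q
    obtain ⟨r, hr, hdr, hrv⟩ := exists_sub_mem_map_of_homotopy hd hdP hKP hR hT hv.1 hv.2
    obtain ⟨y, hy, rfl⟩ := hdesc _ r hr
    have hdy : dC y = 0 := hj (by rw [hjd, hdr, map_zero])
    exact ⟨Submodule.Quotient.mk ⟨y, hy, hdy⟩, (hF y ⟨hy, hdy⟩).trans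
      ((Submodule.Quotient.eq _).2 hrv)⟩

end GradedCohomology

section Eigenspaces

variable {𝕜 E : Type*} [Field 𝕜] [CharZero 𝕜] [Ring E] [Algebra 𝕜 E] {T : Module.End 𝕜 E}
  {R : Subalgebra 𝕜 E}

/-- Monomials in `R` and the fixed vectors are eigenvectors of the derivation `T`: the eigenvalue
counts the factors which are fixed vectors. -/
theorem sup_iSup_eigenspace_eq_top_of_adjoin (hT : ∀ a b, T (a * b) = T a * b + a * T b)
    (hR : ∀ r ∈ R, T r = 0) (hgen : Algebra.adjoin 𝕜 ((R : Set E) ∪ {x | T x = x}) = ⊤) :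
    Subalgebra.toSubmodule R ⊔ ⨆ μ : {μ : 𝕜 // μ ≠ 0}, T.eigenspace μ = ⊤ := by
  suffices hmon : ∀ x ∈ Submonoid.closure ((R : Set E) ∪ {x | T x = x}),
      ∃ n : ℕ, T x = (n : 𝕜) • x ∧ (n = 0 → x ∈ R) by
    rw [eq_top_iff, ← Algebra.top_toSubmodule, ← hgen, Algebra.adjoin_eq_span, Submodule.span_le]
    intro x hx
    obtain ⟨n, hn, hn0⟩ := hmon x hx
    rcases eq_or_ne n 0 with rfl | hne
    · exact Submodule.mem_sup_left (hn0 rfl)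
    · exact Submodule.mem_sup_right (Submodule.mem_iSup_of_mem ⟨(n : 𝕜), Nat.cast_ne_zero.2 hne⟩
        (Module.End.mem_eigenspace_iff.2 hn))
  intro x hx
  induction hx using Submonoid.closure_induction with
  | mem x hx =>
    rcases hx with hx | hx
    · exact ⟨0, by simpa using hR x hx, fun _ => hx⟩
    · exact ⟨1, by simpa using hx, fun h => absurd h one_ne_zero⟩
  | one => exact ⟨0, by simpa using hR 1 (one_mem R), fun _ => one_mem R⟩
  | mul x y _ _ hx hy =>
    obtain ⟨m, hm, hm0⟩ := hx
    obtain ⟨n, hn, hn0⟩ := hy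
    refine ⟨m + n, ?_, fun h => ?_⟩
    · rw [hT, hm, hn, smul_mul_assoc, mul_smul_comm, Nat.cast_add, add_smul]
    · obtain ⟨hm', hn'⟩ := Nat.add_eq_zero_iff.1 h
      exact mul_mem (hm0 hm') (hn0 hn')

end Eigenspaces

section RelativeConnection

/-- A `𝔤`-invariant connection for the ideal `𝔫` on an operation of `𝔤`: an equivariant linear map
from `𝔫*` to the elements of degree one, inverse to contraction with `𝔫`. -/
structure IsInvariantConnection (op : Operation 𝔤 A) (𝔫 : Submodule ℝ 𝔤)
    (hn : ∀ Y : 𝔤, ∀ x ∈ 𝔫, ⁅Y, x⁆ ∈ 𝔫) (θN : Module.Dual ℝ 𝔫 →ₗ[ℝ] A) : Prop where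
  mem : ∀ α, θN α ∈ op.grading 1
  I_apply : ∀ (X : 𝔫) (α : Module.Dual ℝ 𝔫), op.I (X : 𝔤) (θN α) = α X • (1 : A)
  L_apply : ∀ (Y : 𝔤) (α : Module.Dual ℝ 𝔫), op.L Y (θN α) = -θN (α ∘ₗ adRes 𝔫 hn Y)

/-- A basis of a complement of `𝔫` in `𝔤`, together with the dual basis of the annihilator
of `𝔫`. -/
structure TransverseFrame (𝔫 : Submodule ℝ 𝔤) (ν : Type) [Fintype ν] [DecidableEq ν] where
  vec : ν → 𝔤
  covec : ν → Module.Dual ℝ 𝔤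
  covec_vec : ∀ k l, covec k (vec l) = if k = l then 1 else 0
  covec_eq_zero : ∀ k, ∀ X ∈ 𝔫, covec k X = 0
  sub_sum_mem : ∀ X, X - ∑ k, covec k X • vec k ∈ 𝔫

namespace TransverseFrame

variable {𝔫 : Submodule ℝ 𝔤} {ν : Type} [Fintype ν] [DecidableEq ν] (f : TransverseFrame 𝔫 ν)

/-- The projection of `𝔤` onto `𝔫` along the transverse directions. -/
def proj : 𝔤 →ₗ[ℝ] 𝔫 :=
  LinearMap.codRestrict 𝔫 (LinearMap.id - ∑ k, (f.covec k).smulRight (f.vec k))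
    fun X => by simpa using f.sub_sum_mem X

theorem coe_proj (X : 𝔤) : (f.proj X : 𝔤) = X - ∑ k, f.covec k X • f.vec k := by
  simp [proj]

theorem proj_coe (X : 𝔫) : f.proj X = X := by
  ext; simp [coe_proj, f.covec_eq_zero _ X X.2]

theorem eq_sum_smul_covec {η : Module.Dual ℝ 𝔤} (hη : ∀ X ∈ 𝔫, η X = 0) :
    η = ∑ k, η (f.vec k) • f.covec k := by
  ext X
  have h := hη _ (f.proj X).2
  rw [coe_proj, map_sub, sub_eq_zero] at h
  simpa [mul_comm] using h

end TransverseFrame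

/-- A presentation of an operation `opE` as the tensor product of the Weil algebra of `𝔤` with the
operation `op`: the inclusion of the second factor, the tautological connection of the first factor,
the derivations `∂/∂Ωⁱ`, and the fact that these factors generate. -/
structure WeilExtension {τ E : Type} [Ring E] [Algebra ℝ E] (b : Module.Basis τ ℝ 𝔤)
    (op : Operation 𝔤 A) (opE : Operation 𝔤 E) where
  incl : A →ₐ[ℝ] E
  incl_mem : ∀ {n : ℤ} {a : A}, a ∈ op.grading n → incl a ∈ opE.grading n
  incl_d : ∀ a, incl (op.d a) = opE.d (incl a)
  incl_L : ∀ X a, incl (op.L X a) = opE.L X (incl a)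
  incl_I : ∀ X a, incl (op.I X a) = opE.I X (incl a)
  conn : Module.Dual ℝ 𝔤 →ₗ[ℝ] E
  conn_mem : ∀ η, conn η ∈ opE.grading 1
  L_conn : ∀ X η, opE.L X (conn η) = -conn (η ∘ₗ LieAlgebra.ad ℝ 𝔤 X)
  I_conn : ∀ X η, opE.I X (conn η) = η X • (1 : E)
  deriv : τ → Module.End ℝ E
  isSuperDerivation_deriv : ∀ i, IsSuperDerivation opE.grading (-2) (deriv i)
  deriv_incl : ∀ i a, deriv i (incl a) = 0
  deriv_conn : ∀ i η, deriv i (conn η) = 0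
  deriv_d_conn : ∀ i η, deriv i (opE.d (conn η)) = η (b i) • (1 : E)
  adjoin_eq_top : Algebra.adjoin ℝ ((incl '' {a | SetLike.IsHomogeneousElem op.grading a}) ∪
    (Set.range conn ∪ Set.range fun η => opE.d (conn η))) = ⊤

namespace WeilExtension

variable {τ E : Type} [Ring E] [Algebra ℝ E] {b : Module.Basis τ ℝ 𝔤} {op : Operation 𝔤 A}
  {opE : Operation 𝔤 E} (w : WeilExtension b op opE)

theorem I_d_conn (X : 𝔤) (η : Module.Dual ℝ 𝔤) :
    opE.I X (opE.d (w.conn η)) = -w.conn (η ∘ₗ LieAlgebra.ad ℝ 𝔤 X) := by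
  have h := LinearMap.congr_fun (opE.cartan X) (w.conn η)
  rwa [LinearMap.add_apply, LinearMap.comp_apply, LinearMap.comp_apply, w.I_conn, map_smul,
    opE.isSuperDerivation_d.map_one_eq_zero opE.one_mem, smul_zero, add_zero, w.L_conn] at h

theorem L_d_conn (X : 𝔤) (η : Module.Dual ℝ 𝔤) :
    opE.L X (opE.d (w.conn η)) = -opE.d (w.conn (η ∘ₗ LieAlgebra.ad ℝ 𝔤 X)) := by
  rw [← map_neg, ← w.L_conn]
  exact LinearMap.congr_fun (opE.L_d X) (w.conn η)

/-- The generators of `w.reduced 𝔫`. -/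
def reducedGenerators (𝔫 : Submodule ℝ 𝔤) : Set E :=
  (w.incl '' {a | SetLike.IsHomogeneousElem op.grading a}) ∪
    (w.conn '' {η | ∀ X ∈ 𝔫, η X = 0} ∪ (opE.d ∘ w.conn) '' {η | ∀ X ∈ 𝔫, η X = 0})

/-- The subalgebra `W_𝔮 ⊗ A` of `W_𝔤 ⊗ A` for `𝔮 = 𝔤 / 𝔫`, where `𝔮*` is the annihilator
of `𝔫`. -/
def reduced (𝔫 : Submodule ℝ 𝔤) : Subalgebra ℝ E :=
  Algebra.adjoin ℝ (w.reducedGenerators 𝔫)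

variable {𝔫 : Submodule ℝ 𝔤}

theorem exists_mem_grading_of_mem_reducedGenerators :
    ∀ x ∈ w.reducedGenerators 𝔫, ∃ n, x ∈ opE.grading n := by
  rintro _ (⟨a, ⟨n, ha⟩, rfl⟩ | ⟨η, -, rfl⟩ | ⟨η, -, rfl⟩)
  · exact ⟨n, w.incl_mem ha⟩
  · exact ⟨1, w.conn_mem η⟩
  · exact ⟨1 + 1, opE.d_mem (w.conn_mem η)⟩

theorem incl_mem_reduced (a : A) : w.incl a ∈ w.reduced 𝔫 := by
  induction a using DirectSum.Decomposition.inductionOn op.grading with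
  | zero => simp
  | homogeneous a => exact Algebra.subset_adjoin (.inl ⟨a, ⟨_, a.2⟩, rfl⟩)
  | add a a' ha ha' => exact map_add w.incl a a' ▸ add_mem ha ha'

theorem conn_mem_reduced {η : Module.Dual ℝ 𝔤} (hη : ∀ X ∈ 𝔫, η X = 0) :
    w.conn η ∈ w.reduced 𝔫 :=
  Algebra.subset_adjoin (.inr (.inl ⟨η, hη, rfl⟩))

theorem d_conn_mem_reduced {η : Module.Dual ℝ 𝔤} (hη : ∀ X ∈ 𝔫, η X = 0) :
    opE.d (w.conn η) ∈ w.reduced 𝔫 :=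
  Algebra.subset_adjoin (.inr (.inr ⟨η, hη, rfl⟩))

theorem d_mem_reduced {x : E} (hx : x ∈ w.reduced 𝔫) : opE.d x ∈ w.reduced 𝔫 := by
  refine opE.isSuperDerivation_d.map_mem_adjoin opE.one_mem
    w.exists_mem_grading_of_mem_reducedGenerators ?_ x hx
  rintro _ (⟨a, -, rfl⟩ | ⟨η, hη, rfl⟩ | ⟨η, -, rfl⟩)
  · exact w.incl_d a ▸ w.incl_mem_reduced _
  · exact w.d_conn_mem_reduced hη
  · exact (LinearMap.congr_fun opE.d_sq (w.conn η) : opE.d (opE.d (w.conn η)) = 0) ▸ zero_mem _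

theorem I_mem_reduced (hn : ∀ Y : 𝔤, ∀ x ∈ 𝔫, ⁅Y, x⁆ ∈ 𝔫) (X : 𝔤) {x : E}
    (hx : x ∈ w.reduced 𝔫) : opE.I X x ∈ w.reduced 𝔫 := by
  refine (opE.isSuperDerivation_I X).map_mem_adjoin opE.one_mem
    w.exists_mem_grading_of_mem_reducedGenerators ?_ x hx
  rintro _ (⟨a, -, rfl⟩ | ⟨η, -, rfl⟩ | ⟨η, hη, rfl⟩)
  · exact w.incl_I X a ▸ w.incl_mem_reduced _
  · exact w.I_conn X η ▸ (Subalgebra.smul_mem _ (one_mem _) _)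
  · exact w.I_d_conn X η ▸ neg_mem (w.conn_mem_reduced fun Y hY => hη _ (hn X Y hY))

theorem eq_zero_of_generators {δ : Module.End ℝ E} {k : ℤ}
    (hδ : IsSuperDerivation opE.grading k δ) (hincl : ∀ a, δ (w.incl a) = 0)
    (hconn : ∀ η, δ (w.conn η) = 0) (hd : ∀ η, δ (opE.d (w.conn η)) = 0) : δ = 0 := by
  refine LinearMap.ext fun x => hδ.eq_zero_on_adjoin opE.one_mem (s := _) ?_ ?_ x
    (w.adjoin_eq_top ▸ Algebra.mem_top)
  · rintro _ (⟨a, ⟨n, ha⟩, rfl⟩ | ⟨η, rfl⟩ | ⟨η, rfl⟩)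
    exacts [⟨n, w.incl_mem ha⟩, ⟨1, w.conn_mem η⟩, ⟨1 + 1, opE.d_mem (w.conn_mem η)⟩]
  · rintro _ (⟨a, -, rfl⟩ | ⟨η, rfl⟩ | ⟨η, rfl⟩)
    exacts [hincl a, hconn η, hd η]

theorem eq_zero_on_reduced {δ : Module.End ℝ E} {k : ℤ}
    (hδ : IsSuperDerivation opE.grading k δ) (hincl : ∀ a, δ (w.incl a) = 0)
    (hconn : ∀ η : Module.Dual ℝ 𝔤, (∀ X ∈ 𝔫, η X = 0) → δ (w.conn η) = 0)
    (hd : ∀ η : Module.Dual ℝ 𝔤, (∀ X ∈ 𝔫, η X = 0) → δ (opE.d (w.conn η)) = 0) :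
    ∀ x ∈ w.reduced 𝔫, δ x = 0 := by
  refine hδ.eq_zero_on_adjoin opE.one_mem w.exists_mem_grading_of_mem_reducedGenerators ?_
  rintro _ (⟨a, -, rfl⟩ | ⟨η, hη, rfl⟩ | ⟨η, hη, rfl⟩)
  exacts [hincl a, hconn η hη, hd η hη]

variable {ν : Type} [Fintype ν] [DecidableEq ν] (f : TransverseFrame 𝔫 ν)

/-- The components `ϑₖ` of the tautological connection transverse to `𝔫`. -/
def coframe (k : ν) : E := w.conn (f.covec k)

theorem isTransverseCoframe : IsTransverseCoframe opE 𝔫 f.vec (w.coframe f) where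
  mem k := w.conn_mem _
  I_dual k l := by
    rw [coframe, w.I_conn, f.covec_vec, ite_smul, one_smul, zero_smul]
    simp only [eq_comm]
  I_eq_zero X hX k := by rw [coframe, w.I_conn, f.covec_eq_zero k X hX, zero_smul]
  sup_span_eq_top := by
    refine eq_top_iff.2 fun X _ => ?_
    rw [← sub_add_cancel X (∑ k, f.covec k X • f.vec k)]
    exact Submodule.add_mem_sup (f.sub_sum_mem X) (Submodule.sum_mem _ fun k _ =>
      Submodule.smul_mem _ _ (Submodule.subset_span ⟨k, rfl⟩))

theorem conn_mul_mem_coframeIdeal {η : Module.Dual ℝ 𝔤} (hη : ∀ X ∈ 𝔫, η X = 0) (x : E) :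
    w.conn η * x ∈ coframeIdeal (w.coframe f) := by
  rw [f.eq_sum_smul_covec hη, map_sum, Finset.sum_mul]
  refine Submodule.sum_mem _ fun k _ => ?_
  rw [map_smul, smul_mul_assoc]
  exact Submodule.smul_mem _ _ (mul_mem_coframeIdeal k x)

theorem conn_mem_coframeIdeal {η : Module.Dual ℝ 𝔤} (hη : ∀ X ∈ 𝔫, η X = 0) :
    w.conn η ∈ coframeIdeal (w.coframe f) :=
  mul_one (w.conn η) ▸ w.conn_mul_mem_coframeIdeal f hη 1

theorem L_mem_coframeIdeal (hn : ∀ Y : 𝔤, ∀ x ∈ 𝔫, ⁅Y, x⁆ ∈ 𝔫) (X : 𝔤) :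
    ∀ x ∈ coframeIdeal (w.coframe f), opE.L X x ∈ coframeIdeal (w.coframe f) := by
  refine coframeIdeal_le (S := (coframeIdeal (w.coframe f)).comap (opE.L X)) fun k x => ?_
  rw [Submodule.mem_comap, opE.L_mul, coframe, w.L_conn, neg_mul]
  exact add_mem (neg_mem (w.conn_mul_mem_coframeIdeal f
    (fun Y hY => f.covec_eq_zero k ⁅X, Y⁆ (hn X Y hY)) x)) (mul_mem_coframeIdeal k _)

/-- The difference of the tautological connection, restricted to `𝔫`, and the connection `θN`. -/
def connDiff (θN : Module.Dual ℝ 𝔫 →ₗ[ℝ] A) : Module.Dual ℝ 𝔫 →ₗ[ℝ] E :=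
  w.conn ∘ₗ f.proj.dualMap - w.incl.toLinearMap ∘ₗ θN

/-- The horizontal part `χ` of `connDiff`; unlike `connDiff` it is equivariant, because horizontal
elements are determined modulo the ideal of the coframe. -/
def horConnDiff (θN : Module.Dual ℝ 𝔫 →ₗ[ℝ] A) : Module.Dual ℝ 𝔫 →ₗ[ℝ] E :=
  horProj opE f.vec (w.coframe f) ∘ₗ w.connDiff f θN

theorem connDiff_apply (θN : Module.Dual ℝ 𝔫 →ₗ[ℝ] A) (α : Module.Dual ℝ 𝔫) :
    w.connDiff f θN α = w.conn (α ∘ₗ f.proj) - w.incl (θN α) := rfl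

theorem horConnDiff_sub_connDiff_mem (θN : Module.Dual ℝ 𝔫 →ₗ[ℝ] A) (α : Module.Dual ℝ 𝔫) :
    w.horConnDiff f θN α - w.connDiff f θN α ∈ coframeIdeal (w.coframe f) :=
  horProj_sub_self_mem_coframeIdeal _

variable {f} {hn : ∀ Y : 𝔤, ∀ x ∈ 𝔫, ⁅Y, x⁆ ∈ 𝔫} {θN : Module.Dual ℝ 𝔫 →ₗ[ℝ] A}

theorem connDiff_mem (hθ : IsInvariantConnection op 𝔫 hn θN) (α : Module.Dual ℝ 𝔫) :
    w.connDiff f θN α ∈ opE.grading 1 :=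
  sub_mem (w.conn_mem _) (w.incl_mem (hθ.mem α))

theorem horConnDiff_mem (hθ : IsInvariantConnection op 𝔫 hn θN) (α : Module.Dual ℝ 𝔫) :
    w.horConnDiff f θN α ∈ opE.grading 1 := by
  have hstep (k : ν) (z : E) (hz : z ∈ opE.grading 1) :
      w.coframe f k * opE.I (f.vec k) z ∈ opE.grading 1 := by
    simpa [coframe] using opE.mul_mem (w.conn_mem (f.covec k)) (opE.I_mem (f.vec k) hz)
  have hα := w.connDiff_mem (f := f) hθ α
  have hsub := horProj_sub_self_mem (op := opE) (y := f.vec) hstep fun k => hstep k _ hα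
  exact sub_add_cancel (w.horConnDiff f θN α) _ ▸ add_mem hsub hα

theorem horConnDiff_mem_hor (hθ : IsInvariantConnection op 𝔫 hn θN) (α : Module.Dual ℝ 𝔫) :
    w.horConnDiff f θN α ∈ opE.hor := by
  refine (w.isTransverseCoframe f).horProj_mem_hor fun X hX => ?_
  rw [connDiff_apply, map_sub, w.I_conn, ← w.incl_I, hθ.I_apply ⟨X, hX⟩, map_smul, map_one,
    LinearMap.comp_apply, f.proj_coe ⟨X, hX⟩, sub_self]

theorem L_connDiff_add_mem (hθ : IsInvariantConnection op 𝔫 hn θN) (X : 𝔤)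
    (α : Module.Dual ℝ 𝔫) : opE.L X (w.connDiff f θN α) + w.connDiff f θN (α ∘ₗ adRes 𝔫 hn X) ∈
      coframeIdeal (w.coframe f) := by
  have hsum : opE.L X (w.connDiff f θN α) + w.connDiff f θN (α ∘ₗ adRes 𝔫 hn X) =
      w.conn ((α ∘ₗ adRes 𝔫 hn X) ∘ₗ f.proj - (α ∘ₗ f.proj) ∘ₗ LieAlgebra.ad ℝ 𝔤 X) := by
    rw [connDiff_apply, connDiff_apply, map_sub, w.L_conn, ← w.incl_L, hθ.L_apply, map_neg, map_sub]
    abel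
  rw [hsum]
  refine w.conn_mem_coframeIdeal f fun Y hY => ?_
  have h₁ : f.proj Y = ⟨Y, hY⟩ := f.proj_coe ⟨Y, hY⟩
  have h₂ : f.proj ⁅X, Y⁆ = ⟨⁅X, Y⁆, hn X Y hY⟩ := f.proj_coe ⟨_, hn X Y hY⟩
  simp [h₁, h₂, adRes]

theorem L_horConnDiff (hθ : IsInvariantConnection op 𝔫 hn θN) (X : 𝔤) (α : Module.Dual ℝ 𝔫) :
    opE.L X (w.horConnDiff f θN α) = -w.horConnDiff f θN (α ∘ₗ adRes 𝔫 hn X) := by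
  refine eq_neg_of_add_eq_zero_left ((w.isTransverseCoframe f).eq_zero_of_mem_coframeIdeal ?_
    (add_mem (opE.L_mem_hor X (w.horConnDiff_mem_hor hθ α)) (w.horConnDiff_mem_hor hθ _)))
  have h := add_mem (add_mem (w.L_connDiff_add_mem (f := f) hθ X α)
    (w.L_mem_coframeIdeal f hn X _ (w.horConnDiff_sub_connDiff_mem f θN α)))
    (w.horConnDiff_sub_connDiff_mem f θN (α ∘ₗ adRes 𝔫 hn X))
  rw [map_sub] at h
  convert h using 1
  abel

theorem horConnDiff_sub_connDiff_mem_reduced (hn : ∀ Y : 𝔤, ∀ x ∈ 𝔫, ⁅Y, x⁆ ∈ 𝔫)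
    (θN : Module.Dual ℝ 𝔫 →ₗ[ℝ] A) (α : Module.Dual ℝ 𝔫) :
    w.horConnDiff f θN α - w.connDiff f θN α ∈ w.reduced 𝔫 := by
  have hstep (k : ν) {z : E} (hz : opE.I (f.vec k) z ∈ w.reduced 𝔫) :
      w.coframe f k * opE.I (f.vec k) z ∈ w.reduced 𝔫 :=
    mul_mem (w.conn_mem_reduced (f.covec_eq_zero k)) hz
  refine horProj_sub_self_mem (S := Subalgebra.toSubmodule (w.reduced 𝔫))
    (fun k z hz => hstep k (w.I_mem_reduced hn _ hz)) fun k => hstep k ?_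
  rw [connDiff_apply, map_sub, w.I_conn, ← w.incl_I]
  exact sub_mem (Subalgebra.smul_mem _ (one_mem _) _) (w.incl_mem_reduced _)

theorem conn_sub_horConnDiff_mem_reduced (hn : ∀ Y : 𝔤, ∀ x ∈ 𝔫, ⁅Y, x⁆ ∈ 𝔫)
    (θN : Module.Dual ℝ 𝔫 →ₗ[ℝ] A) (η : Module.Dual ℝ 𝔤) :
    w.conn η - w.horConnDiff f θN (η ∘ₗ 𝔫.subtype) ∈ w.reduced 𝔫 := by
  set α := η ∘ₗ 𝔫.subtype
  have hη : w.conn (η - α ∘ₗ f.proj) ∈ w.reduced 𝔫 := by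
    refine w.conn_mem_reduced fun X hX => ?_
    have hX' : f.proj X = ⟨X, hX⟩ := f.proj_coe ⟨X, hX⟩
    simp [hX', α]
  have h := add_mem (sub_mem hη (w.horConnDiff_sub_connDiff_mem_reduced (f := f) hn θN α))
    (w.incl_mem_reduced (θN α))
  rw [connDiff_apply, map_sub] at h
  convert h using 1
  abel

end WeilExtension

end RelativeConnection

namespace WeilExtension

section CartanHomotopy

variable {τ E : Type} [Fintype τ] [DecidableEq τ] [Ring E] [Algebra ℝ E] {b : Module.Basis τ ℝ 𝔤}
  {op : Operation 𝔤 A} {opE : Operation 𝔤 E} (w : WeilExtension b op opE) {𝔫 : Submodule ℝ 𝔤}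
  {ν : Type} [Fintype ν] [DecidableEq ν] (f : TransverseFrame 𝔫 ν)
  (θN : Module.Dual ℝ 𝔫 →ₗ[ℝ] A)

/-- Cartan's homotopy `K = ∑ᵢ χ(eⁱ|𝔫) ∂/∂Ωⁱ`: the derivation which kills `A` and the tautological
connection and sends the differential of the latter to the horizontal difference `χ` of the two
connections. -/
def homotopy : Module.End ℝ E :=
  ∑ i, LinearMap.mulLeft ℝ (w.horConnDiff f θN (b.dualBasis i ∘ₗ 𝔫.subtype)) * w.deriv i

/-- The even derivation `dK + Kd`. -/
def homotopyLaplacian : Module.End ℝ E := opE.d * w.homotopy f θN + w.homotopy f θN * opE.d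

theorem homotopy_apply (x : E) : w.homotopy f θN x =
    ∑ i, w.horConnDiff f θN (b.dualBasis i ∘ₗ 𝔫.subtype) * w.deriv i x := by
  simp [homotopy]

theorem homotopy_incl (a : A) : w.homotopy f θN (w.incl a) = 0 := by
  simp [homotopy_apply, w.deriv_incl]

theorem homotopy_conn (η : Module.Dual ℝ 𝔤) : w.homotopy f θN (w.conn η) = 0 := by
  simp [homotopy_apply, w.deriv_conn]

theorem homotopy_d_conn (η : Module.Dual ℝ 𝔤) :
    w.homotopy f θN (opE.d (w.conn η)) = w.horConnDiff f θN (η ∘ₗ 𝔫.subtype) := by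
  have hη : η ∘ₗ 𝔫.subtype = ∑ i, η (b i) • b.dualBasis i ∘ₗ 𝔫.subtype :=
    dual_comp_eq_sum b η 𝔫.subtype
  simp [homotopy_apply, w.deriv_d_conn, hη]

variable {f θN} {hn : ∀ Y : 𝔤, ∀ x ∈ 𝔫, ⁅Y, x⁆ ∈ 𝔫}

theorem isSuperDerivation_homotopy (hθ : IsInvariantConnection op 𝔫 hn θN) :
    IsSuperDerivation opE.grading (-1) (w.homotopy f θN) :=
  .sum fun i _ => .mulLeft opE.supercomm (w.horConnDiff_mem hθ _) (w.isSuperDerivation_deriv i)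

theorem I_homotopy_add_homotopy_I (hθ : IsInvariantConnection op 𝔫 hn θN) (X : 𝔤) (x : E) :
    opE.I X (w.homotopy f θN x) + w.homotopy f θN (opE.I X x) = 0 := by
  have hK := w.isSuperDerivation_homotopy (f := f) hθ
  have hK1 := hK.map_one_eq_zero opE.one_mem
  have hbr : superBracket (-1) (-1) (opE.I X) (w.homotopy f θN) = 0 := by
    refine w.eq_zero_of_generators ((opE.isSuperDerivation_I X).superBracket hK) ?_ ?_ ?_
    · simp [superBracket_apply, homotopy_incl, ← w.incl_I]
    · simp [superBracket_apply, homotopy_conn, w.I_conn, hK1]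
    · simp [superBracket_apply, homotopy_d_conn, w.I_d_conn, homotopy_conn,
        opE.mem_hor.1 (w.horConnDiff_mem_hor hθ _)]
  simpa [superBracket_apply, sgn_one] using LinearMap.congr_fun hbr x

theorem L_homotopy (hθ : IsInvariantConnection op 𝔫 hn θN) (X : 𝔤) (x : E) :
    opE.L X (w.homotopy f θN x) = w.homotopy f θN (opE.L X x) := by
  have hbr : superBracket 0 (-1) (opE.L X) (w.homotopy f θN) = 0 := by
    refine w.eq_zero_of_generators
      ((opE.isSuperDerivation_L X).superBracket (w.isSuperDerivation_homotopy hθ)) ?_ ?_ ?_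
    · simp [superBracket_apply, homotopy_incl, ← w.incl_L]
    · simp [superBracket_apply, homotopy_conn, w.L_conn]
    · intro η
      have hres : (η ∘ₗ LieAlgebra.ad ℝ 𝔤 X) ∘ₗ 𝔫.subtype =
        (η ∘ₗ 𝔫.subtype) ∘ₗ adRes 𝔫 hn X := rfl
      simp [superBracket_apply, homotopy_d_conn, w.L_d_conn, w.L_horConnDiff hθ, hres, sgn_zero]
  simpa [superBracket_apply, sgn_zero, sub_eq_zero] using LinearMap.congr_fun hbr x

theorem homotopyLaplacian_apply (x : E) : w.homotopyLaplacian f θN x =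
    opE.d (w.homotopy f θN x) + w.homotopy f θN (opE.d x) := rfl

theorem isSuperDerivation_homotopyLaplacian (hθ : IsInvariantConnection op 𝔫 hn θN) :
    IsSuperDerivation opE.grading 0 (w.homotopyLaplacian f θN) := by
  have h := opE.isSuperDerivation_d.superBracket (w.isSuperDerivation_homotopy (f := f) hθ)
  rwa [superBracket, one_mul, sgn_neg, sgn_one, neg_one_smul, sub_neg_eq_add] at h

theorem homotopyLaplacian_mul (hθ : IsInvariantConnection op 𝔫 hn θN) (x y : E) :
    w.homotopyLaplacian f θN (x * y) =
      w.homotopyLaplacian f θN x * y + x * w.homotopyLaplacian f θN y := by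
  induction x using DirectSum.Decomposition.inductionOn opE.grading with
  | zero => simp
  | homogeneous x =>
    rw [(w.isSuperDerivation_homotopyLaplacian hθ).map_mul x.2, zero_mul, sgn_zero, one_smul]
  | add x x' hx hx' => rw [add_mul, map_add, hx, hx', map_add, add_mul, add_mul]; abel

theorem homotopyLaplacian_incl (a : A) : w.homotopyLaplacian f θN (w.incl a) = 0 := by
  rw [homotopyLaplacian_apply, homotopy_incl, map_zero, ← w.incl_d, homotopy_incl, add_zero]

theorem homotopyLaplacian_conn (η : Module.Dual ℝ 𝔤) :
    w.homotopyLaplacian f θN (w.conn η) = w.horConnDiff f θN (η ∘ₗ 𝔫.subtype) := by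
  rw [homotopyLaplacian_apply, homotopy_conn, map_zero, zero_add, homotopy_d_conn]

theorem homotopyLaplacian_d (x : E) :
    w.homotopyLaplacian f θN (opE.d x) = opE.d (w.homotopyLaplacian f θN x) :=
  (LinearMap.congr_fun (commute_comp_add_comp (K := w.homotopy f θN) opE.d_sq) x).symm

theorem homotopyLaplacian_conn_eq_zero {η : Module.Dual ℝ 𝔤} (hη : ∀ X ∈ 𝔫, η X = 0) :
    w.homotopyLaplacian f θN (w.conn η) = 0 := by
  have hres : η ∘ₗ 𝔫.subtype = 0 := LinearMap.ext fun X => hη X X.2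
  rw [homotopyLaplacian_conn, hres, map_zero]

theorem homotopyLaplacian_eq_zero_on_reduced (hθ : IsInvariantConnection op 𝔫 hn θN) :
    ∀ x ∈ w.reduced 𝔫, w.homotopyLaplacian f θN x = 0 :=
  w.eq_zero_on_reduced (w.isSuperDerivation_homotopyLaplacian hθ) w.homotopyLaplacian_incl
    (fun _ => w.homotopyLaplacian_conn_eq_zero) fun _ hη => by
      rw [homotopyLaplacian_d, w.homotopyLaplacian_conn_eq_zero hη, map_zero]

theorem I_homotopyLaplacian (hθ : IsInvariantConnection op 𝔫 hn θN) (X : 𝔤) (x : E) :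
    opE.I X (w.homotopyLaplacian f θN x) = w.homotopyLaplacian f θN (opE.I X x) := by
  have hId (z : E) : opE.I X (opE.d z) = opE.L X z - opE.d (opE.I X z) :=
    eq_sub_of_add_eq (LinearMap.congr_fun (opE.cartan X) z)
  have hIK (z : E) : opE.I X (w.homotopy f θN z) = -w.homotopy f θN (opE.I X z) :=
    eq_neg_of_add_eq_zero_left (w.I_homotopy_add_homotopy_I hθ X z)
  simp only [homotopyLaplacian_apply, map_add, hId, hIK, w.L_homotopy hθ, map_neg, map_sub]
  abel

theorem homotopyLaplacian_mem_coframeIdeal (hθ : IsInvariantConnection op 𝔫 hn θN) :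
    ∀ x ∈ coframeIdeal (w.coframe f),
      w.homotopyLaplacian f θN x ∈ coframeIdeal (w.coframe f) := by
  refine coframeIdeal_le (S := (coframeIdeal (w.coframe f)).comap (w.homotopyLaplacian f θN))
    fun k x => ?_
  rw [Submodule.mem_comap, w.homotopyLaplacian_mul hθ, coframe,
    w.homotopyLaplacian_conn_eq_zero (f.covec_eq_zero k), zero_mul, zero_add]
  exact mul_mem_coframeIdeal k _

theorem homotopyLaplacian_connDiff (α : Module.Dual ℝ 𝔫) :
    w.homotopyLaplacian f θN (w.connDiff f θN α) = w.horConnDiff f θN α := by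
  have hres : (α ∘ₗ f.proj) ∘ₗ 𝔫.subtype = α :=
    LinearMap.ext fun X => congrArg α (f.proj_coe X)
  rw [connDiff_apply, map_sub, homotopyLaplacian_incl, sub_zero, homotopyLaplacian_conn, hres]

theorem homotopyLaplacian_horConnDiff (hθ : IsInvariantConnection op 𝔫 hn θN)
    (α : Module.Dual ℝ 𝔫) :
    w.homotopyLaplacian f θN (w.horConnDiff f θN α) = w.horConnDiff f θN α := by
  have hhor := w.horConnDiff_mem_hor (f := f) hθ α
  refine sub_eq_zero.1 ((w.isTransverseCoframe f).eq_zero_of_mem_coframeIdeal ?_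
    (sub_mem (opE.mem_hor.2 fun X => ?_) hhor))
  · rw [← w.homotopyLaplacian_connDiff α, ← map_sub, w.homotopyLaplacian_connDiff]
    exact w.homotopyLaplacian_mem_coframeIdeal hθ _ (w.horConnDiff_sub_connDiff_mem f θN α)
  · rw [w.I_homotopyLaplacian hθ, opE.mem_hor.1 hhor, map_zero]

theorem adjoin_reduced_union_fixed_eq_top (hθ : IsInvariantConnection op 𝔫 hn θN) :
    Algebra.adjoin ℝ ((w.reduced 𝔫 : Set E) ∪ {x | w.homotopyLaplacian f θN x = x}) = ⊤ := by
  rw [eq_top_iff, ← w.adjoin_eq_top, Algebra.adjoin_le_iff]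
  have hred {x : E} (hx : x ∈ w.reduced 𝔫) := Algebra.subset_adjoin (R := ℝ)
    (s := (w.reduced 𝔫 : Set E) ∪ {x | w.homotopyLaplacian f θN x = x}) (.inl hx)
  have hfix {x : E} (hx : w.homotopyLaplacian f θN x = x) := Algebra.subset_adjoin (R := ℝ)
    (s := (w.reduced 𝔫 : Set E) ∪ {x | w.homotopyLaplacian f θN x = x}) (.inr hx)
  have hχ := w.homotopyLaplacian_horConnDiff (f := f) hθ
  rintro _ (⟨a, -, rfl⟩ | ⟨η, rfl⟩ | ⟨η, rfl⟩)
  · exact hred (w.incl_mem_reduced a)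
  · rw [← sub_add_cancel (w.conn η) (w.horConnDiff f θN (η ∘ₗ 𝔫.subtype))]
    exact add_mem (hred (w.conn_sub_horConnDiff_mem_reduced hn θN η)) (hfix (hχ _))
  · change opE.d (w.conn η) ∈ _
    rw [← sub_add_cancel (w.conn η) (w.horConnDiff f θN (η ∘ₗ 𝔫.subtype)), map_add]
    exact add_mem (hred (w.d_mem_reduced (w.conn_sub_horConnDiff_mem_reduced hn θN η)))
      (hfix (by rw [homotopyLaplacian_d, hχ]))

theorem reduced_sup_iSup_eigenspace_eq_top (hθ : IsInvariantConnection op 𝔫 hn θN) :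
    Subalgebra.toSubmodule (w.reduced 𝔫) ⊔
      ⨆ μ : {μ : ℝ // μ ≠ 0}, (w.homotopyLaplacian f θN).eigenspace μ = ⊤ :=
  sup_iSup_eigenspace_eq_top_of_adjoin (w.homotopyLaplacian_mul hθ)
    (w.homotopyLaplacian_eq_zero_on_reduced hθ) (w.adjoin_reduced_union_fixed_eq_top hθ)

theorem homotopy_mem_bas (hθ : IsInvariantConnection op 𝔫 hn θN) {x : E} (hx : x ∈ opE.bas) :
    w.homotopy f θN x ∈ opE.bas := by
  rw [Operation.mem_bas] at hx ⊢
  refine ⟨fun X => ?_, fun X => ?_⟩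
  · rw [w.L_homotopy hθ, hx.1, map_zero]
  · simpa [hx.2 X] using w.I_homotopy_add_homotopy_I (f := f) hθ X x

end CartanHomotopy

end WeilExtension

section WeilTensor

open GradedTensorProduct

namespace Operation

variable {A₁ A₂ : Type} [Ring A₁] [Algebra ℝ A₁] [Ring A₂] [Algebra ℝ A₂]
  {op₁ : Operation 𝔤 A₁} {op₂ : Operation 𝔤 A₂} {ε : Module.End ℝ A₁}
  (hε : IsSignOp op₁.grading 1 ε)

theorem includeLeft_mem_tensor_grading {n : ℤ} {a : A₁} (ha : a ∈ op₁.grading n) :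
    includeLeft _ _ a ∈ (tensor op₁ op₂ hε).grading n :=
  add_zero n ▸ tmul_mem_tensorGrading ha op₂.one_mem

theorem includeRight_mem_tensor_grading {n : ℤ} {c : A₂} (hc : c ∈ op₂.grading n) :
    includeRight _ _ c ∈ (tensor op₁ op₂ hε).grading n :=
  zero_add n ▸ tmul_mem_tensorGrading op₁.one_mem hc

theorem tensor_d_includeLeft (a : A₁) :
    (tensor op₁ op₂ hε).d (includeLeft _ _ a) = includeLeft _ _ (op₁.d a) := by
  refine (tensor_d_tmul hε a 1).trans ?_
  rw [op₂.isSuperDerivation_d.map_one_eq_zero op₂.one_mem, tmul_zero, add_zero]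
  rfl

theorem tensor_I_includeLeft (X : 𝔤) (a : A₁) :
    (tensor op₁ op₂ hε).I X (includeLeft _ _ a) = includeLeft _ _ (op₁.I X a) := by
  refine (tensor_I_tmul hε X a 1).trans ?_
  rw [(op₂.isSuperDerivation_I X).map_one_eq_zero op₂.one_mem, tmul_zero, add_zero]
  rfl

theorem tensor_L_includeLeft (X : 𝔤) (a : A₁) :
    (tensor op₁ op₂ hε).L X (includeLeft _ _ a) = includeLeft _ _ (op₁.L X a) := by
  refine (tensor_L_tmul hε X a 1).trans ?_
  rw [(op₂.isSuperDerivation_L X).map_one_eq_zero op₂.one_mem, tmul_zero, add_zero]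
  rfl

theorem tensor_d_includeRight (c : A₂) :
    (tensor op₁ op₂ hε).d (includeRight _ _ c) = includeRight _ _ (op₂.d c) := by
  refine (tensor_d_tmul hε 1 c).trans ?_
  rw [op₁.isSuperDerivation_d.map_one_eq_zero op₁.one_mem, zero_tmul, zero_add,
    hε.map_one op₁.one_mem]
  rfl

theorem tensor_I_includeRight (X : 𝔤) (c : A₂) :
    (tensor op₁ op₂ hε).I X (includeRight _ _ c) = includeRight _ _ (op₂.I X c) := by
  refine (tensor_I_tmul hε X 1 c).trans ?_
  rw [(op₁.isSuperDerivation_I X).map_one_eq_zero op₁.one_mem, zero_tmul, zero_add,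
    hε.map_one op₁.one_mem]
  rfl

theorem tensor_L_includeRight (X : 𝔤) (c : A₂) :
    (tensor op₁ op₂ hε).L X (includeRight _ _ c) = includeRight _ _ (op₂.L X c) := by
  refine (tensor_L_tmul hε X 1 c).trans ?_
  rw [(op₁.isSuperDerivation_L X).map_one_eq_zero op₁.one_mem, zero_tmul, zero_add]
  rfl

end Operation

namespace WeilData

variable {b : Module.Basis ι ℝ 𝔤} (wd : WeilData ι b W) (op : Operation 𝔤 A) {ε : Module.End ℝ W}

theorem adjoin_includeRight_includeLeft_eq_top :
    Algebra.adjoin ℝ ((includeRight wd.grading op.grading ''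
        {a | SetLike.IsHomogeneousElem op.grading a}) ∪
      (Set.range (fun η => includeLeft wd.grading op.grading (wd.connForm η)) ∪
        Set.range fun η => includeLeft wd.grading op.grading (wd.d (wd.connForm η)))) = ⊤ := by
  set S : Subalgebra ℝ (wd.grading ᵍ⊗[ℝ] op.grading) := Algebra.adjoin ℝ _
  have hleft (v : W) : includeLeft wd.grading op.grading v ∈ S := by
    suffices h : ⊤ ≤ S.comap (includeLeft wd.grading op.grading) from h (Algebra.mem_top (x := v))
    rw [← wd.adjoin_connForm_d_connForm_eq_top, Algebra.adjoin_le_iff]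
    rintro _ (⟨η, rfl⟩ | ⟨η, rfl⟩)
    · exact Algebra.subset_adjoin (.inr (.inl ⟨η, rfl⟩))
    · exact Algebra.subset_adjoin (.inr (.inr ⟨η, rfl⟩))
  refine eq_top_iff.2 fun x _ => ?_
  induction x using homogeneous_tmul_induction with
  | tmul _ q v a _ ha =>
    rw [← tmul_one_mul_one_tmul]
    exact mul_mem (hleft v) (Algebra.subset_adjoin (.inl ⟨a, ⟨q, ha⟩, rfl⟩))
  | add x y hx hy => exact add_mem (hx trivial) (hy trivial)

/-- The tensor product of the Weil algebra with an operation, presented by its generators. -/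
def weilExtension (hε : IsSignOp wd.grading 1 ε) :
    WeilExtension b op (Operation.tensor wd.toOperation op hε) where
  incl := includeRight wd.grading op.grading
  incl_mem := Operation.includeRight_mem_tensor_grading hε
  incl_d a := (Operation.tensor_d_includeRight hε a).symm
  incl_L X a := (Operation.tensor_L_includeRight hε X a).symm
  incl_I X a := (Operation.tensor_I_includeRight hε X a).symm
  conn := (includeLeft wd.grading op.grading).toLinearMap ∘ₗ wd.connForm
  conn_mem η := Operation.includeLeft_mem_tensor_grading hε (wd.connForm_mem η)
  L_conn X η := (Operation.tensor_L_includeLeft hε X _).trans (by rw [wd.L_connForm, map_neg]; rfl)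
  I_conn X η := (Operation.tensor_I_includeLeft hε X _).trans
    (by rw [wd.I_connForm, map_smul, map_one])
  deriv i := tensorDeriv wd.grading op.grading 1 (wd.evenDeriv i) 0
  isSuperDerivation_deriv i := isSuperDerivation_tensorDeriv (.one even_neg_two)
    (wd.isSuperDerivation_evenDeriv i) .zero
  deriv_incl i a := by
    refine (tensorDeriv_tmul 1 a).trans ?_
    rw [(wd.isSuperDerivation_evenDeriv i).map_one_eq_zero wd.one_mem, zero_tmul, zero_add,
      LinearMap.zero_apply, tmul_zero]
  deriv_conn i η := by
    refine (tensorDeriv_tmul _ 1).trans ?_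
    rw [wd.evenDeriv_connForm, zero_tmul, zero_add, LinearMap.zero_apply, tmul_zero]
  deriv_d_conn i η := by
    refine (congrArg _ (Operation.tensor_d_includeLeft hε _)).trans
      ((tensorDeriv_tmul _ 1).trans ?_)
    rw [wd.evenDeriv_d_connForm, LinearMap.zero_apply, tmul_zero, add_zero]
    exact map_smul (includeLeft wd.grading op.grading) (η (b i)) 1
  adjoin_eq_top := by
    simp only [LinearMap.comp_apply, AlgHom.toLinearMap_apply, Operation.tensor_d_includeLeft]
    exact wd.adjoin_includeRight_includeLeft_eq_top op

end WeilData

end WeilTensor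

section OperationHom

section GradedTensorMap

open GradedTensorProduct

variable {A₁ A₂ B₁ B₂ : Type} [Ring A₁] [Algebra ℝ A₁] [Ring A₂] [Algebra ℝ A₂]
  [Ring B₁] [Algebra ℝ B₁] [Ring B₂] [Algebra ℝ B₂]
  (𝒜₁ : ℤ → Submodule ℝ A₁) (𝒜₂ : ℤ → Submodule ℝ A₂) (ℬ₁ : ℤ → Submodule ℝ B₁)
  (ℬ₂ : ℤ → Submodule ℝ B₂) [GradedAlgebra 𝒜₁] [GradedAlgebra 𝒜₂] [GradedAlgebra ℬ₁]
  [GradedAlgebra ℬ₂]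

/-- The tensor product of two linear maps, between graded tensor products. -/
def gradedTensorMap (φ₁ : A₁ →ₗ[ℝ] B₁) (φ₂ : A₂ →ₗ[ℝ] B₂) :
    (𝒜₁ ᵍ⊗[ℝ] 𝒜₂) →ₗ[ℝ] (ℬ₁ ᵍ⊗[ℝ] ℬ₂) :=
  (of ℝ ℬ₁ ℬ₂).toLinearMap ∘ₗ TensorProduct.map φ₁ φ₂ ∘ₗ (of ℝ 𝒜₁ 𝒜₂).symm.toLinearMap

theorem gradedTensorMap_tmul (φ₁ : A₁ →ₗ[ℝ] B₁) (φ₂ : A₂ →ₗ[ℝ] B₂) (a : A₁) (c : A₂) :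
    gradedTensorMap 𝒜₁ 𝒜₂ ℬ₁ ℬ₂ φ₁ φ₂ (a ᵍ⊗ₜ[ℝ] c) = φ₁ a ᵍ⊗ₜ[ℝ] φ₂ c := rfl

variable {𝒜₁ 𝒜₂ ℬ₁ ℬ₂}

theorem gradedTensorMap_mul {φ₁ : A₁ →ₐ[ℝ] B₁} {φ₂ : A₂ →ₐ[ℝ] B₂}
    (h₁ : ∀ n, ∀ a ∈ 𝒜₁ n, φ₁ a ∈ ℬ₁ n) (h₂ : ∀ n, ∀ c ∈ 𝒜₂ n, φ₂ c ∈ ℬ₂ n)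
    (x y : 𝒜₁ ᵍ⊗[ℝ] 𝒜₂) :
    gradedTensorMap 𝒜₁ 𝒜₂ ℬ₁ ℬ₂ φ₁.toLinearMap φ₂.toLinearMap (x * y) =
      gradedTensorMap 𝒜₁ 𝒜₂ ℬ₁ ℬ₂ φ₁.toLinearMap φ₂.toLinearMap x *
        gradedTensorMap 𝒜₁ 𝒜₂ ℬ₁ ℬ₂ φ₁.toLinearMap φ₂.toLinearMap y := by
  induction x using homogeneous_tmul_induction with
  | add x x' hx hx' => simp only [add_mul, map_add, hx, hx']
  | tmul _ q a c _ hc =>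
    induction y using homogeneous_tmul_induction with
    | add y y' hy hy' => simp only [mul_add, map_add, hy, hy']
    | tmul p' _ a' c' ha' _ =>
      rw [tmul_mul_tmul a hc ha' c', map_zsmul]
      simp only [gradedTensorMap_tmul, AlgHom.toLinearMap_apply, map_mul]
      rw [tmul_mul_tmul _ (h₂ q c hc) (h₁ p' a' ha')]

/-- The tensor product of two degree-preserving algebra morphisms. -/
def gradedTensorAlgHom (φ₁ : A₁ →ₐ[ℝ] B₁) (φ₂ : A₂ →ₐ[ℝ] B₂)
    (h₁ : ∀ n, ∀ a ∈ 𝒜₁ n, φ₁ a ∈ ℬ₁ n) (h₂ : ∀ n, ∀ c ∈ 𝒜₂ n, φ₂ c ∈ ℬ₂ n) :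
    (𝒜₁ ᵍ⊗[ℝ] 𝒜₂) →ₐ[ℝ] (ℬ₁ ᵍ⊗[ℝ] ℬ₂) :=
  .ofLinearMap (gradedTensorMap 𝒜₁ 𝒜₂ ℬ₁ ℬ₂ φ₁.toLinearMap φ₂.toLinearMap)
    ((gradedTensorMap_tmul _ _ _ _ _ _ 1 1).trans
      (by rw [AlgHom.toLinearMap_apply, AlgHom.toLinearMap_apply, map_one, map_one]; rfl))
    (gradedTensorMap_mul h₁ h₂)

end GradedTensorMap

/-- A degree-preserving linear map from an operation of `𝔮` to an operation of `𝔤` intertwining the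
two operations along `π : 𝔤 → 𝔮`. -/
structure IsOperationHom (π : 𝔤 →ₗ⁅ℝ⁆ 𝔮) (opQ : Operation 𝔮 B) (op : Operation 𝔤 A)
    (φ : B →ₗ[ℝ] A) : Prop where
  map_mem : ∀ n, ∀ x ∈ opQ.grading n, φ x ∈ op.grading n
  map_d : ∀ x, φ (opQ.d x) = op.d (φ x)
  map_L : ∀ Y x, φ (opQ.L (π Y) x) = op.L Y (φ x)
  map_I : ∀ Y x, φ (opQ.I (π Y) x) = op.I Y (φ x)

theorem IsWeilMap.isOperationHom {b : Module.Basis ι ℝ 𝔤} {bq : Module.Basis κ ℝ 𝔮}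
    {wdG : WeilData ι b W} {wdQ : WeilData κ bq WQ} {π : 𝔤 →ₗ⁅ℝ⁆ 𝔮} {jW : WQ →ₐ[ℝ] W}
    (h : IsWeilMap wdG wdQ π jW) :
    IsOperationHom π wdQ.toOperation wdG.toOperation jW.toLinearMap where
  map_mem _ _ := h.map_mem
  map_d := h.map_d
  map_L := h.map_L
  map_I := h.map_I

namespace IsOperationHom

variable {π : 𝔤 →ₗ⁅ℝ⁆ 𝔮} {opQ : Operation 𝔮 B} {op : Operation 𝔤 A} {φ : B →ₗ[ℝ] A}

theorem map_signOp (h : IsOperationHom π opQ op φ) {k : ℤ} {σ : Module.End ℝ A}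
    (hσ : IsSignOp op.grading k σ) {σQ : Module.End ℝ B} (hσQ : IsSignOp opQ.grading k σQ) (x : B) :
    φ (σQ x) = σ (φ x) := by
  induction x using DirectSum.Decomposition.inductionOn opQ.grading with
  | zero => simp
  | homogeneous x => rw [hσQ _ _ x.2, map_zsmul, hσ _ _ (h.map_mem _ _ x.2)]
  | add x y hx hy => simp only [map_add, hx, hy]

theorem map_mem_bas (h : IsOperationHom π opQ op φ) {x : B} (hx : x ∈ opQ.bas) :
    φ x ∈ op.bas := by
  rw [Operation.mem_bas] at hx ⊢
  exact ⟨fun Y => by rw [← h.map_L, hx.1, map_zero], fun Y => by rw [← h.map_I, hx.2, map_zero]⟩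

theorem mem_bas_of_map_mem_bas (h : IsOperationHom π opQ op φ) (hπ : Function.Surjective π)
    (hφ : Function.Injective φ) {x : B} (hx : φ x ∈ op.bas) : x ∈ opQ.bas := by
  rw [Operation.mem_bas] at hx ⊢
  refine ⟨hπ.forall.2 fun Y => hφ ?_, hπ.forall.2 fun Y => hφ ?_⟩
  · rw [h.map_L, hx.1, map_zero]
  · rw [h.map_I, hx.2, map_zero]

open GradedTensorProduct in
theorem tensor {A₁ A₂ B₁ B₂ : Type} [Ring A₁] [Algebra ℝ A₁] [Ring A₂] [Algebra ℝ A₂]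
    [Ring B₁] [Algebra ℝ B₁] [Ring B₂] [Algebra ℝ B₂] {op₁ : Operation 𝔤 A₁}
    {op₂ : Operation 𝔤 A₂} {opQ₁ : Operation 𝔮 B₁} {opQ₂ : Operation 𝔮 B₂} {φ₁ : B₁ →ₗ[ℝ] A₁}
    {φ₂ : B₂ →ₗ[ℝ] A₂} (h₁ : IsOperationHom π opQ₁ op₁ φ₁) (h₂ : IsOperationHom π opQ₂ op₂ φ₂)
    {ε : Module.End ℝ A₁} (hε : IsSignOp op₁.grading 1 ε) {εQ : Module.End ℝ B₁}
    (hεQ : IsSignOp opQ₁.grading 1 εQ) :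
    IsOperationHom π (.tensor opQ₁ opQ₂ hεQ) (.tensor op₁ op₂ hε)
      (gradedTensorMap opQ₁.grading opQ₂.grading op₁.grading op₂.grading φ₁ φ₂) where
  map_mem n x hx := by
    refine tensorGrading_induction (motive := fun x => gradedTensorMap _ _ _ _ φ₁ φ₂ x ∈ _) ?_ ?_ hx
    · rintro p q a c rfl ha hc
      exact tmul_mem_tensorGrading (h₁.map_mem p a ha) (h₂.map_mem q c hc)
    · intro x y hx hy
      rw [map_add]
      exact add_mem hx hy
  map_d x := by
    induction x using homogeneous_tmul_induction with
    | tmul _ _ a c _ _ =>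
      rw [Operation.tensor_d_tmul, map_add]
      simp only [gradedTensorMap_tmul, Operation.tensor_d_tmul, h₁.map_d, h₂.map_d,
        h₁.map_signOp hε hεQ]
    | add x y hx hy => simp only [map_add, hx, hy]
  map_L Y x := by
    induction x using homogeneous_tmul_induction with
    | tmul _ _ a c _ _ =>
      rw [Operation.tensor_L_tmul, map_add]
      simp only [gradedTensorMap_tmul, Operation.tensor_L_tmul, h₁.map_L, h₂.map_L]
    | add x y hx hy => simp only [map_add, hx, hy]
  map_I Y x := by
    induction x using homogeneous_tmul_induction with
    | tmul _ _ a c _ _ =>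
      rw [Operation.tensor_I_tmul, map_add]
      simp only [gradedTensorMap_tmul, Operation.tensor_I_tmul, h₁.map_I, h₂.map_I,
        h₁.map_signOp hε hεQ]
    | add x y hx hy => simp only [map_add, hx, hy]

theorem bijective_gradedCoh {τ : Type} [Finite τ] {ν : Type} [Fintype ν]
    [DecidableEq ν] {E : Type} [Ring E] [Algebra ℝ E] {C : Type} [Ring C] [Algebra ℝ C]
    {b : Module.Basis τ ℝ 𝔤} {opE : Operation 𝔤 E} {opC : Operation 𝔮 C} {j : C →ₗ[ℝ] E}
    (h : IsOperationHom π opC opE j) (hπ : Function.Surjective π) (hj : Function.Injective j)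
    (w : WeilExtension b op opE) {𝔫 : Submodule ℝ 𝔤} (f : TransverseFrame 𝔫 ν)
    {hn : ∀ Y : 𝔤, ∀ x ∈ 𝔫, ⁅Y, x⁆ ∈ 𝔫} {θN : Module.Dual ℝ 𝔫 →ₗ[ℝ] A}
    (hθ : IsInvariantConnection op 𝔫 hn θN) (hjR : ∀ x, j x ∈ w.reduced 𝔫)
    (hdesc : ∀ r ∈ w.reduced 𝔫, r ∈ opE.bas → r ∈ LinearMap.range j)
    {PC : ℤ → Submodule ℝ C} (hPC : ∀ n, PC n = opC.bas ⊓ opC.grading n)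
    {PE : ℤ → Submodule ℝ E} (hPE : ∀ n, PE n = opE.bas ⊓ opE.grading n) {m : ℤ}
    (hjc : ∀ x ∈ cocycles opC.d PC m, j x ∈ cocycles opE.d PE m)
    {F : gradedCoh opC.d PC m →ₗ[ℝ] gradedCoh opE.d PE m}
    (hF : ∀ x hx, F (Submodule.Quotient.mk ⟨x, hx⟩) = Submodule.Quotient.mk ⟨j x, hjc x hx⟩) :
    Function.Bijective F := by
  classical
  have := Fintype.ofFinite τ
  refine bijective_gradedCoh_of_homotopy (K := w.homotopy f θN)
    (R := Subalgebra.toSubmodule (w.reduced 𝔫)) hj h.map_d hjR ?_ opE.d_sq ?_ ?_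
    (w.homotopyLaplacian_eq_zero_on_reduced hθ) (w.reduced_sup_iSup_eigenspace_eq_top hθ) hjc hF
  · rintro n r ⟨hr, hrR⟩
    rw [hPE] at hr
    obtain ⟨x, rfl⟩ := hdesc r hrR hr.1
    rw [hPC]
    exact ⟨x, ⟨h.mem_bas_of_map_mem_bas hπ hj hr.1,
      mem_of_map_mem_of_injective opC.grading opE.grading h.map_mem hj hr.2⟩, rfl⟩
  · simp only [hPE]
    exact fun n v hv => ⟨opE.d_mem_bas hv.1, opE.d_mem hv.2⟩
  · simp only [hPE]
    exact fun n v hv => ⟨w.homotopy_mem_bas hθ hv.1, (w.isSuperDerivation_homotopy hθ).map_mem hv.2⟩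

end IsOperationHom

end OperationHom

section Descent

open TensorProduct in
theorem mem_range_lTensor_of_lTensor_eq_zero {𝕜 V M M' N τ : Type*} [Field 𝕜] [AddCommGroup V]
    [Module 𝕜 V] [AddCommGroup M] [Module 𝕜 M] [AddCommGroup M'] [Module 𝕜 M'] [AddCommGroup N]
    [Module 𝕜 N] {f : τ → M →ₗ[𝕜] M'} {ψ : N →ₗ[𝕜] M}
    (hψ : ⨅ i, LinearMap.ker (f i) ≤ LinearMap.range ψ) {y : V ⊗[𝕜] M}
    (hy : ∀ i, (f i).lTensor V y = 0) : y ∈ LinearMap.range (ψ.lTensor V) := by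
  classical
  let e := Module.Basis.ofVectorSpace 𝕜 V
  have hcoord (i : τ) (z : V ⊗[𝕜] M) (k) :
      equivFinsuppOfBasisLeft e ((f i).lTensor V z) k = f i (equivFinsuppOfBasisLeft e z k) := by
    induction z with
    | zero => simp
    | tmul v m => simp
    | add z z' hz hz' => simp only [map_add, Finsupp.add_apply, hz, hz']
  have hmem (k) : equivFinsuppOfBasisLeft e y k ∈ LinearMap.range ψ :=
    hψ (by simp [Submodule.mem_iInf, ← hcoord, hy])
  rw [← (equivFinsuppOfBasisLeft e).symm_apply_apply y, equivFinsuppOfBasisLeft_symm_apply]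
  refine Submodule.sum_mem _ fun k _ => ?_
  obtain ⟨n, hn⟩ := hmem k
  exact ⟨e k ⊗ₜ n, by rw [LinearMap.lTensor_tmul, hn]⟩

/-- The transverse frame defined by a basis of the quotient `𝔮 = 𝔤 / 𝔫`: lifts of the basis vectors
and pullbacks of the dual basis. -/
def TransverseFrame.ofSurjective {ν : Type} [Fintype ν] [DecidableEq ν] {𝔫 : Submodule ℝ 𝔤}
    {π : 𝔤 →ₗ⁅ℝ⁆ 𝔮} (hπ : Function.Surjective π) (hker : ∀ X, π X = 0 ↔ X ∈ 𝔫)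
    (e : Module.Basis ν ℝ 𝔮) : TransverseFrame 𝔫 ν where
  vec k := Function.surjInv hπ (e k)
  covec k := e.dualBasis k ∘ₗ π
  covec_vec k l := by
    simp [Function.surjInv_eq hπ, Finsupp.single_apply, eq_comm]
  covec_eq_zero k X hX := by simp [(hker X).2 hX]
  sub_sum_mem X := by
    rw [← hker, map_sub, map_sum]
    simp [Function.surjInv_eq hπ, e.sum_repr]

namespace IsWeilMap

open GradedTensorProduct

variable {b : Module.Basis ι ℝ 𝔤} {bq : Module.Basis κ ℝ 𝔮} {wdG : WeilData ι b W}
  {wdQ : WeilData κ bq WQ} {π : 𝔤 →ₗ⁅ℝ⁆ 𝔮} {jW : WQ →ₐ[ℝ] W} {op : Operation 𝔤 A}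
  {εG : Module.End ℝ W} {εQ : Module.End ℝ WQ} {𝔫 : Submodule ℝ 𝔤}

theorem includeLeft_map_connForm (h : IsWeilMap wdG wdQ π jW) (hε : IsSignOp wdG.grading 1 εG)
    (ζ : Module.Dual ℝ 𝔮) : includeLeft wdG.grading op.grading (jW (wdQ.connForm ζ)) =
      (wdG.weilExtension op hε).conn (ζ ∘ₗ π) :=
  congrArg _ (h.map_connForm ζ)

theorem includeLeft_map_d_connForm (h : IsWeilMap wdG wdQ π jW) (hε : IsSignOp wdG.grading 1 εG)
    (ζ : Module.Dual ℝ 𝔮) : includeLeft wdG.grading op.grading (jW (wdQ.d (wdQ.connForm ζ))) =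
      (Operation.tensor wdG.toOperation op hε).d ((wdG.weilExtension op hε).conn (ζ ∘ₗ π)) := by
  rw [h.map_d, ← Operation.tensor_d_includeLeft hε, h.includeLeft_map_connForm hε]

theorem includeLeft_map_mem_reduced (h : IsWeilMap wdG wdQ π jW) (hker : ∀ X ∈ 𝔫, π X = 0)
    (hε : IsSignOp wdG.grading 1 εG) (v : WQ) :
    includeLeft wdG.grading op.grading (jW v) ∈ (wdG.weilExtension op hε).reduced 𝔫 := by
  set w := wdG.weilExtension op hε
  suffices hle : ⊤ ≤ (w.reduced 𝔫).comap ((includeLeft wdG.grading op.grading).comp jW) from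
    hle (Algebra.mem_top (x := v))
  have hζ (ζ : Module.Dual ℝ 𝔮) : ∀ X ∈ 𝔫, (ζ ∘ₗ (π : 𝔤 →ₗ[ℝ] 𝔮)) X = 0 := fun X hX => by
    simp [hker X hX]
  rw [← wdQ.adjoin_connForm_d_connForm_eq_top, Algebra.adjoin_le_iff]
  rintro _ (⟨ζ, rfl⟩ | ⟨ζ, rfl⟩)
  · change includeLeft wdG.grading op.grading (jW (wdQ.connForm ζ)) ∈ w.reduced 𝔫
    exact h.includeLeft_map_connForm (op := op) hε ζ ▸ w.conn_mem_reduced (hζ ζ)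
  · change includeLeft wdG.grading op.grading (jW (wdQ.d (wdQ.connForm ζ))) ∈ w.reduced 𝔫
    exact h.includeLeft_map_d_connForm (op := op) hε ζ ▸ w.d_conn_mem_reduced (hζ ζ)

theorem gradedTensorMap_mem_reduced (h : IsWeilMap wdG wdQ π jW) (hker : ∀ X ∈ 𝔫, π X = 0)
    (hε : IsSignOp wdG.grading 1 εG) (opQ : Operation 𝔮 B) (φ : B →ₗ[ℝ] A)
    (x : wdQ.grading ᵍ⊗[ℝ] opQ.grading) :
    gradedTensorMap _ _ wdG.grading op.grading jW.toLinearMap φ x ∈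
      (wdG.weilExtension op hε).reduced 𝔫 := by
  induction x using homogeneous_tmul_induction with
  | tmul _ _ v c _ _ =>
    rw [gradedTensorMap_tmul, ← tmul_one_mul_one_tmul]
    exact mul_mem (h.includeLeft_map_mem_reduced hker hε v)
      ((wdG.weilExtension op hε).incl_mem_reduced (φ c))
  | add x y hx hy =>
    rw [map_add]
    exact add_mem hx hy

theorem reduced_le_range_gradedTensorAlgHom (h : IsWeilMap wdG wdQ π jW)
    (hker : ∀ X, π X = 0 → X ∈ 𝔫) (hε : IsSignOp wdG.grading 1 εG) :
    (wdG.weilExtension op hε).reduced 𝔫 ≤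
      (gradedTensorAlgHom jW (.id ℝ A) (fun _ _ => h.map_mem) fun _ _ ha => ha :
        (wdQ.grading ᵍ⊗[ℝ] op.grading) →ₐ[ℝ] (wdG.grading ᵍ⊗[ℝ] op.grading)).range := by
  refine Algebra.adjoin_le ?_
  have hdual (η : Module.Dual ℝ 𝔤) (hη : ∀ X ∈ 𝔫, η X = 0) :
      ∃ ζ : Module.Dual ℝ 𝔮, ζ ∘ₗ (π : 𝔤 →ₗ[ℝ] 𝔮) = η := by
    change η ∈ LinearMap.range (π : 𝔤 →ₗ[ℝ] 𝔮).dualMap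
    rw [LinearMap.range_dualMap_eq_dualAnnihilator_ker, Submodule.mem_dualAnnihilator]
    exact fun X hX => hη X (hker X hX)
  rintro _ (⟨a, -, rfl⟩ | ⟨η, hη, rfl⟩ | ⟨η, hη, rfl⟩)
  · exact ⟨includeRight _ _ a, congrArg (· ᵍ⊗ₜ[ℝ] a) (map_one jW)⟩
  · obtain ⟨ζ, rfl⟩ := hdual η hη
    exact ⟨includeLeft _ _ (wdQ.connForm ζ), h.includeLeft_map_connForm hε ζ⟩
  · obtain ⟨ζ, rfl⟩ := hdual η hη
    exact ⟨includeLeft _ _ (wdQ.d (wdQ.connForm ζ)), h.includeLeft_map_d_connForm hε ζ⟩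

theorem L_map_eq_zero (h : IsWeilMap wdG wdQ π jW) {X : 𝔤} (hX : π X = 0) (v : WQ) :
    wdG.L X (jW v) = 0 := by
  rw [← h.map_L, hX, map_zero, LinearMap.zero_apply, map_zero]

theorem I_map_eq_zero (h : IsWeilMap wdG wdQ π jW) {X : 𝔤} (hX : π X = 0) (v : WQ) :
    wdG.I X (jW v) = 0 := by
  rw [← h.map_I, hX, map_zero, LinearMap.zero_apply, map_zero]

theorem LTot_rTensor (h : IsWeilMap wdG wdQ π jW) {X : 𝔤} (hX : π X = 0) (y : WQ ⊗[ℝ] A) :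
    LTot wdG op X (jW.toLinearMap.rTensor A y) =
      jW.toLinearMap.rTensor A ((op.L X).lTensor WQ y) := by
  induction y with
  | zero => simp
  | tmul v a => simp [LTot, h.L_map_eq_zero hX]
  | add y z hy hz => simp only [map_add, hy, hz]

theorem ITot_rTensor (h : IsWeilMap wdG wdQ π jW) (hεG : IsSignOp wdG.grading 1 εG)
    (hεQ : IsSignOp wdQ.grading 1 εQ) {X : 𝔤} (hX : π X = 0) (y : WQ ⊗[ℝ] A) :
    ITot wdG op εG X (jW.toLinearMap.rTensor A y) =
      jW.toLinearMap.rTensor A (TensorProduct.map εQ (op.I X) y) := by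
  induction y with
  | zero => simp
  | tmul v a =>
    have hε : jW (εQ v) = εG (jW v) := h.isOperationHom.map_signOp hεG hεQ v
    simp [ITot, h.I_map_eq_zero hX, hε]
  | add y z hy hz => simp only [map_add, hy, hz]

/-- Contractions and Lie derivatives along `𝔫` only see the second factor of `W_𝔮 ⊗ A`. -/
theorem mem_range_lTensor_of_basic (h : IsWeilMap wdG wdQ π jW) (hπ : Function.Surjective π)
    (hker : ∀ X ∈ 𝔫, π X = 0) (hεG : IsSignOp wdG.grading 1 εG) (hεQ : IsSignOp wdQ.grading 1 εQ)
    {ψ : B →ₗ[ℝ] A} (hψ : (⨅ X : 𝔫, LinearMap.ker (op.L X)) ⊓ (⨅ X : 𝔫, LinearMap.ker (op.I X)) ≤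
      LinearMap.range ψ) {y : WQ ⊗[ℝ] A}
    (hL : ∀ X ∈ 𝔫, LTot wdG op X (jW.toLinearMap.rTensor A y) = 0)
    (hI : ∀ X ∈ 𝔫, ITot wdG op εG X (jW.toLinearMap.rTensor A y) = 0) :
    y ∈ LinearMap.range (ψ.lTensor WQ) := by
  have hinj : Function.Injective (jW.toLinearMap.rTensor A) :=
    Module.Flat.rTensor_preserves_injective_linearMap _ (h.injective hπ)
  have hlL (X : 𝔫) : (op.L X).lTensor WQ y = 0 := by
    apply hinj
    rw [← h.LTot_rTensor (hker X X.2), hL X X.2, map_zero]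
  have hlI (X : 𝔫) : (op.I X).lTensor WQ y = 0 := by
    have hεI : TensorProduct.map εQ (op.I X) y = 0 := by
      apply hinj
      rw [← h.ITot_rTensor hεG hεQ (hker X X.2), hI X X.2, map_zero]
    have hsq := congrArg (εQ.rTensor A) hεI
    rwa [map_zero, ← LinearMap.comp_apply, LinearMap.rTensor_comp_map, ← Module.End.mul_eq_comp,
      hεQ.mul_self] at hsq
  refine mem_range_lTensor_of_lTensor_eq_zero
    (f := Sum.elim (fun X : 𝔫 => op.L X) fun X : 𝔫 => op.I X) ?_ (Sum.forall.2 ⟨hlL, hlI⟩)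
  rwa [iInf_sum]

theorem mem_range_gradedTensorMap_of_mem_reduced (h : IsWeilMap wdG wdQ π jW)
    (hπ : Function.Surjective π) (hker : ∀ X, π X = 0 ↔ X ∈ 𝔫) (hεG : IsSignOp wdG.grading 1 εG)
    (hεQ : IsSignOp wdQ.grading 1 εQ) (opQ : Operation 𝔮 B) {ψ : B →ₗ[ℝ] A}
    (hψ : (⨅ X : 𝔫, LinearMap.ker (op.L X)) ⊓ (⨅ X : 𝔫, LinearMap.ker (op.I X)) ≤
      LinearMap.range ψ) {r : wdG.grading ᵍ⊗[ℝ] op.grading}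
    (hr : r ∈ (wdG.weilExtension op hεG).reduced 𝔫)
    (hbas : r ∈ (Operation.tensor wdG.toOperation op hεG).bas) :
    r ∈ LinearMap.range
      (gradedTensorMap wdQ.grading opQ.grading wdG.grading op.grading jW.toLinearMap ψ) := by
  obtain ⟨y, rfl⟩ := h.reduced_le_range_gradedTensorAlgHom (fun X => (hker X).1) hεG hr
  rw [Operation.mem_bas] at hbas
  obtain ⟨x, hx⟩ := h.mem_range_lTensor_of_basic (y := (of ℝ wdQ.grading op.grading).symm y) hπ
    (fun X => (hker X).2) hεG hεQ hψ (fun X _ => hbas.1 X) fun X _ => hbas.2 X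
  refine ⟨of ℝ wdQ.grading opQ.grading x, ?_⟩
  change TensorProduct.map jW.toLinearMap ψ x = jW.toLinearMap.rTensor A y
  rw [← LinearMap.rTensor_comp_lTensor, LinearMap.comp_apply, hx]
  rfl

end IsWeilMap

end Descent

/-- **Cartan.**  Let `N ⊴ G` be a closed normal subgroup, `Q = G/N`
(infinitesimally: an ideal `𝔫 ⊆ 𝔤` and the quotient `𝔮 = 𝔤/𝔫`, presented by a
surjective morphism `π` with kernel `𝔫`), and let `A` be a `G`-operation with a
`G`-invariant `N`-connection `θ̃`.  Let `B = A_{N,bas}` be the `N`-basic subalgebra with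
its residual `Q`-operation structure (presented by an embedding `ψ : B → A` with image
the `N`-basic elements).  Then the natural inclusion
`j = j_W ⊗ ψ : W_Q ⊗ B → W_G ⊗ A` maps `Q`-basic elements to `G`-basic elements and
induces an isomorphism `WH^*_Q(B) ≅ WH^*_G(A)` in basic cohomology: any linear map of
cohomologies induced by `j` is bijective. -/
theorem cartan_reduction_theorem
    (b : Module.Basis ι ℝ 𝔤) (op : Operation 𝔤 A)
    -- the ideal 𝔫 and the quotient Lie algebra 𝔮 = 𝔤/𝔫:
    (𝔫 : Submodule ℝ 𝔤) (hn : ∀ (Y : 𝔤), ∀ x ∈ 𝔫, ⁅Y, x⁆ ∈ 𝔫)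
    (π : 𝔤 →ₗ⁅ℝ⁆ 𝔮) (hπsurj : Function.Surjective π)
    (hπker : ∀ X : 𝔤, π X = 0 ↔ X ∈ 𝔫)
    (bq : Module.Basis κ ℝ 𝔮)
    -- the `G`-invariant `N`-connection `θ̃` on `A`:
    (θN : Module.Dual ℝ ↥𝔫 →ₗ[ℝ] A)
    (hmem : ∀ α, θN α ∈ op.grading 1)
    (hconn : ∀ (X : ↥𝔫) (α : Module.Dual ℝ ↥𝔫),
      op.I (X : 𝔤) (θN α) = α X • (1 : A))
    (hequiv : ∀ (Y : 𝔤) (α : Module.Dual ℝ ↥𝔫),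
      op.L Y (θN α) = -θN (α ∘ₗ adRes 𝔫 hn Y))
    -- `B = A_{N,bas}` with its residual `𝔮`-operation structure, embedded in `A` by `ψ`:
    (opQ : Operation 𝔮 B) (ψ : B →ₐ[ℝ] A)
    (hψinj : Function.Injective ψ)
    (hψrange : LinearMap.range ψ.toLinearMap =
      (⨅ X : ↥𝔫, LinearMap.ker (op.L (X : 𝔤))) ⊓
        (⨅ X : ↥𝔫, LinearMap.ker (op.I (X : 𝔤))))
    (hψd : ∀ x : B, ψ (opQ.d x) = op.d (ψ x))
    (hψL : ∀ (Y : 𝔤) (x : B), ψ (opQ.L (π Y) x) = op.L Y (ψ x))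
    (hψI : ∀ (Y : 𝔤) (x : B), ψ (opQ.I (π Y) x) = op.I Y (ψ x))
    (hψgr : ∀ m : ℤ, opQ.grading m = Submodule.comap ψ.toLinearMap (op.grading m))
    -- the Weil algebras of `𝔤` and `𝔮`, and the inclusion `j_W : W_Q → W_G`
    -- induced by `𝔮* = (𝔤/𝔫)* ⊆ 𝔤*`:
    (wdG : WeilData ι b W) (wdQ : WeilData κ bq WQ)
    (εG : Module.End ℝ W) (hεG : ∀ (n : ℤ), ∀ w ∈ wdG.grading n, εG w = sgn n • w)
    (εQ : Module.End ℝ WQ) (hεQ : ∀ (n : ℤ), ∀ w ∈ wdQ.grading n, εQ w = sgn n • w)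
    (jW : WQ →ₐ[ℝ] W)
    (hjθ : ∀ k : κ, jW (wdQ.θ k) = ∑ i, (bq.dualBasis k) (π (b i)) • wdG.θ i)
    (hjΩ : ∀ k : κ, jW (wdQ.Ω k) = ∑ i, (bq.dualBasis k) (π (b i)) • wdG.Ω i)
    -- the `G`- and `Q`-basic subcomplexes of `W_G ⊗ A` and `W_Q ⊗ B`,
    -- and the inclusion `j = j_W ⊗ ψ`; `j` maps cocycles to cocycles:
    (hjcoc : ∀ (m : ℤ) (x : WQ ⊗[ℝ] B),
      x ∈ cocycles (DTot wdQ opQ εQ)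
        (fun n => ((⨅ X : 𝔮, LinearMap.ker (LTot wdQ opQ X)) ⊓
          (⨅ X : 𝔮, LinearMap.ker (ITot wdQ opQ εQ X))) ⊓ grTensor bq wdQ opQ n) m →
      TensorProduct.map jW.toLinearMap ψ.toLinearMap x ∈
        cocycles (DTot wdG op εG)
          (fun n => ((⨅ X : 𝔤, LinearMap.ker (LTot wdG op X)) ⊓
            (⨅ X : 𝔤, LinearMap.ker (ITot wdG op εG X))) ⊓ grTensor b wdG op n) m) :
    -- conclusion: `j` maps basic elements to basic elements and induces an
    -- isomorphism in basic cohomology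
    (∀ x : WQ ⊗[ℝ] B,
      x ∈ (⨅ X : 𝔮, LinearMap.ker (LTot wdQ opQ X)) ⊓
          (⨅ X : 𝔮, LinearMap.ker (ITot wdQ opQ εQ X)) →
      TensorProduct.map jW.toLinearMap ψ.toLinearMap x ∈
        (⨅ X : 𝔤, LinearMap.ker (LTot wdG op X)) ⊓
          (⨅ X : 𝔤, LinearMap.ker (ITot wdG op εG X))) ∧
    (∀ (m : ℤ)
      (F : gradedCoh (DTot wdQ opQ εQ)
          (fun n => ((⨅ X : 𝔮, LinearMap.ker (LTot wdQ opQ X)) ⊓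
            (⨅ X : 𝔮, LinearMap.ker (ITot wdQ opQ εQ X))) ⊓ grTensor bq wdQ opQ n) m
        →ₗ[ℝ]
        gradedCoh (DTot wdG op εG)
          (fun n => ((⨅ X : 𝔤, LinearMap.ker (LTot wdG op X)) ⊓
            (⨅ X : 𝔤, LinearMap.ker (ITot wdG op εG X))) ⊓ grTensor b wdG op n) m),
      (∀ (x : WQ ⊗[ℝ] B) (hx : _),
        F (Submodule.Quotient.mk ⟨x, hx⟩) =
          Submodule.Quotient.mk
            ⟨TensorProduct.map jW.toLinearMap ψ.toLinearMap x, hjcoc m x hx⟩) →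
      Function.Bijective F) := by
  have hsG : IsSignOp wdG.grading 1 εG := fun n w hw => by rw [one_mul, hεG n w hw]
  have hsQ : IsSignOp wdQ.grading 1 εQ := fun n w hw => by rw [one_mul, hεQ n w hw]
  have hW : IsWeilMap wdG wdQ π jW := .of_generators
    (fun k => (hjθ k).trans (wdG.connForm_apply (bq.dualBasis k ∘ₗ π)).symm)
    fun k => (hjΩ k).trans (wdG.curvForm_apply (bq.dualBasis k ∘ₗ π)).symm
  have hψ : IsOperationHom π opQ op ψ.toLinearMap :=
    ⟨fun n x hx => (hψgr n).le hx, hψd, hψL, hψI⟩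
  have hj := hW.isOperationHom.tensor hψ hsG hsQ
  refine ⟨fun x hx => hj.map_mem_bas hx, fun m F hF => ?_⟩
  refine hj.bijective_gradedCoh hπsurj
    (TensorProduct.map_injective_of_flat_flat _ _ (hW.injective hπsurj) hψinj)
    (wdG.weilExtension op hsG) (.ofSurjective hπsurj hπker bq) ⟨hmem, hconn, hequiv⟩
    (hW.gradedTensorMap_mem_reduced (fun X => (hπker X).2) hsG opQ ψ.toLinearMap)
    (fun r => hW.mem_range_gradedTensorMap_of_mem_reduced hπsurj hπker hsG hsQ opQ hψrange.ge)
    (fun n => ?_) (fun n => ?_) (hjcoc m) hF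
  · exact Submodule.ext fun x => and_congr_right' (Operation.of_mem_tensor_grading hsQ).symm
  · exact Submodule.ext fun x => and_congr_right' (Operation.of_mem_tensor_grading hsG).symm

end
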